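/- arXiv:math/0609310 — 4 statements merged into one kernel-verified Lean document; each statement's English description precedes it below -/
import Mathlib

section
/- Let X be a geodesic metric space. Then X is Gromov hyperbolic if and only if for every λ>0 and every η>0 there exists r₀>0 such that for all r ≥ r₀ the following holds: for every loop γ:[0,1]→X which is Lipschitz with constant λr and satisfies γ(1)=γ(0), and for all functions f,π: X→ℝ which are Lipschitz with constant λ/r, one has ∫₀¹ f(γ(s))·(π∘γ)'(s) ds ≤ η, where (π∘γ)' denotes the almost-everywhere defined derivative of the Lipschitz function π∘γ:[0,1]→ℝ. -/
open scoped NNReal ENNReal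
open MeasureTheory Filter

universe u v

namespace SharpIsop

/-- The closed unit disc `D² ⊂ ℝ²`. -/
def D2 : Set (ℝ × ℝ) := {p | p.1 ^ 2 + p.2 ^ 2 ≤ 1}

/-- The length (total variation over `[0,1]`) of a curve `γ : [0,1] → X`. -/
noncomputable def loopLength {X : Type u} [PseudoEMetricSpace X] (γ : ℝ → X) : ℝ :=
  (eVariationOn γ (Set.Icc 0 1)).toReal

/-- A Lipschitz loop in `X`: a Lipschitz map `γ : [0,1] → X` with `γ 0 = γ 1`. -/
def IsLipLoop {X : Type u} [PseudoEMetricSpace X] (γ : ℝ → X) : Prop :=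
  (∃ K : ℝ≥0, LipschitzOnWith K γ (Set.Icc 0 1)) ∧ γ 0 = γ 1

/-- The metric (directional) derivative of `φ : ℝ² → X` at `x` in direction `v`,
defined via a `limsup` so that it is everywhere defined (and agrees a.e. with the
limit when the latter exists). -/
noncomputable def mder {X : Type u} [PseudoMetricSpace X] (φ : ℝ × ℝ → X)
    (x v : ℝ × ℝ) : ℝ :=
  Filter.limsup (fun r : ℝ => dist (φ (x + r • v)) (φ x) / r) (nhdsWithin 0 (Set.Ioi 0))

/-- The Jacobian of a (semi)norm `s` on `ℝ²`:  `π / Leb²({v : s v ≤ 1})` if this set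
has finite measure, `0` otherwise. -/
noncomputable def jac2 (s : ℝ × ℝ → ℝ) : ℝ :=
  if volume {v : ℝ × ℝ | s v ≤ 1} < ⊤ then
    Real.pi / (volume {v : ℝ × ℝ | s v ≤ 1}).toReal
  else 0

/-- The parametrized (Hausdorff) area of a map `φ : D² → X`. -/
noncomputable def lipArea {X : Type u} [PseudoMetricSpace X] (φ : ℝ × ℝ → X) : ℝ :=
  ∫ x in D2, jac2 (mder φ x)

/-- `φ : D² → X` is a singular Lipschitz disc bounding the loop `γ : [0,1] → X`. -/
def BoundsLoop {X : Type u} [PseudoMetricSpace X] (φ : ℝ × ℝ → X) (γ : ℝ → X) : Prop :=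
  (∃ K : ℝ≥0, LipschitzOnWith K φ D2) ∧
    ∀ s ∈ Set.Icc (0:ℝ) 1, φ (Real.cos (2 * Real.pi * s), Real.sin (2 * Real.pi * s)) = γ s

/-- `g : [0, d x y] → X` is a geodesic from `x` to `y`. -/
def IsGeodesicSeg {X : Type u} [MetricSpace X] (x y : X) (g : ℝ → X) : Prop :=
  g 0 = x ∧ g (dist x y) = y ∧
    ∀ s ∈ Set.Icc (0:ℝ) (dist x y), ∀ t ∈ Set.Icc (0:ℝ) (dist x y),
      dist (g s) (g t) = |s - t|

/-- A geodesic metric space: any two points are joined by a geodesic. -/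
def GeodesicSpace (X : Type u) [MetricSpace X] : Prop :=
  ∀ x y : X, ∃ g : ℝ → X, IsGeodesicSeg x y g

/-- Gromov hyperbolicity via δ-slim geodesic triangles. -/
def GromovHyperbolic (X : Type u) [MetricSpace X] : Prop :=
  ∃ δ : ℝ, 0 ≤ δ ∧
    ∀ x y z : X, ∀ gxy gyz gzx : ℝ → X,
      IsGeodesicSeg x y gxy → IsGeodesicSeg y z gyz → IsGeodesicSeg z x gzx →
      ∀ s ∈ Set.Icc (0:ℝ) (dist x y),
        ∃ p ∈ gyz '' Set.Icc (0:ℝ) (dist y z) ∪ gzx '' Set.Icc (0:ℝ) (dist z x),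
          dist (gxy s) p ≤ δ

/-- `L^∞(X)`: the Banach space of bounded real functions on `X` with sup norm. -/
abbrev Linfty (X : Type u) : Type u := lp (fun _ : X => ℝ) ⊤

/-- The Kuratowski embedding `x ↦ d(x,·) − d(x₀,·)` of `X` into `L^∞(X)`. -/
noncomputable def kuratowski (X : Type u) [MetricSpace X] (x₀ : X) (x : X) : Linfty X :=
  ⟨fun y => dist x y - dist x₀ y, memℓp_infty ⟨dist x x₀, by
    rintro t ⟨y, rfl⟩
    simpa [Real.norm_eq_abs] using abs_dist_sub_le x x₀ y⟩⟩

/-- `Y` admits a quadratic isoperimetric inequality for curves (with singular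
Lipschitz discs as fillings). -/
def QuadIsopSpace (Y : Type u) [MetricSpace Y] : Prop :=
  ∃ C > (0:ℝ), ∀ c : ℝ → Y, IsLipLoop c →
    ∃ φ : ℝ × ℝ → Y, BoundsLoop φ c ∧ lipArea φ ≤ C * (loopLength c) ^ 2

/-- `X` admits a disc-thickening with a quadratic isoperimetric inequality. -/
def HasDiscThickeningQII (X : Type u) [MetricSpace X] : Prop :=
  ∃ (X' : Type u) (m : MetricSpace X') (ι : X → X'),
    letI := m
    CompleteSpace X' ∧ Isometry ι ∧
      EMetric.hausdorffEdist (Set.range ι) (Set.univ : Set X') ≠ ⊤ ∧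
      QuadIsopSpace X'

theorem lipR_ii {K1 K2 : ℝ≥0} {F P : ℝ → ℝ} (hF : LipschitzWith K1 F) (hP : LipschitzWith K2 P)
    (a b : ℝ) : IntervalIntegrable (fun t => F t * deriv P t) volume a b :=
  ((hP.lipschitzOnWith (s := Set.uIcc a b)).absolutelyContinuousOnInterval.intervalIntegrable_deriv).continuousOn_mul
    hF.continuous.continuousOn

theorem lipR_deriv {K : ℝ≥0} {P : ℝ → ℝ} (hP : LipschitzWith K P) (t : ℝ) : |deriv P t| ≤ K := by
  simpa using norm_deriv_le_of_lipschitz (x₀ := t) hP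

theorem lipR_ftc {K : ℝ≥0} {P : ℝ → ℝ} (hP : LipschitzWith K P) (a b : ℝ) :
    ∫ t in a..b, deriv P t = P b - P a :=
  (hP.lipschitzOnWith (s := Set.uIcc a b)).absolutelyContinuousOnInterval.integral_deriv_eq_sub

theorem bound_mul_deriv {K : ℝ≥0} {F P : ℝ → ℝ} (hP : LipschitzWith K P) {a b C : ℝ} (hab : a ≤ b)
    (hF : ∀ t ∈ Set.Icc a b, |F t| ≤ C) :
    |∫ t in a..b, F t * deriv P t| ≤ C * K * (b - a) := by
  have := intervalIntegral.norm_integral_le_of_norm_le_const (a := a) (b := b) (C := C * K)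
    (f := fun t => F t * deriv P t) (by
      intro t ht
      rw [Set.uIoc_of_le hab] at ht
      have h1 := hF t ⟨ht.1.le, ht.2⟩
      rw [norm_mul]
      exact mul_le_mul h1 (lipR_deriv hP t) (norm_nonneg _) ((abs_nonneg _).trans h1))
  rwa [Real.norm_eq_abs, abs_of_nonneg (sub_nonneg.2 hab)] at this

theorem riemann_bound {K : ℝ≥0} {F P : ℝ → ℝ} (hF : LipschitzWith K F) (hP : LipschitzWith K P)
    {a b : ℝ} (hab : a ≤ b) :
    |(∫ t in a..b, F t * deriv P t) - F a * (P b - P a)| ≤ (K : ℝ) ^ 2 * (b - a) ^ 2 := by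
  have h1 : (∫ t in a..b, F t * deriv P t) - F a * (P b - P a)
      = ∫ t in a..b, (F t - F a) * deriv P t := by
    rw [← lipR_ftc hP a b, ← intervalIntegral.integral_const_mul, ← intervalIntegral.integral_sub
      (lipR_ii hF hP a b) (lipR_ii (LipschitzWith.const (F a)) hP a b)]
    simp only [sub_mul]
  rw [h1]
  refine (bound_mul_deriv (C := K * (b - a)) hP hab ?_).trans (le_of_eq (by ring))
  intro t ht
  have := hF.dist_le_mul t a
  rw [Real.dist_eq, Real.dist_eq, abs_of_nonneg (sub_nonneg.2 ht.1)] at this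
  exact this.trans (by gcongr; exact ht.2)

theorem compare_bound {K : ℝ≥0} {F1 P1 F2 P2 : ℝ → ℝ} (hF1 : LipschitzWith K F1)
    (hP1 : LipschitzWith K P1) (hF2 : LipschitzWith K F2) (hP2 : LipschitzWith K P2)
    {α D M : ℝ} (hα : 0 ≤ α)
    (hF : ∀ t ∈ Set.Icc 0 α, |F1 t - F2 t| ≤ K * D)
    (hP : ∀ t ∈ Set.Icc 0 α, |P1 t - P2 t| ≤ K * D)
    (hM : ∀ t ∈ Set.Icc 0 α, |F2 t| ≤ K * M) :
    |(∫ t in (0:ℝ)..α, F1 t * deriv P1 t) - ∫ t in (0:ℝ)..α, F2 t * deriv P2 t|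
      ≤ (K : ℝ) ^ 2 * (2 * D * α + 2 * M * D) := by
  have hPd : LipschitzWith (K + K) (fun t => P1 t - P2 t) := hP1.sub hP2
  have hFd : LipschitzWith (K + K) (fun t => F1 t - F2 t) := hF1.sub hF2
  have e : (∫ t in (0:ℝ)..α, F1 t * deriv P1 t) - ∫ t in (0:ℝ)..α, F2 t * deriv P2 t
      = (∫ t in (0:ℝ)..α, (F1 t - F2 t) * deriv P1 t)
        + ∫ t in (0:ℝ)..α, F2 t * deriv (fun t => P1 t - P2 t) t := by
    have : ∫ t in (0:ℝ)..α, F2 t * deriv (fun t => P1 t - P2 t) t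
        = ∫ t in (0:ℝ)..α, (F2 t * deriv P1 t - F2 t * deriv P2 t) := by
      apply intervalIntegral.integral_congr_ae
      have h1 := (hP1.lipschitzOnWith (s := Set.uIcc 0 α)).absolutelyContinuousOnInterval.ae_differentiableAt
      have h2 := (hP2.lipschitzOnWith (s := Set.uIcc 0 α)).absolutelyContinuousOnInterval.ae_differentiableAt
      filter_upwards [h1, h2] with t h1 h2 ht
      have ht' := Set.uIoc_subset_uIcc ht
      rw [deriv_fun_sub (h1 ht') (h2 ht')]
      ring
    rw [this, intervalIntegral.integral_sub (lipR_ii hF2 hP1 _ _) (lipR_ii hF2 hP2 _ _)]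
    simp only [sub_mul]
    rw [intervalIntegral.integral_sub (lipR_ii hF1 hP1 _ _) (lipR_ii hF2 hP1 _ _)]
    ring
  have ibp := AbsolutelyContinuousOnInterval.integral_mul_deriv_eq_deriv_mul
    (hF2.lipschitzOnWith (s := Set.uIcc 0 α)).absolutelyContinuousOnInterval
    (hPd.lipschitzOnWith (s := Set.uIcc 0 α)).absolutelyContinuousOnInterval
  have b1 := bound_mul_deriv hP1 hα hF
  have b2 := bound_mul_deriv hF2 hα hP
  have e2 : ∫ t in (0:ℝ)..α, deriv F2 t * (P1 t - P2 t) = ∫ t in (0:ℝ)..α, (P1 t - P2 t) * deriv F2 t := by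
    simp only [mul_comm]
  have m0 : (0:ℝ) ∈ Set.Icc 0 α := ⟨le_rfl, hα⟩
  have m1 : α ∈ Set.Icc 0 α := ⟨hα, le_rfl⟩
  have b3 : |F2 0 * (P1 0 - P2 0)| ≤ (K * M) * (K * D) := by
    rw [abs_mul]; exact mul_le_mul (hM 0 m0) (hP 0 m0) (abs_nonneg _) ((abs_nonneg _).trans (hM 0 m0))
  have b4 : |F2 α * (P1 α - P2 α)| ≤ (K * M) * (K * D) := by
    rw [abs_mul]; exact mul_le_mul (hM α m1) (hP α m1) (abs_nonneg _) ((abs_nonneg _).trans (hM α m1))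
  rw [e, ibp, e2]
  rw [abs_le] at *
  constructor <;> nlinarith

theorem pair_bound {K : ℝ≥0} {F1 P1 F2 P2 : ℝ → ℝ} (hF1 : LipschitzWith K F1)
    (hP1 : LipschitzWith K P1) (hF2 : LipschitzWith K F2) (hP2 : LipschitzWith K P2)
    {α D M d : ℝ} (hα : 0 ≤ α)
    (hF : ∀ t ∈ Set.Icc 0 α, |F1 t - F2 (d - t)| ≤ K * D)
    (hP : ∀ t ∈ Set.Icc 0 α, |P1 t - P2 (d - t)| ≤ K * D)
    (hM : ∀ t ∈ Set.Icc 0 α, |F2 (d - t)| ≤ K * M) :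
    |(∫ t in (0:ℝ)..α, F1 t * deriv P1 t) + ∫ t in (d - α)..d, F2 t * deriv P2 t|
      ≤ (K : ℝ) ^ 2 * (2 * D * α + 2 * M * D) := by
  have hl : LipschitzWith 1 (fun t : ℝ => d - t) := by
    simpa using (LipschitzWith.const d).sub (LipschitzWith.id (α := ℝ))
  have hF2' : LipschitzWith K (fun t => F2 (d - t)) := by
    have := hF2.comp hl
    rw [mul_one] at this
    exact this
  have hP2' : LipschitzWith K (fun t => P2 (d - t)) := by
    have := hP2.comp hl
    rw [mul_one] at this
    exact this
  have := compare_bound hF1 hP1 hF2' hP2' hα hF hP hM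
  have e : ∫ t in (0:ℝ)..α, F2 (d - t) * deriv (fun t => P2 (d - t)) t
      = - ∫ t in (d - α)..d, F2 t * deriv P2 t := by
    have := intervalIntegral.integral_comp_sub_left (a := 0) (b := α) (fun t => F2 t * deriv P2 t) d
    rw [sub_zero] at this
    rw [← this, ← intervalIntegral.integral_neg]
    simp only [deriv_comp_const_sub, mul_neg]
  rw [e, sub_neg_eq_add] at this
  exact this

theorem clampLip (a b : ℝ) : LipschitzWith 1 (fun t : ℝ => max a (min b t)) :=
  (LipschitzWith.id.const_min b).const_max a

theorem geod_clamp {X : Type u} [MetricSpace X] {x y : X} {g : ℝ → X} (hg : IsGeodesicSeg x y g) :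
    ∃ h : ℝ → X, IsGeodesicSeg x y h ∧ LipschitzWith 1 h ∧
      ∀ t ∈ Set.Icc 0 (dist x y), h t = g t := by
  have hc : ∀ t ∈ Set.Icc 0 (dist x y), max 0 (min (dist x y) t) = t := by
    intro t ht; rw [min_eq_right ht.2, max_eq_right ht.1]
  have hm : ∀ t, max 0 (min (dist x y) t) ∈ Set.Icc 0 (dist x y) := fun t =>
    ⟨le_max_left _ _, max_le dist_nonneg (min_le_left _ _)⟩
  refine ⟨fun t => g (max 0 (min (dist x y) t)), ⟨?_, ?_, ?_⟩, ?_, ?_⟩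
  · simp only [hc 0 ⟨le_rfl, dist_nonneg⟩]; exact hg.1
  · simp only [hc _ ⟨dist_nonneg, le_rfl⟩]; exact hg.2.1
  · intro s hs t ht
    simp only [hc s hs, hc t ht]; exact hg.2.2 s hs t ht
  · apply LipschitzWith.of_dist_le_mul
    intro s t
    rw [hg.2.2 _ (hm s) _ (hm t)]
    exact (clampLip 0 (dist x y)).dist_le_mul s t
  · intro t ht; simp only [hc t ht]


/-- one-sided slimness -/
def SlimSide {X : Type u} [MetricSpace X] (E : ℝ) (x y z : X) (g1 g2 g3 : ℝ → X) : Prop :=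
  ∀ s ∈ Set.Icc (0:ℝ) (dist x y),
    ∃ p ∈ g2 '' Set.Icc (0:ℝ) (dist y z) ∪ g3 '' Set.Icc (0:ℝ) (dist z x), dist (g1 s) p ≤ E

theorem thin_aux {X : Type u} [MetricSpace X] {x y z : X} {g1 g2 g3 : ℝ → X}
    (h1 : IsGeodesicSeg x y g1) (h2 : IsGeodesicSeg y z g2) (h3 : IsGeodesicSeg z x g3)
    {δ : ℝ} (hs : SlimSide δ x y z g1 g2 g3) {t : ℝ} (ht0 : 0 ≤ t)
    (ht : t + δ < (dist x y + dist z x - dist y z) / 2) (hδ : 0 < δ) :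
    dist (g1 t) (g3 (dist z x - t)) ≤ 2 * δ := by
  have tr1 := dist_triangle x y z
  have tr2 := dist_triangle y z x
  have tr3 := dist_triangle z x y
  rw [dist_comm x z] at tr1
  rw [dist_comm y x] at tr2
  rw [dist_comm z y] at tr3
  have mt : t ∈ Set.Icc 0 (dist x y) := ⟨ht0, by linarith⟩
  have m0 : (0:ℝ) ∈ Set.Icc 0 (dist x y) := ⟨le_rfl, dist_nonneg⟩
  have m1 : dist x y ∈ Set.Icc 0 (dist x y) := ⟨dist_nonneg, le_rfl⟩
  have dx : dist (g1 t) x = t := by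
    rw [← h1.1, h1.2.2 t mt 0 m0]; simp [abs_of_nonneg ht0]
  have dy : dist (g1 t) y = dist x y - t := by
    nth_rewrite 1 [← h1.2.1]; rw [h1.2.2 t mt _ m1, abs_of_nonpos (by linarith [mt.2])]; ring
  obtain ⟨p, hp, hd⟩ := hs t mt
  rcases hp with ⟨s, hs, rfl⟩ | ⟨s, hs, rfl⟩
  · exfalso
    have a1 : dist (g2 s) z = dist y z - s := by
      nth_rewrite 1 [← h2.2.1]
      rw [h2.2.2 s hs _ ⟨dist_nonneg, le_rfl⟩, abs_of_nonpos (by linarith [hs.2])]; ring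
    have a2 : dist (g2 s) y = s := by
      nth_rewrite 1 [← h2.1]
      rw [h2.2.2 s hs _ ⟨le_rfl, dist_nonneg⟩, sub_zero, abs_of_nonneg hs.1]
    have b1 := dist_triangle z (g2 s) x
    have b2 := dist_triangle (g2 s) (g1 t) x
    have b3 := dist_triangle (g1 t) (g2 s) y
    rw [dist_comm (g2 s) (g1 t)] at b2
    rw [dist_comm z (g2 s)] at b1
    linarith
  · have mt' : dist z x - t ∈ Set.Icc 0 (dist z x) := ⟨by linarith, by linarith⟩
    have a2 : dist (g3 s) x = dist z x - s := by
      nth_rewrite 1 [← h3.2.1]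
      rw [h3.2.2 s hs _ ⟨dist_nonneg, le_rfl⟩, abs_of_nonpos (by linarith [hs.2])]; ring
    have b1 := dist_triangle (g1 t) (g3 s) (g3 (dist z x - t))
    have b2 := h3.2.2 s hs _ mt'
    have b3 := dist_triangle (g1 t) (g3 s) x
    have b4 := dist_triangle (g3 s) (g1 t) x
    rw [dist_comm (g3 s) (g1 t)] at b4
    have b5 : |s - (dist z x - t)| ≤ δ := by rw [abs_le]; constructor <;> linarith
    linarith

theorem thin {X : Type u} [MetricSpace X] {x y z : X} {g1 g2 g3 : ℝ → X}
    (h1 : IsGeodesicSeg x y g1) (h2 : IsGeodesicSeg y z g2) (h3 : IsGeodesicSeg z x g3)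
    {δ : ℝ} (hs : SlimSide δ x y z g1 g2 g3) {t : ℝ} (ht0 : 0 ≤ t)
    (ht : t ≤ (dist x y + dist z x - dist y z) / 2) (hδ : 0 < δ) :
    dist (g1 t) (g3 (dist z x - t)) ≤ 6 * δ := by
  have tr1 := dist_triangle x y z
  have tr3 := dist_triangle z x y
  rw [dist_comm x z] at tr1
  rw [dist_comm z y] at tr3
  have tr2 := dist_triangle y z x
  rw [dist_comm y x] at tr2
  have key : ∀ t', 0 ≤ t' → t' ≤ t → t ≤ t' + 2 * δ →
      dist (g1 t') (g3 (dist z x - t')) ≤ 2 * δ → dist (g1 t) (g3 (dist z x - t)) ≤ 6 * δ := by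
    intro t' h0 hle hge hd
    have e1 := h1.2.2 t ⟨ht0, by linarith⟩ t' ⟨h0, by linarith⟩
    have e2 := h3.2.2 (dist z x - t') ⟨by linarith, by linarith⟩ (dist z x - t) ⟨by linarith, by linarith⟩
    rw [abs_of_nonneg (by linarith)] at e1 e2
    have b1 := dist_triangle4 (g1 t) (g1 t') (g3 (dist z x - t')) (g3 (dist z x - t))
    linarith
  rcases le_total t (2 * δ) with h | h
  · refine key 0 le_rfl ht0 (by linarith) ?_
    rw [h1.1, sub_zero, h3.2.1, dist_self]; linarith
  · exact key (t - 2 * δ) (by linarith) (by linarith) (by linarith)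
      (thin_aux h1 h2 h3 hs (by linarith) (by linarith) hδ)

theorem tri_pair {X : Type u} [MetricSpace X] {x y z o : X} {g1 g2 g3 : ℝ → X}
    (h1 : IsGeodesicSeg x y g1) (h2 : IsGeodesicSeg y z g2) (h3 : IsGeodesicSeg z x g3)
    (l1 : LipschitzWith 1 g1) (l3 : LipschitzWith 1 g3)
    {δ R : ℝ} (hs : SlimSide δ x y z g1 g2 g3) (hδ : 0 < δ)
    (hx : dist x o ≤ R) (hy : dist y o ≤ R) (hz : dist z o ≤ R)
    {K : ℝ≥0} {f p : X → ℝ} (hf : LipschitzWith K f) (hp : LipschitzWith K p) (hfo : f o = 0)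
    {α : ℝ} (hα : α = (dist x y + dist z x - dist y z) / 2) :
    |(∫ t in (0:ℝ)..α, f (g1 t) * deriv (fun t => p (g1 t)) t)
      + ∫ t in (dist z x - α)..(dist z x), f (g3 t) * deriv (fun t => p (g3 t)) t|
      ≤ (K : ℝ) ^ 2 * (60 * δ * R) := by
  have tr1 := dist_triangle x y z
  have tr2 := dist_triangle y x z
  have tr3 := dist_triangle z x y
  rw [dist_comm x z] at tr1 tr2
  rw [dist_comm y x] at tr2
  rw [dist_comm z y] at tr3
  have r1 := dist_triangle z o x
  have r2 := dist_triangle x o y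
  rw [dist_comm o x] at r1
  rw [dist_comm o y] at r2
  have tr4 := dist_triangle y z x
  rw [dist_comm y x] at tr4
  have hα0 : 0 ≤ α := by linarith
  have hR : 0 ≤ R := dist_nonneg.trans hx
  have c : ∀ {q : X → ℝ} {g : ℝ → X}, LipschitzWith K q → LipschitzWith 1 g →
      LipschitzWith K (fun t => q (g t)) := by
    intro q g hq hg; have := hq.comp hg; rw [mul_one] at this; exact this
  have hth : ∀ t ∈ Set.Icc 0 α, dist (g1 t) (g3 (dist z x - t)) ≤ 6 * δ := fun t ht =>
    thin h1 h2 h3 hs ht.1 (by linarith [ht.2]) hδ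
  have := pair_bound (F1 := fun t => f (g1 t)) (P1 := fun t => p (g1 t)) (F2 := fun t => f (g3 t))
    (P2 := fun t => p (g3 t)) (c hf l1) (c hp l1) (c hf l3) (c hp l3) (D := 6 * δ) (M := 3 * R)
    (d := dist z x) hα0
    (fun t ht => (hf.dist_le_mul _ _).trans (by gcongr; exact hth t ht))
    (fun t ht => (hp.dist_le_mul _ _).trans (by gcongr; exact hth t ht))
    (fun t ht => by
      have := hf.dist_le_mul (g3 (dist z x - t)) o
      rw [hfo, Real.dist_eq, sub_zero] at this
      refine this.trans ?_
      gcongr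
      have e : dist (g3 (dist z x - t)) (g3 (dist z x)) = t := by
        rw [h3.2.2 _ ⟨by linarith [ht.2], by linarith [ht.1]⟩ _ ⟨dist_nonneg, le_rfl⟩]
        rw [abs_of_nonpos (by linarith [ht.1])]; ring
      rw [h3.2.1] at e
      have := dist_triangle (g3 (dist z x - t)) x o
      linarith [ht.2])
  refine this.trans ?_
  gcongr
  have : α ≤ 2 * R := by linarith
  nlinarith

theorem tri_int {X : Type u} [MetricSpace X] {x y z o : X} {g1 g2 g3 : ℝ → X}
    (h1 : IsGeodesicSeg x y g1) (h2 : IsGeodesicSeg y z g2) (h3 : IsGeodesicSeg z x g3)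
    (l1 : LipschitzWith 1 g1) (l2 : LipschitzWith 1 g2) (l3 : LipschitzWith 1 g3)
    {δ R : ℝ} (hs1 : SlimSide δ x y z g1 g2 g3) (hs2 : SlimSide δ y z x g2 g3 g1)
    (hs3 : SlimSide δ z x y g3 g1 g2) (hδ : 0 < δ)
    (hx : dist x o ≤ R) (hy : dist y o ≤ R) (hz : dist z o ≤ R)
    {K : ℝ≥0} {f p : X → ℝ} (hf : LipschitzWith K f) (hp : LipschitzWith K p) (hfo : f o = 0) :
    |(∫ t in (0:ℝ)..(dist x y), f (g1 t) * deriv (fun t => p (g1 t)) t)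
      + (∫ t in (0:ℝ)..(dist y z), f (g2 t) * deriv (fun t => p (g2 t)) t)
      + ∫ t in (0:ℝ)..(dist z x), f (g3 t) * deriv (fun t => p (g3 t)) t|
      ≤ (K : ℝ) ^ 2 * (180 * δ * R) := by
  have a1 := tri_pair h1 h2 h3 l1 l3 hs1 hδ hx hy hz hf hp hfo rfl
  have a2 := tri_pair h2 h3 h1 l2 l1 hs2 hδ hy hz hx hf hp hfo rfl
  have a3 := tri_pair h3 h1 h2 l3 l2 hs3 hδ hz hx hy hf hp hfo rfl
  have c : ∀ {q : X → ℝ} {g : ℝ → X}, LipschitzWith K q → LipschitzWith 1 g →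
      LipschitzWith K (fun t => q (g t)) := by
    intro q g hq hg; have := hq.comp hg; rw [mul_one] at this; exact this
  have sp : ∀ {g : ℝ → X}, LipschitzWith 1 g → ∀ u v : ℝ,
      (∫ t in (0:ℝ)..v, f (g t) * deriv (fun t => p (g t)) t)
      = (∫ t in (0:ℝ)..u, f (g t) * deriv (fun t => p (g t)) t)
        + ∫ t in u..v, f (g t) * deriv (fun t => p (g t)) t := by
    intro g hg u v
    exact (intervalIntegral.integral_add_adjacent_intervals (lipR_ii (c hf hg) (c hp hg) _ _)
      (lipR_ii (c hf hg) (c hp hg) _ _)).symm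
  rw [sp l1 ((dist x y + dist z x - dist y z) / 2), sp l2 ((dist y z + dist x y - dist z x) / 2),
    sp l3 ((dist z x + dist y z - dist x y) / 2)]
  have e1 : dist z x - (dist x y + dist z x - dist y z) / 2 = (dist z x + dist y z - dist x y) / 2 := by ring
  have e2 : dist x y - (dist y z + dist x y - dist z x) / 2 = (dist x y + dist z x - dist y z) / 2 := by ring
  have e3 : dist y z - (dist z x + dist y z - dist x y) / 2 = (dist y z + dist x y - dist z x) / 2 := by ring
  rw [e1] at a1
  rw [e2] at a2
  rw [e3] at a3
  rw [abs_le] at *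
  constructor <;> nlinarith

theorem forward {X : Type u} [MetricSpace X] (hX : GeodesicSpace X) (hyp : GromovHyperbolic X) :
      ∀ lam η : ℝ, 0 < lam → 0 < η → ∃ r₀ > (0:ℝ), ∀ r : ℝ, r₀ ≤ r →
        ∀ γ : ℝ → X, LipschitzOnWith (Real.toNNReal (lam * r)) γ (Set.Icc 0 1) →
          γ 1 = γ 0 →
          ∀ f p : X → ℝ, LipschitzWith (Real.toNNReal (lam / r)) f →
            LipschitzWith (Real.toNNReal (lam / r)) p →
            (∫ s in (0:ℝ)..1, f (γ s) * deriv (fun t => p (γ t)) s) ≤ η := by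
  intro lam η hl hη
  obtain ⟨δ', hδ', hsl⟩ := hyp
  obtain ⟨δ, hδ, hslim⟩ : ∃ δ : ℝ, 0 < δ ∧ ∀ x y z : X, ∀ g1 g2 g3 : ℝ → X,
      IsGeodesicSeg x y g1 → IsGeodesicSeg y z g2 → IsGeodesicSeg z x g3 →
      SlimSide δ x y z g1 g2 g3 := by
    refine ⟨δ' + 1, by linarith, fun x y z g1 g2 g3 h1 h2 h3 s hs => ?_⟩
    obtain ⟨p, hp, hd⟩ := hsl x y z g1 g2 g3 h1 h2 h3 s hs
    exact ⟨p, hp, by linarith⟩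
  have hG : ∀ x y : X, ∃ g : ℝ → X, IsGeodesicSeg x y g ∧ LipschitzWith 1 g := by
    intro x y
    obtain ⟨g, hg⟩ := hX x y
    obtain ⟨h, h1, h2, _⟩ := geod_clamp hg
    exact ⟨h, h1, h2⟩
  choose G hGg hGl using hG
  obtain ⟨N, hN⟩ := exists_nat_gt (4 * lam ^ 4 / η)
  have hN0 : (0:ℝ) < N := lt_of_le_of_lt (by positivity) hN
  rw [div_lt_iff₀ hη] at hN
  refine ⟨720 * N * lam ^ 3 * δ / η + 1, by positivity, ?_⟩
  intro r hr γ hγ hγ1 f₀ p hf₀ hp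
  have hr0 : 0 < r := lt_of_lt_of_le (by positivity) hr
  have hr1 : 720 * N * lam ^ 3 * δ ≤ r * η := by
    rw [← div_le_iff₀ hη]; linarith
  -- the clamped loop
  set cl : ℝ → ℝ := fun t => max 0 (min 1 t) with hcl
  have hclm : ∀ t, cl t ∈ Set.Icc (0:ℝ) 1 := fun t =>
    ⟨le_max_left _ _, max_le zero_le_one (min_le_left _ _)⟩
  have hcl1 : ∀ t ∈ Set.Icc (0:ℝ) 1, cl t = t := by
    intro t ht; simp only [hcl]; rw [min_eq_right ht.2, max_eq_right ht.1]
  set c : ℝ → X := fun t => γ (cl t) with hc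
  have hcd : ∀ s t, dist (c s) (c t) ≤ lam * r * |cl s - cl t| := by
    intro s t
    have := hγ.dist_le_mul _ (hclm s) _ (hclm t)
    rwa [Real.coe_toNNReal _ (by positivity), Real.dist_eq] at this
  have hcL : LipschitzWith (Real.toNNReal (lam * r)) c := by
    apply LipschitzWith.of_dist_le_mul
    intro s t
    have h := hcd s t
    have h2 := (clampLip 0 1).dist_le_mul s t
    rw [Real.coe_toNNReal _ (by positivity)]
    refine h.trans ?_
    gcongr
    simpa [Real.dist_eq] using h2
  set o : X := γ 0 with ho
  have hc0 : c 0 = o := by simp only [hc]; rw [hcl1 0 (by simp)]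
  have hc1 : c 1 = o := by simp only [hc]; rw [hcl1 1 (by simp), hγ1]
  have hcR : ∀ t, dist (c t) o ≤ lam * r := by
    intro t
    rw [← hc0]
    refine (hcd t 0).trans ?_
    rw [hcl1 0 (by simp), sub_zero, abs_of_nonneg (hclm t).1]
    exact mul_le_of_le_one_right (by positivity) (hclm t).2
  -- normalised f
  set f : X → ℝ := fun q => f₀ q - f₀ o with hf_def
  have hf : LipschitzWith (Real.toNNReal (lam / r)) f := by
    have := hf₀.sub (LipschitzWith.const (f₀ o)); rw [add_zero] at this; exact this
  have hfo : f o = 0 := by simp [hf_def]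
  have hκ : ((Real.toNNReal (lam / r) : ℝ≥0) : ℝ) = lam / r := Real.coe_toNNReal _ (by positivity)
  have hKK : ((Real.toNNReal (lam / r) * Real.toNNReal (lam * r) : ℝ≥0) : ℝ) = lam ^ 2 := by
    rw [NNReal.coe_mul, hκ, Real.coe_toNNReal _ (by positivity)]; field_simp
  have hF : LipschitzWith (Real.toNNReal (lam / r) * Real.toNNReal (lam * r)) (fun t => f (c t)) :=
    hf.comp hcL
  have hF₀ : LipschitzWith (Real.toNNReal (lam / r) * Real.toNNReal (lam * r)) (fun t => f₀ (c t)) :=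
    hf₀.comp hcL
  have hP : LipschitzWith (Real.toNNReal (lam / r) * Real.toNNReal (lam * r)) (fun t => p (c t)) :=
    hp.comp hcL
  have e0 : (∫ s in (0:ℝ)..1, f₀ (γ s) * deriv (fun t => p (γ t)) s)
      = ∫ s in (0:ℝ)..1, f (c s) * deriv (fun t => p (c t)) s := by
    have a1 : (∫ s in (0:ℝ)..1, f₀ (γ s) * deriv (fun t => p (γ t)) s)
        = ∫ s in (0:ℝ)..1, f₀ (c s) * deriv (fun t => p (c t)) s := by
      rw [intervalIntegral.integral_of_le zero_le_one, intervalIntegral.integral_of_le zero_le_one,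
        integral_Ioc_eq_integral_Ioo, integral_Ioc_eq_integral_Ioo]
      refine setIntegral_congr_fun measurableSet_Ioo ?_
      intro s hs
      have hev : (fun t => p (γ t)) =ᶠ[nhds s] (fun t => p (c t)) := by
        filter_upwards [Ioo_mem_nhds hs.1 hs.2] with t ht
        simp only [hc]; rw [hcl1 t ⟨ht.1.le, ht.2.le⟩]
      simp only
      rw [hev.deriv_eq]
      simp only [hc]; rw [hcl1 s ⟨hs.1.le, hs.2.le⟩]
    have a2 : (∫ s in (0:ℝ)..1, f (c s) * deriv (fun t => p (c t)) s)
        = (∫ s in (0:ℝ)..1, f₀ (c s) * deriv (fun t => p (c t)) s)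
          - f₀ o * (p (c 1) - p (c 0)) := by
      rw [← lipR_ftc hP 0 1, ← intervalIntegral.integral_const_mul, ← intervalIntegral.integral_sub
        (lipR_ii hF₀ hP _ _) (lipR_ii (LipschitzWith.const (f₀ o)) hP _ _)]
      simp only [hf_def, sub_mul]
    rw [a1, a2, hc1, hc0]; ring
  rw [e0]
  set J : X → X → ℝ := fun x y =>
    ∫ t in (0:ℝ)..(dist x y), f (G x y t) * deriv (fun t => p (G x y t)) t with hJ
  have hJ0 : ∀ x, J x x = 0 := by intro x; simp [hJ]
  have hT : ∀ x y z, dist x o ≤ lam * r → dist y o ≤ lam * r → dist z o ≤ lam * r →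
      |J x y + J y z + J z x| ≤ 180 * lam ^ 3 * δ / r := by
    intro x y z hx hy hz
    have := tri_int (hGg x y) (hGg y z) (hGg z x) (hGl x y) (hGl y z) (hGl z x)
      (hslim _ _ _ _ _ _ (hGg x y) (hGg y z) (hGg z x))
      (hslim _ _ _ _ _ _ (hGg y z) (hGg z x) (hGg x y))
      (hslim _ _ _ _ _ _ (hGg z x) (hGg x y) (hGg y z)) hδ hx hy hz hf hp hfo
    refine this.trans (le_of_eq ?_)
    rw [hκ]; field_simp
  set B : ℝ := 2 * lam ^ 4 / N ^ 2 + 2 * (180 * lam ^ 3 * δ / r) with hB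
  have main : ∀ k : ℕ, |(∫ s in (0:ℝ)..(k / N), f (c s) * deriv (fun t => p (c t)) s)
      + J (c (k / N)) o| ≤ k * B := by
    intro k
    induction k with
    | zero => simp [hc0, hJ0]
    | succ k ih =>
      have st : ((k + 1 : ℕ) : ℝ) / N - k / N = 1 / N := by push_cast; field_simp; ring
      have hle : (k : ℝ) / N ≤ ((k + 1 : ℕ) : ℝ) / N := by
        have : 0 < 1 / (N:ℝ) := by positivity
        linarith
      have sp := intervalIntegral.integral_add_adjacent_intervals
        (lipR_ii hF hP 0 (k / N)) (lipR_ii hF hP (k / N) ((k + 1 : ℕ) / N))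
      rw [← sp]
      set a := c (k / N) with ha
      set b := c ((k + 1 : ℕ) / N) with hb
      have t1 := riemann_bound hF hP hle
      rw [st, hKK] at t1
      have cc : ∀ {q : X → ℝ} {g : ℝ → X}, LipschitzWith (Real.toNNReal (lam / r)) q →
          LipschitzWith 1 g → LipschitzWith (Real.toNNReal (lam / r)) (fun t => q (g t)) := by
        intro q g hq hg; have := hq.comp hg; rw [mul_one] at this; exact this
      have t2 := riemann_bound (cc hf (hGl a b)) (cc hp (hGl a b)) (dist_nonneg (x := a) (y := b))
      rw [hκ, sub_zero, (hGg a b).1, (hGg a b).2.1] at t2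
      have dab : dist a b ≤ lam * r / N := by
        have := hcL.dist_le_mul ((k + 1 : ℕ) / N) (k / N)
        rw [Real.dist_eq, st, abs_of_nonneg (by positivity), Real.coe_toNNReal _ (by positivity),
          dist_comm] at this
        exact this.trans (le_of_eq (by ring))
      have t2' : (lam / r) ^ 2 * dist a b ^ 2 ≤ lam ^ 4 / N ^ 2 := by
        calc (lam / r) ^ 2 * dist a b ^ 2 ≤ (lam / r) ^ 2 * (lam * r / N) ^ 2 := by gcongr
          _ = lam ^ 4 / N ^ 2 := by field_simp
      have t1' : (lam ^ 2) ^ 2 * (1 / (N:ℝ)) ^ 2 = lam ^ 4 / N ^ 2 := by field_simp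
      rw [t1'] at t1
      have t3 := hT o a b (by simp; positivity) (hcR _) (hcR _)
      have t4 := hT o a o (by simp; positivity) (hcR _) (by simp; positivity)
      rw [hJ0] at t4
      have t2'' := t2.trans t2'
      change |J a b - _| ≤ _ at t2''
      have e : ((k + 1 : ℕ) : ℝ) * B = k * B + (2 * (lam ^ 4 / N ^ 2) + 2 * (180 * lam ^ 3 * δ / r)) := by
        push_cast; rw [hB]; ring
      rw [e]
      rw [abs_le] at *
      constructor <;> linarith [t1.1, t1.2, t2''.1, t2''.2, t3.1, t3.2, t4.1, t4.2]
  have fin := main N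
  rw [div_self hN0.ne', hc1, hJ0, add_zero] at fin
  refine (le_abs_self _).trans (fin.trans ?_)
  have e : N * B = 2 * lam ^ 4 / N + 360 * N * lam ^ 3 * δ / r := by
    rw [hB]; field_simp; ring
  rw [e]
  have q1 : 2 * lam ^ 4 / N ≤ η / 2 := by
    rw [div_le_iff₀ hN0]; linarith
  have q2 : 360 * N * lam ^ 3 * δ / r ≤ η / 2 := by
    rw [div_le_iff₀ hr0]; linarith
  linarith


theorem lip_glue {X : Type u} [MetricSpace X] {c1 c2 : ℝ → X} (h1 : LipschitzWith 1 c1)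
    (h2 : LipschitzWith 1 c2) {τ : ℝ} (h : c1 τ = c2 τ) :
    LipschitzWith 1 (fun t => if t ≤ τ then c1 t else c2 t) := by
  have d1 : ∀ s t, dist (c1 s) (c1 t) ≤ |s - t| := fun s t => by
    simpa [Real.dist_eq] using h1.dist_le_mul s t
  have d2 : ∀ s t, dist (c2 s) (c2 t) ≤ |s - t| := fun s t => by
    simpa [Real.dist_eq] using h2.dist_le_mul s t
  have mix : ∀ s t, s ≤ τ → τ < t → dist (c1 s) (c2 t) ≤ |s - t| := by
    intro s t hs ht
    have a := d1 s τ
    have b := d2 τ t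
    have c := dist_triangle (c1 s) (c1 τ) (c2 t)
    rw [h] at c a
    rw [abs_of_nonpos (by linarith)] at a b ⊢
    linarith
  apply LipschitzWith.of_dist_le_mul
  intro s t
  rw [NNReal.coe_one, one_mul, Real.dist_eq]
  by_cases hs : s ≤ τ <;> by_cases ht : t ≤ τ <;> simp only [hs, ht, if_true, if_false]
  · exact d1 s t
  · exact mix s t hs (not_le.1 ht)
  · rw [dist_comm, abs_sub_comm]; exact mix t s ht (not_le.1 hs)
  · exact d2 s t

/-- avoiding path -/
def Av {X : Type u} [MetricSpace X] (m : X) (ρ T : ℝ) (p q : X) : Prop :=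
  0 ≤ T ∧ ∃ c : ℝ → X, LipschitzWith 1 c ∧ c 0 = p ∧ c T = q ∧ ∀ t ∈ Set.Icc 0 T, ρ ≤ dist (c t) m

/-- isometric parametrisation of a segment -/
def IsoOn {X : Type u} [MetricSpace X] (g : ℝ → X) (l : ℝ) : Prop :=
  ∀ s ∈ Set.Icc 0 l, ∀ t ∈ Set.Icc 0 l, dist (g s) (g t) = |s - t|

theorem Av.dist_le {X : Type u} [MetricSpace X] {m p q : X} {ρ T : ℝ} (h : Av m ρ T p q) :
    dist p q ≤ T := by
  obtain ⟨h0, c, hc, rfl, rfl, _⟩ := h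
  simpa [abs_of_nonneg h0] using hc.dist_le_mul 0 T

theorem Av.trans {X : Type u} [MetricSpace X] {m p q w : X} {ρ T S : ℝ} (h : Av m ρ T p q)
    (h' : Av m ρ S q w) : Av m ρ (T + S) p w := by
  obtain ⟨h0, c, hc, h1, h2, h3⟩ := h
  obtain ⟨k0, d, hd, k1, k2, k3⟩ := h'
  have hs : LipschitzWith 1 (fun t : ℝ => t - T) := by
    simpa using (LipschitzWith.id (α := ℝ)).sub (LipschitzWith.const T)
  have hd' : LipschitzWith 1 (fun t => d (t - T)) := by
    have := hd.comp hs; rw [mul_one] at this; exact this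
  refine ⟨by linarith, _, lip_glue hc hd' (τ := T) (by simp [h2, k1]), ?_, ?_, ?_⟩
  · simp [h0, h1]
  · by_cases hS : T + S ≤ T
    · have : S = 0 := by linarith
      subst this
      simp [h2, ← k1, k2]
    · simp only [hS, if_false]; rw [add_sub_cancel_left, k2]
  · intro t ht
    by_cases hS : t ≤ T
    · simp only [hS, if_true]; exact h3 t ⟨ht.1, hS⟩
    · simp only [hS, if_false]; exact k3 _ ⟨by linarith, by linarith [ht.2]⟩

theorem Av.symm {X : Type u} [MetricSpace X] {m p q : X} {ρ T : ℝ} (h : Av m ρ T p q) :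
    Av m ρ T q p := by
  obtain ⟨h0, c, hc, h1, h2, h3⟩ := h
  have hs : LipschitzWith 1 (fun t : ℝ => T - t) := by
    simpa using (LipschitzWith.const T).sub (LipschitzWith.id (α := ℝ))
  have hd' : LipschitzWith 1 (fun t => c (T - t)) := by
    have := hc.comp hs; rw [mul_one] at this; exact this
  exact ⟨h0, _, hd', by simp [h2], by simp [h1], fun t ht => h3 _ ⟨by linarith [ht.2], by linarith [ht.1]⟩⟩

theorem iso_clamp {X : Type u} [MetricSpace X] {g : ℝ → X} {l : ℝ} (hl : 0 ≤ l) (hg : IsoOn g l) :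
    ∃ h : ℝ → X, LipschitzWith 1 h ∧ ∀ t ∈ Set.Icc 0 l, h t = g t := by
  have hm : ∀ t, max 0 (min l t) ∈ Set.Icc 0 l := fun t =>
    ⟨le_max_left _ _, max_le hl (min_le_left _ _)⟩
  refine ⟨fun t => g (max 0 (min l t)), ?_, ?_⟩
  · apply LipschitzWith.of_dist_le_mul
    intro s t
    rw [hg _ (hm s) _ (hm t)]
    exact (clampLip 0 l).dist_le_mul s t
  · intro t ht; simp only; rw [min_eq_right ht.2, max_eq_right ht.1]

theorem Av.sub {X : Type u} [MetricSpace X] {m : X} {ρ l : ℝ} {g : ℝ → X} (hg : IsoOn g l)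
    (hm : ∀ t ∈ Set.Icc 0 l, ρ ≤ dist (g t) m) {s t : ℝ} (hs : s ∈ Set.Icc 0 l)
    (ht : t ∈ Set.Icc 0 l) : Av m ρ |s - t| (g s) (g t) := by
  wlog hst : s ≤ t generalizing s t
  · rw [abs_sub_comm]; exact (this ht hs (le_of_not_ge hst)).symm
  obtain ⟨h, hL, hh⟩ := iso_clamp (hs.1.trans hs.2) hg
  have hsh : LipschitzWith 1 (fun t : ℝ => s + t) := by
    simpa using (LipschitzWith.const s).add (LipschitzWith.id (α := ℝ))
  have hd' : LipschitzWith 1 (fun t => h (s + t)) := by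
    have := hL.comp hsh; rw [mul_one] at this; exact this
  rw [abs_of_nonpos (by linarith)]
  refine ⟨by linarith, _, hd', ?_, ?_, ?_⟩
  · simp [hh s hs]
  · rw [← hh t ht]; ring_nf
  · intro u hu
    have : s + u ∈ Set.Icc 0 l := ⟨by linarith [hs.1, hu.1], by linarith [hu.2, ht.2]⟩
    rw [hh _ this]; exact hm _ this

theorem Av.refl {X : Type u} [MetricSpace X] {m p : X} {ρ : ℝ} (h : ρ ≤ dist p m) :
    Av m ρ 0 p p :=
  ⟨le_rfl, fun _ => p, LipschitzWith.const' p, rfl, rfl, fun _ _ => h⟩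

theorem Av.conn {X : Type u} [MetricSpace X] (hX : GeodesicSpace X) {m p q : X} {ρ : ℝ}
    (h : ∀ t ∈ Set.Icc 0 (dist p q), ρ ≤ dist p m - t ∨ ρ ≤ dist q m - (dist p q - t)) :
    Av m ρ (dist p q) p q := by
  obtain ⟨g, hg⟩ := hX p q
  have m0 : (0:ℝ) ∈ Set.Icc 0 (dist p q) := ⟨le_rfl, dist_nonneg⟩
  have m1 : dist p q ∈ Set.Icc 0 (dist p q) := ⟨dist_nonneg, le_rfl⟩
  have := Av.sub (m := m) (ρ := ρ) hg.2.2 ?_ m0 m1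
  · rw [hg.1, hg.2.1, zero_sub, abs_neg, abs_of_nonneg dist_nonneg] at this; exact this
  · intro t ht
    have e1 := hg.2.2 0 m0 t ht
    have e2 := hg.2.2 _ m1 t ht
    rw [hg.1, zero_sub, abs_neg, abs_of_nonneg ht.1] at e1
    rw [hg.2.1, abs_of_nonneg (by linarith [ht.2])] at e2
    have t1 := dist_triangle p (g t) m
    have t2 := dist_triangle q (g t) m
    rcases h t ht with h | h <;> linarith

theorem fat {X : Type u} [MetricSpace X]
    (H : ∀ lam η : ℝ, 0 < lam → 0 < η → ∃ r₀ > (0:ℝ), ∀ r : ℝ, r₀ ≤ r →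
        ∀ γ : ℝ → X, LipschitzOnWith (Real.toNNReal (lam * r)) γ (Set.Icc 0 1) →
          γ 1 = γ 0 →
          ∀ f p : X → ℝ, LipschitzWith (Real.toNNReal (lam / r)) f →
            LipschitzWith (Real.toNNReal (lam / r)) p →
            (∫ s in (0:ℝ)..1, f (γ s) * deriv (fun t => p (γ t)) s) ≤ η) :
    ∃ r₀ > (0:ℝ), ∀ E : ℝ, r₀ ≤ E → ∀ (g : ℝ → X) (l : ℝ), IsoOn g l → ∀ a s b T : ℝ,
      0 ≤ a → a + E / 4 ≤ s → s + E / 4 ≤ b → b ≤ l → T ≤ 22 * E →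
      Av (g s) (E / 4) T (g b) (g a) → False := by
  obtain ⟨r₀, hr₀, H⟩ := H 1 (1 / 100000) one_pos (by norm_num)
  refine ⟨r₀, hr₀, ?_⟩
  intro E hE g l hg a s b T ha has hsb hbl hT hAv
  have hE0 : 0 < E := lt_of_lt_of_le hr₀ hE
  have hba : b - a ≤ T := by
    have := hAv.dist_le
    rwa [hg b ⟨by linarith, hbl⟩ a ⟨ha, by linarith⟩, abs_of_nonneg (by linarith)] at this
  obtain ⟨hT0, d, hd, hd0, hdT, hdm⟩ := hAv
  obtain ⟨h, hL, hh⟩ := iso_clamp (by linarith : (0:ℝ) ≤ l) hg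
  set L := 44 * E with hLdef
  have hL0 : 0 < L := by positivity
  set m := g s with hm
  have hsh : LipschitzWith 1 (fun t : ℝ => a + t) := by
    simpa using (LipschitzWith.const a).add (LipschitzWith.id (α := ℝ))
  have hc1 : LipschitzWith 1 (fun t => h (a + t)) := by
    have := hL.comp hsh; rw [mul_one] at this; exact this
  have hsh2 : LipschitzWith 1 (fun t : ℝ => min T (t - (b - a))) := by
    have : LipschitzWith 1 (fun t : ℝ => t - (b - a)) := by
      simpa using (LipschitzWith.id (α := ℝ)).sub (LipschitzWith.const (b - a))
    exact this.const_min T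
  have hc2 : LipschitzWith 1 (fun t => d (min T (t - (b - a)))) := by
    have := hd.comp hsh2; rw [mul_one] at this; exact this
  have hbm : b ∈ Set.Icc 0 l := ⟨by linarith, hbl⟩
  have ham : a ∈ Set.Icc 0 l := ⟨by linarith, by linarith⟩
  have hc := lip_glue hc1 hc2 (τ := b - a) (by
    simp only [sub_self, min_eq_right hT0, hd0, add_sub_cancel, hh b hbm])
  set c : ℝ → X := fun t => if t ≤ b - a then h (a + t) else d (min T (t - (b - a))) with hcdef
  have c_lo : ∀ t, 0 ≤ t → t ≤ b - a → c t = g (a + t) := by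
    intro t h0 ht
    simp only [hcdef, ht, if_true]
    exact hh _ ⟨by linarith, by linarith⟩
  have c_hi : ∀ t, b - a ≤ t → E / 4 ≤ dist (c t) m := by
    intro t ht
    rcases eq_or_lt_of_le ht with rfl | ht
    · rw [c_lo _ (by linarith) le_rfl, add_sub_cancel, ← hd0]
      exact hdm 0 ⟨le_rfl, hT0⟩
    · simp only [hcdef, not_le.2 ht, if_false]
      exact hdm _ ⟨le_min hT0 (by linarith), min_le_left _ _⟩
  have c0 : c 0 = g a := by rw [c_lo 0 le_rfl (by linarith), add_zero]
  have cL : c L = g a := by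
    have : ¬ (L ≤ b - a) := by linarith
    simp only [hcdef, this, if_false]
    rw [min_eq_left (by linarith), hdT]
  have coe1 : ((Real.toNNReal (1 / L) : ℝ≥0) : ℝ) = 1 / L := Real.coe_toNNReal _ (by positivity)
  set f : X → ℝ := fun q => max 0 (E / 4 - dist q m) / L with hf
  set p : X → ℝ := fun q => dist q (g 0) / L with hp
  have hfl : LipschitzWith (Real.toNNReal (1 / L)) f := by
    apply LipschitzWith.of_dist_le_mul
    intro x y
    rw [coe1, Real.dist_eq]
    simp only [hf]
    rw [← sub_div, abs_div, abs_of_pos hL0, div_eq_inv_mul, one_div]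
    gcongr
    have h1 := dist_triangle x y m
    have h2 := dist_triangle y x m
    rw [dist_comm y x] at h2
    have := abs_max_sub_max_le_abs (E / 4 - dist x m) (E / 4 - dist y m) 0
    rw [max_comm _ (0:ℝ), max_comm _ (0:ℝ)] at this
    refine this.trans ?_
    rw [abs_le]; constructor <;> linarith
  have hpl : LipschitzWith (Real.toNNReal (1 / L)) p := by
    apply LipschitzWith.of_dist_le_mul
    intro x y
    rw [coe1, Real.dist_eq]
    simp only [hp]
    rw [← sub_div, abs_div, abs_of_pos hL0, div_eq_inv_mul, one_div]
    gcongr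
    exact abs_dist_sub_le x y (g 0)
  have hγ : LipschitzOnWith (Real.toNNReal (1 * L)) (fun t => c (L * t)) (Set.Icc 0 1) := by
    apply LipschitzOnWith.of_dist_le_mul
    intro x _ y _
    have := hc.dist_le_mul (L * x) (L * y)
    rw [Real.coe_toNNReal _ (by positivity)]
    rw [Real.dist_eq, ← mul_sub, abs_mul, abs_of_pos hL0] at this
    simpa [Real.dist_eq] using this
  have main := H L (by linarith) (fun t => c (L * t)) hγ (by simp [cL, c0]) f p hfl hpl
  have e : (∫ t in (0:ℝ)..1, f (c (L * t)) * deriv (fun t => p (c (L * t))) t)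
      = ∫ t in (0:ℝ)..1, f (c (L * t)) := by
    rw [intervalIntegral.integral_of_le zero_le_one, intervalIntegral.integral_of_le zero_le_one,
        integral_Ioc_eq_integral_Ioo, integral_Ioc_eq_integral_Ioo]
    refine setIntegral_congr_fun measurableSet_Ioo ?_
    intro t ht
    simp only
    have hLt : 0 < L * t := mul_pos hL0 ht.1
    rcases le_or_gt (b - a) (L * t) with hcase | hcase
    · have : f (c (L * t)) = 0 := by
        simp only [hf]
        rw [max_eq_left (by linarith [c_hi _ hcase]), zero_div]
      rw [this, zero_mul]
    · have hev : (fun t => p (c (L * t))) =ᶠ[nhds t] (fun t => (a + L * t) / L) := by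
        have hcont : Continuous (fun t : ℝ => L * t) := by fun_prop
        have : ∀ᶠ u in nhds t, L * u ∈ Set.Ioo 0 (b - a) :=
          hcont.continuousAt.eventually (Ioo_mem_nhds hLt hcase)
        filter_upwards [this] with u hu
        rw [c_lo _ hu.1.le hu.2.le]
        simp only [hp]
        rw [hg _ ⟨by linarith [hu.1], by linarith [hu.2]⟩ 0 ⟨le_rfl, by linarith⟩, sub_zero,
          abs_of_nonneg (by linarith [hu.1])]
      have hder : HasDerivAt (fun t => (a + L * t) / L) 1 t := by
        have := (((hasDerivAt_id t).const_mul L).const_add a).div_const L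
        rw [mul_one, div_self hL0.ne'] at this
        exact this
      rw [hev.deriv_eq, hder.deriv, mul_one]
  have hfc : Continuous (fun t => f (c (L * t))) :=
    hfl.continuous.comp (hc.continuous.comp (by fun_prop))
  have hf0 : ∀ q, 0 ≤ f q := fun q => div_nonneg (le_max_left _ _) hL0.le
  have hlow : E / 8 / L * (E / 4 / L) ≤ ∫ t in (0:ℝ)..1, f (c (L * t)) := by
    set u := (s - a - E / 8) / L with hu
    set v := (s - a + E / 8) / L with hv
    have huv : v - u = E / 4 / L := by rw [hu, hv]; field_simp; ring
    have huv' : u ≤ v := by have : 0 < E / 4 / L := by positivity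
                            linarith
    have hu0 : 0 ≤ u := div_nonneg (by linarith) hL0.le
    have hv1 : v ≤ 1 := by rw [hv, div_le_one hL0]; linarith
    have s1 : ∫ t in u..v, f (c (L * t)) ≤ ∫ t in (0:ℝ)..1, f (c (L * t)) :=
      intervalIntegral.integral_mono_interval hu0 huv' hv1
        (Filter.Eventually.of_forall fun t => hf0 _) (hfc.intervalIntegrable _ _)
    have s2 : ∫ t in u..v, (E / 8 / L) ≤ ∫ t in u..v, f (c (L * t)) := by
      refine intervalIntegral.integral_mono_on huv' (by simp) (hfc.intervalIntegrable _ _) ?_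
      intro t ht
      have t1 : s - a - E / 8 ≤ L * t := by
        have := ht.1; rw [hu, div_le_iff₀ hL0] at this; linarith
      have t2 : L * t ≤ s - a + E / 8 := by
        have := ht.2; rw [hv, le_div_iff₀ hL0] at this; linarith
      rw [c_lo _ (by linarith) (by linarith)]
      simp only [hf]
      gcongr
      refine le_max_of_le_right ?_
      rw [hm, hg _ ⟨by linarith, by linarith⟩ s ⟨by linarith, by linarith⟩]
      have : |a + L * t - s| ≤ E / 8 := by rw [abs_le]; constructor <;> linarith
      linarith
    rw [intervalIntegral.integral_const, huv, smul_eq_mul, mul_comm] at s2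
    linarith
  have e3 : E / 8 / L * (E / 4 / L) = 1 / 61952 := by rw [hLdef]; field_simp; norm_num
  have main' := main
  rw [e] at main'
  rw [e3] at hlow
  norm_num at main' hlow
  linarith


theorem conn_far {X : Type u} [MetricSpace X] (hX : GeodesicSpace X) {m p q : X} {E : ℝ}
    (hd : dist p q ≤ E) (hq : 2 * E ≤ dist q m) (hE : 0 < E) : Av m (E / 4) (dist p q) p q :=
  Av.conn hX fun t ht => Or.inr (by linarith [ht.1])

theorem conn_near {X : Type u} [MetricSpace X] (hX : GeodesicSpace X) {m p q : X} {E : ℝ}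
    (hd : dist p q ≤ E) (hp : 3 * E / 4 < dist p m) (hq : 3 * E / 4 < dist q m) :
    Av m (E / 4) (dist p q) p q :=
  Av.conn hX fun t ht => by
    by_cases h : t ≤ E / 2
    · left; linarith
    · right; linarith

theorem step {X : Type u} [MetricSpace X] (hX : GeodesicSpace X) {E : ℝ} (hE : 0 < E)
    (hfat : ∀ (g : ℝ → X) (l : ℝ), IsoOn g l → ∀ a s b T : ℝ,
      0 ≤ a → a + E / 4 ≤ s → s + E / 4 ≤ b → b ≤ l → T ≤ 22 * E →
      Av (g s) (E / 4) T (g b) (g a) → False)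
    {g h2 h3 : ℝ → X} {l1 l2 l3 : ℝ} (p2 : 0 ≤ l2) (p3 : 0 ≤ l3)
    (I1 : IsoOn g l1) (I2 : IsoOn h2 l2) (I3 : IsoOn h3 l3)
    (e1 : g 0 = h2 0) (e2 : g l1 = h3 0) (e3 : h2 l2 = h3 l3)
    (slim1 : ∀ s ∈ Set.Icc 0 l1, (∃ i ∈ Set.Icc 0 l2, dist (g s) (h2 i) ≤ E) ∨
      (∃ j ∈ Set.Icc 0 l3, dist (g s) (h3 j) ≤ E))
    (slim2 : ∀ i ∈ Set.Icc 0 l2, (∃ s ∈ Set.Icc 0 l1, dist (h2 i) (g s) ≤ E) ∨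
      (∃ j ∈ Set.Icc 0 l3, dist (h2 i) (h3 j) ≤ E))
    {sm : ℝ} (hsm : sm ∈ Set.Icc 0 l1)
    (f2 : ∀ i ∈ Set.Icc 0 l2, 3 * E / 4 < dist (h2 i) (g sm))
    (f3 : ∀ i ∈ Set.Icc 0 l3, 3 * E / 4 < dist (h3 i) (g sm)) : False := by
  have z2 : (0:ℝ) ∈ Set.Icc 0 l2 := ⟨le_rfl, p2⟩
  have z3 : (0:ℝ) ∈ Set.Icc 0 l3 := ⟨le_rfl, p3⟩
  have p1 : 0 ≤ l1 := hsm.1.trans hsm.2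
  have z1 : (0:ℝ) ∈ Set.Icc 0 l1 := ⟨le_rfl, p1⟩
  have w1 : l1 ∈ Set.Icc 0 l1 := ⟨p1, le_rfl⟩
  have w2 : l2 ∈ Set.Icc 0 l2 := ⟨p2, le_rfl⟩
  have w3 : l3 ∈ Set.Icc 0 l3 := ⟨p3, le_rfl⟩
  have b1 : 3 * E / 4 < sm := by
    have := f2 0 z2
    rw [← e1, I1 0 z1 sm hsm, zero_sub, abs_neg, abs_of_nonneg hsm.1] at this; exact this
  have b2 : 3 * E / 4 < l1 - sm := by
    have := f3 0 z3
    rw [← e2, I1 _ w1 sm hsm, abs_of_nonneg (by linarith [hsm.2])] at this; exact this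
  have c2 : ∀ i ∈ Set.Icc 0 l2, E / 4 ≤ dist (h2 i) (g sm) := fun i hi => by
    linarith [f2 i hi]
  have c3 : ∀ i ∈ Set.Icc 0 l3, E / 4 ≤ dist (h3 i) (g sm) := fun i hi => by
    linarith [f3 i hi]
  have foot : ∀ s ∈ Set.Icc 0 l1, 2 * E ≤ |s - sm| →
      (∃ i ∈ Set.Icc 0 l2, ∃ T ≤ E, Av (g sm) (E / 4) T (h2 i) (g s)) ∨
      (∃ i ∈ Set.Icc 0 l3, ∃ T ≤ E, Av (g sm) (E / 4) T (h3 i) (g s)) := by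
    intro s hs hd
    rw [← I1 s hs sm hsm] at hd
    rcases slim1 s hs with ⟨i, hi, h⟩ | ⟨i, hi, h⟩
    · rw [dist_comm] at h
      exact Or.inl ⟨i, hi, _, h, conn_far hX h hd hE⟩
    · rw [dist_comm] at h
      exact Or.inr ⟨i, hi, _, h, conn_far hX h hd hE⟩
  obtain ⟨su, hsu, u1, u2, hu⟩ : ∃ su ∈ Set.Icc 0 l1, su + E / 4 ≤ sm ∧ sm - 2 * E ≤ su ∧
      ((∃ i ∈ Set.Icc 0 l2, ∃ T ≤ E, Av (g sm) (E / 4) T (h2 i) (g su)) ∨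
      (∃ i ∈ Set.Icc 0 l3, ∃ T ≤ E, Av (g sm) (E / 4) T (h3 i) (g su))) := by
    by_cases h : sm ≤ 2 * E
    · refine ⟨0, z1, by linarith, by linarith, Or.inl ⟨0, z2, 0, hE.le, ?_⟩⟩
      rw [e1]; exact Av.refl (c2 0 z2)
    · have hm : sm - 2 * E ∈ Set.Icc 0 l1 := ⟨by linarith, by linarith [hsm.2]⟩
      refine ⟨sm - 2 * E, hm, by linarith, le_rfl, foot _ hm ?_⟩
      rw [abs_of_nonpos (by linarith)]; linarith
  obtain ⟨sv, hsv, v1, v2, hv⟩ : ∃ sv ∈ Set.Icc 0 l1, sm + E / 4 ≤ sv ∧ sv ≤ sm + 2 * E ∧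
      ((∃ i ∈ Set.Icc 0 l2, ∃ T ≤ E, Av (g sm) (E / 4) T (h2 i) (g sv)) ∨
      (∃ i ∈ Set.Icc 0 l3, ∃ T ≤ E, Av (g sm) (E / 4) T (h3 i) (g sv))) := by
    by_cases h : l1 ≤ sm + 2 * E
    · refine ⟨l1, w1, by linarith, by linarith, Or.inr ⟨0, z3, 0, hE.le, ?_⟩⟩
      rw [e2]; exact Av.refl (c3 0 z3)
    · have hm : sm + 2 * E ∈ Set.Icc 0 l1 := ⟨by linarith, by linarith [hsm.2]⟩
      refine ⟨sm + 2 * E, hm, by linarith, le_rfl, foot _ hm ?_⟩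
      rw [abs_of_nonneg (by linarith)]; linarith
  have huv : dist (g su) (g sv) ≤ 4 * E := by
    rw [I1 _ hsu _ hsv, abs_of_nonpos (by linarith)]; linarith
  have zz : ∀ s ∈ Set.Icc 0 l1, ∀ i ∈ Set.Icc 0 l2, ∀ T, dist (h2 i) (g s) ≤ T →
      i ≤ s + T ∧ s ≤ i + T := by
    intro s hs i hi T hT
    have a1 := I1 s hs 0 z1
    have a2 := I2 i hi 0 z2
    rw [sub_zero, abs_of_nonneg hs.1] at a1
    rw [sub_zero, abs_of_nonneg hi.1, ← e1] at a2
    have t1 := dist_triangle (h2 i) (g s) (g 0)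
    have t2 := dist_triangle (g s) (h2 i) (g 0)
    rw [dist_comm (g s) (h2 i)] at t2
    constructor <;> linarith
  rcases hu with ⟨i, hi, Tu, hTu, Au⟩ | ⟨i, hi, Tu, hTu, Au⟩ <;>
  rcases hv with ⟨j, hj, Tv, hTv, AV⟩ | ⟨j, hj, Tv, hTv, AV⟩
  · -- both on h2
    have hij : |j - i| ≤ 6 * E := by
      rw [← I2 j hj i hi]
      have t1 := dist_triangle4 (h2 j) (g sv) (g su) (h2 i)
      have := AV.dist_le
      have := Au.symm.dist_le
      rw [dist_comm (g sv)] at t1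
      linarith
    exact hfat g l1 I1 su sm sv _ hsu.1 u1 v1 hsv.2 (by linarith)
      ((AV.symm.trans (Av.sub I2 c2 hj hi)).trans Au)
  · -- u on h2, v on h3
    have key : ∀ k ∈ Set.Icc 0 l2, ∀ l ∈ Set.Icc 0 l3, |k - i| ≤ 6 * E → ∀ T, T ≤ E →
        Av (g sm) (E / 4) T (h3 l) (h2 k) → False := by
      intro k hk l hl hki T hT hA
      have hjl : |j - l| ≤ 13 * E := by
        rw [← I3 j hj l hl]
        have a1 := AV.dist_le
        have a2 := Au.symm.dist_le
        have a3 := I2 k hk i hi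
        have a4 := hA.symm.dist_le
        have t1 := dist_triangle4 (h3 j) (g sv) (g su) (h2 i)
        have t2 := dist_triangle4 (h3 j) (h2 i) (h2 k) (h3 l)
        rw [dist_comm (g sv)] at t1
        rw [dist_comm (h2 i) (h2 k)] at t2
        linarith
      exact hfat g l1 I1 su sm sv _ hsu.1 u1 v1 hsv.2 (by linarith)
        ((((AV.symm.trans (Av.sub I3 c3 hj hl)).trans hA).trans (Av.sub I2 c2 hk hi)).trans Au)
    by_cases hc : l2 ≤ i + 6 * E
    · refine key l2 w2 l3 w3 ?_ 0 hE.le ?_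
      · rw [abs_of_nonneg (by linarith [hi.2])]; linarith
      · rw [e3]; exact Av.refl (c3 _ w3)
    · have hk : i + 6 * E ∈ Set.Icc 0 l2 := ⟨by linarith [hi.1], by linarith⟩
      have hki : |i + 6 * E - i| ≤ 6 * E := by
        rw [abs_of_nonneg (by linarith)]; linarith
      rcases slim2 _ hk with ⟨s, hs, hd⟩ | ⟨l, hl, hd⟩
      · have q1 := (zz s hs _ hk _ hd).1
        have q2 := (zz su hsu i hi _ Au.dist_le).2
        have hf : 2 * E ≤ dist (g s) (g sm) := by
          rw [I1 s hs sm hsm, abs_of_nonneg (by linarith)]; linarith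
        exact hfat g l1 I1 su sm s _ hsu.1 u1 (by linarith) hs.2 (by linarith)
          (((conn_far hX hd hf hE).symm.trans (Av.sub I2 c2 hk hi)).trans Au)
      · exact key _ hk l hl hki _ hd (conn_near hX hd (f2 _ hk) (f3 _ hl)).symm
  · -- u on h3, v on h2
    have near : ∀ k ∈ Set.Icc 0 l2, ∀ s ∈ Set.Icc 0 l1, |j - k| ≤ 6 * E → s + E / 4 ≤ sm →
        ∀ T, T ≤ E → Av (g sm) (E / 4) T (h2 k) (g s) → False := by
      intro k hk s hs hjk h T hT hA
      exact hfat g l1 I1 s sm sv _ hs.1 h v1 hsv.2 (by linarith)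
        ((AV.symm.trans (Av.sub I2 c2 hj hk)).trans hA)
    by_cases hc : j ≤ 6 * E
    · refine near 0 z2 0 z1 ?_ (by linarith) 0 hE.le ?_
      · rw [abs_of_nonneg (by linarith [hj.1])]; linarith
      · rw [e1]; exact Av.refl (c2 _ z2)
    · have hk : j - 6 * E ∈ Set.Icc 0 l2 := ⟨by linarith, by linarith [hj.2]⟩
      have hjk : |j - (j - 6 * E)| ≤ 6 * E := by
        rw [abs_of_nonneg (by linarith)]; linarith
      rcases slim2 _ hk with ⟨s, hs, hd⟩ | ⟨l, hl, hd⟩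
      · have q1 := (zz s hs _ hk _ hd).2
        have q2 := (zz sv hsv j hj _ AV.dist_le).1
        have hf : 2 * E ≤ dist (g s) (g sm) := by
          rw [I1 s hs sm hsm, abs_of_nonpos (by linarith)]; linarith
        exact near _ hk s hs hjk (by linarith) _ hd (conn_far hX hd hf hE)
      · have hA := conn_near hX hd (f2 _ hk) (f3 _ hl)
        have hli : |l - i| ≤ 13 * E := by
          rw [← I3 l hl i hi]
          have a1 := AV.symm.dist_le
          have a2 := Au.symm.dist_le
          have a3 := I2 j hj _ hk
          have t1 := dist_triangle4 (h2 j) (g sv) (g su) (h3 i)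
          have t2 := dist_triangle4 (h3 l) (h2 (j - 6 * E)) (h2 j) (h3 i)
          rw [dist_comm (g sv) (g su), dist_comm (h2 j) (g sv)] at t1
          rw [dist_comm (h3 l) (h2 (j - 6 * E)), dist_comm (h2 (j - 6 * E)) (h2 j)] at t2
          linarith
        exact hfat g l1 I1 su sm sv _ hsu.1 u1 v1 hsv.2 (by linarith)
          ((((AV.symm.trans (Av.sub I2 c2 hj hk)).trans hA).trans (Av.sub I3 c3 hl hi)).trans Au)
  · -- both on h3
    have hij : |j - i| ≤ 6 * E := by
      rw [← I3 j hj i hi]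
      have t1 := dist_triangle4 (h3 j) (g sv) (g su) (h3 i)
      have := AV.dist_le
      have := Au.symm.dist_le
      rw [dist_comm (g sv)] at t1
      linarith
    exact hfat g l1 I1 su sm sv _ hsu.1 u1 v1 hsv.2 (by linarith)
      ((AV.symm.trans (Av.sub I3 c3 hj hi)).trans Au)

theorem improve {X : Type u} [MetricSpace X] (hX : GeodesicSpace X) {E : ℝ} (hE : 0 < E)
    (hfat : ∀ (g : ℝ → X) (l : ℝ), IsoOn g l → ∀ a s b T : ℝ,
      0 ≤ a → a + E / 4 ≤ s → s + E / 4 ≤ b → b ≤ l → T ≤ 22 * E →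
      Av (g s) (E / 4) T (g b) (g a) → False)
    {x y z : X} {g1 g2 g3 : ℝ → X} (G1 : IsGeodesicSeg x y g1) (G2 : IsGeodesicSeg y z g2)
    (G3 : IsGeodesicSeg z x g3) (S1 : SlimSide E x y z g1 g2 g3)
    (S3 : SlimSide E z x y g3 g1 g2) : SlimSide (3 * E / 4) x y z g1 g2 g3 := by
  intro sm hsm
  by_contra hcon
  push Not at hcon
  have rev : ∀ i ∈ Set.Icc 0 (dist z x), dist z x - i ∈ Set.Icc 0 (dist z x) := fun i hi =>
    ⟨by linarith [hi.2], by linarith [hi.1]⟩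
  refine step hX hE hfat (g := g1) (h2 := fun t => g3 (dist z x - t)) (h3 := g2)
    (l1 := dist x y) (l2 := dist z x) (l3 := dist y z) (sm := sm)
    dist_nonneg dist_nonneg G1.2.2 ?_ G2.2.2 ?_ ?_ ?_ ?_ ?_ hsm ?_ ?_
  · intro s hs t ht
    simp only
    rw [G3.2.2 _ (rev s hs) _ (rev t ht), abs_sub_comm]
    congr 1; ring
  · simp [G1.1, G3.2.1]
  · rw [G1.2.1, G2.1]
  · simp [G3.1, G2.2.1]
  · intro s hs
    obtain ⟨p, hp, hd⟩ := S1 s hs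
    rcases hp with ⟨t, ht, rfl⟩ | ⟨t, ht, rfl⟩
    · exact Or.inr ⟨t, ht, hd⟩
    · exact Or.inl ⟨_, rev t ht, by simpa using hd⟩
  · intro i hi
    obtain ⟨p, hp, hd⟩ := S3 _ (rev i hi)
    rcases hp with ⟨t, ht, rfl⟩ | ⟨t, ht, rfl⟩
    · exact Or.inl ⟨t, ht, hd⟩
    · exact Or.inr ⟨t, ht, hd⟩
  · intro i hi
    rw [dist_comm]
    exact hcon _ (Or.inr ⟨_, rev i hi, rfl⟩)
  · intro i hi
    rw [dist_comm]
    exact hcon _ (Or.inl ⟨i, hi, rfl⟩)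

theorem SlimSide.mono {X : Type u} [MetricSpace X] {E F : ℝ} (h : E ≤ F) {x y z : X}
    {g1 g2 g3 : ℝ → X} (S : SlimSide E x y z g1 g2 g3) : SlimSide F x y z g1 g2 g3 := by
  intro s hs
  obtain ⟨p, hp, hd⟩ := S s hs
  exact ⟨p, hp, hd.trans h⟩

theorem slim_start {X : Type u} [MetricSpace X] {x y z : X} {g1 g2 g3 : ℝ → X}
    (G1 : IsGeodesicSeg x y g1) (G3 : IsGeodesicSeg z x g3) :
    SlimSide (dist x y) x y z g1 g2 g3 := by
  intro s hs
  refine ⟨x, Or.inr ⟨dist z x, ⟨dist_nonneg, le_rfl⟩, G3.2.1⟩, ?_⟩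
  have := G1.2.2 s hs 0 ⟨le_rfl, dist_nonneg⟩
  rw [G1.1, sub_zero, abs_of_nonneg hs.1] at this
  rw [this]; exact hs.2

theorem backward {X : Type u} [MetricSpace X] (hX : GeodesicSpace X)
    (H : ∀ lam η : ℝ, 0 < lam → 0 < η → ∃ r₀ > (0:ℝ), ∀ r : ℝ, r₀ ≤ r →
        ∀ γ : ℝ → X, LipschitzOnWith (Real.toNNReal (lam * r)) γ (Set.Icc 0 1) →
          γ 1 = γ 0 →
          ∀ f p : X → ℝ, LipschitzWith (Real.toNNReal (lam / r)) f →
            LipschitzWith (Real.toNNReal (lam / r)) p →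
            (∫ s in (0:ℝ)..1, f (γ s) * deriv (fun t => p (γ t)) s) ≤ η) :
    GromovHyperbolic X := by
  obtain ⟨r₀, hr₀, hfat⟩ := fat H
  refine ⟨r₀, hr₀.le, ?_⟩
  intro x y z g1 g2 g3 G1 G2 G3
  set P := dist x y + dist y z + dist z x with hP
  have n1 : 0 ≤ dist x y := dist_nonneg
  have n2 : 0 ≤ dist y z := dist_nonneg
  have n3 : 0 ≤ dist z x := dist_nonneg
  have main : ∀ n : ℕ, SlimSide (max r₀ ((3 / 4) ^ n * P)) x y z g1 g2 g3 ∧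
      SlimSide (max r₀ ((3 / 4) ^ n * P)) y z x g2 g3 g1 ∧
      SlimSide (max r₀ ((3 / 4) ^ n * P)) z x y g3 g1 g2 := by
    intro n
    induction n with
    | zero =>
      have hm : P ≤ max r₀ ((3 / 4) ^ 0 * P) := by simp
      exact ⟨(slim_start G1 G3).mono (by linarith), (slim_start G2 G1).mono (by linarith),
        (slim_start G3 G2).mono (by linarith)⟩
    | succ n ih =>
      obtain ⟨S1, S2, S3⟩ := ih
      have hle : r₀ ≤ max r₀ ((3 / 4) ^ n * P) := le_max_left _ _
      have hE := lt_of_lt_of_le hr₀ hle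
      have hf := hfat _ hle
      have hm : 3 * max r₀ ((3 / 4) ^ n * P) / 4 ≤ max r₀ ((3 / 4) ^ (n + 1) * P) := by
        rcases max_choice r₀ ((3 / 4) ^ n * P) with h | h <;> rw [h]
        · exact le_max_of_le_left (by linarith)
        · exact le_max_of_le_right (by rw [pow_succ]; linarith)
      exact ⟨(improve hX hE hf G1 G2 G3 S1 S3).mono hm, (improve hX hE hf G2 G3 G1 S2 S1).mono hm,
        (improve hX hE hf G3 G1 G2 S3 S2).mono hm⟩
  have hlim : Tendsto (fun n : ℕ => (3 / 4 : ℝ) ^ n * P) atTop (nhds 0) := by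
    simpa using (tendsto_pow_atTop_nhds_zero_of_lt_one (r := (3 / 4 : ℝ)) (by norm_num)
      (by norm_num)).mul_const P
  obtain ⟨n, hn⟩ := (hlim.eventually (gt_mem_nhds hr₀)).exists
  have := (main n).1
  rw [max_eq_left hn.le] at this
  exact this

/-- Lemma 4.2: a geodesic metric space `X` is Gromov hyperbolic if
and only if for all `λ, η > 0` there is `r₀ > 0` such that for all `r ≥ r₀`, every
`λr`-Lipschitz loop `γ : [0,1] → X` and all `λ/r`-Lipschitz functions `f, π : X → ℝ`
satisfy `∫₀¹ f(γ(s)) (π∘γ)'(s) ds ≤ η`. -/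
theorem degenerate_loops_iff_hyperbolic {X : Type u} [MetricSpace X]
    (hX : GeodesicSpace X) :
    GromovHyperbolic X ↔
      ∀ lam η : ℝ, 0 < lam → 0 < η → ∃ r₀ > (0:ℝ), ∀ r : ℝ, r₀ ≤ r →
        ∀ γ : ℝ → X, LipschitzOnWith (Real.toNNReal (lam * r)) γ (Set.Icc 0 1) →
          γ 1 = γ 0 →
          ∀ f p : X → ℝ, LipschitzWith (Real.toNNReal (lam / r)) f →
            LipschitzWith (Real.toNNReal (lam / r)) p →
            (∫ s in (0:ℝ)..1, f (γ s) * deriv (fun t => p (γ t)) s) ≤ η := by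
  exact ⟨forward hX, backward hX⟩

end SharpIsop
end

section
/- Let V be a 2-dimensional real normed space with unit ball B_V and unit sphere ∂B_V, let Y be a metric space and ι: V → Y an isometric embedding, and let γ:[0,1]→V be a Lipschitz loop with γ(0)=γ(1) that parametrizes ∂B_V injectively on [0,1). Then every singular Lipschitz disc φ: D² → Y bounding ι∘γ satisfies sup_{w ∈ D²} dist(φ(w), ι(∂B_V)) ≥ 1/J(V). -/
open scoped NNReal ENNReal
open MeasureTheory Filter

universe u v

namespace SharpIsop

/-- Jung's constant of a metric space: the infimum of all `r ≥ 0` such that every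
subset of diameter at most `2` is contained in some closed ball of radius `r`. -/
noncomputable def jungConstant (V : Type u) [PseudoMetricSpace V] : ℝ :=
  sInf {r : ℝ | 0 ≤ r ∧
    ∀ A : Set V, EMetric.diam A ≤ 2 → ∃ c : V, A ⊆ Metric.closedBall c r}

/-- Points of the unit sphere inside a ball of radius `< 1` do not contain `0` in their hull. -/
lemma zero_notMem_convexHull {V : Type u} [NormedAddCommGroup V]
    [NormedSpace ℝ V] (hdim : Module.finrank ℝ V = 2) (S : Set V)
    (hS : S ⊆ Metric.sphere (0:V) 1) (c : V) (ρ : ℝ) (hρ : ρ < 1)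
    (hc : S ⊆ Metric.closedBall c ρ) : (0:V) ∉ convexHull ℝ S := by
  have hfin : FiniteDimensional ℝ V := Module.finite_of_finrank_pos (by omega)
  intro h0
  by_cases hc0 : c = 0
  · subst hc0
    have hne : S.Nonempty := convexHull_nonempty_iff.1 ⟨0, h0⟩
    obtain ⟨p, hp⟩ := hne
    have h1 := hS hp
    have h2 := hc hp
    simp at h1 h2
    linarith
  obtain ⟨v, hv⟩ : ∃ v, v ∉ Submodule.span ℝ {c} := by
    by_contra hcon
    push Not at hcon
    have : Submodule.span ℝ {c} = ⊤ := by
      rw [Submodule.eq_top_iff']; exact hcon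
    have h1 := finrank_span_singleton (K := ℝ) hc0
    rw [this, finrank_top] at h1
    omega
  obtain ⟨y, hy, hyd⟩ := (Submodule.closed_of_finiteDimensional
    (Submodule.span ℝ {c})).exists_infDist_eq_dist ⟨0, Submodule.zero_mem _⟩ v
  obtain ⟨s0, rfl⟩ := Submodule.mem_span_singleton.1 hy
  set u := v - s0 • c with hu
  have humin : ∀ s : ℝ, ‖u‖ ≤ ‖u + s • c‖ := by
    intro s
    have h1 := Metric.infDist_le_dist_of_mem (x := v)
      (show (s0 - s) • c ∈ (Submodule.span ℝ {c} : Set V) from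
        Submodule.mem_span_singleton.2 ⟨_, rfl⟩)
    rw [hyd, dist_eq_norm, dist_eq_norm] at h1
    have h2 : v - (s0 - s) • c = u + s • c := by rw [hu]; module
    rwa [h2] at h1
  have haumin : ∀ a s : ℝ, ‖a • u‖ ≤ ‖a • u + s • c‖ := by
    intro a s
    by_cases ha : a = 0
    · simp [ha]
    have h1 := humin (s / a)
    have : a • u + s • c = a • (u + (s / a) • c) := by
      rw [smul_add, smul_smul, mul_div_cancel₀ _ ha]
    rw [this, norm_smul, norm_smul]
    gcongr
  have hli : ∀ a b : ℝ, a • u + b • c = 0 → a = 0 ∧ b = 0 := by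
    intro a b hab
    have ha : a = 0 := by
      by_contra ha
      apply hv
      have : v = (s0 - b / a) • c := by
        have h2 : u = -(b / a) • c := by
          have : a⁻¹ • (a • u + b • c) = 0 := by rw [hab, smul_zero]
          rw [smul_add, smul_smul, smul_smul, inv_mul_cancel₀ ha, one_smul] at this
          rw [eq_neg_of_add_eq_zero_left this, neg_smul]
          congr 2; field_simp
        have h3 : v = u + s0 • c := by rw [hu]; abel
        rw [h3, h2]; module
      rw [this]
      exact Submodule.mem_span_singleton.2 ⟨_, rfl⟩
    refine ⟨ha, ?_⟩
    subst ha
    simpa [hc0] using hab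
  have hdec : ∀ p : V, ∃ a b : ℝ, a • u + b • c = p := by
    have h1 : LinearIndependent ℝ ![u, c] := LinearIndependent.pair_iff.2 hli
    have h2 := h1.span_eq_top_of_card_eq_finrank (by simp [hdim])
    intro p
    have h3 : p ∈ Submodule.span ℝ (Set.range ![u, c]) := by rw [h2]; trivial
    rw [Matrix.range_cons, Matrix.range_cons, Matrix.range_empty, Set.union_empty] at h3
    exact Submodule.mem_span_pair.1 h3
  have hconv : Convex ℝ {x : V | ∃ a b : ℝ, 0 < b ∧ a • u + b • c = x} := by
    rintro x ⟨a, b, hb, rfl⟩ y ⟨a', b', hb', rfl⟩ s t hs ht hst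
    refine ⟨s * a + t * a', s * b + t * b', ?_, by module⟩
    rcases hs.eq_or_lt with h | h
    · subst h
      have : t = 1 := by linarith
      subst this; simpa using hb'
    · positivity
  have hsub : S ⊆ {x : V | ∃ a b : ℝ, 0 < b ∧ a • u + b • c = x} := by
    intro p hp
    obtain ⟨a, b, rfl⟩ := hdec p
    refine ⟨a, b, ?_, rfl⟩
    by_contra hb
    push Not at hb
    have h1 : ‖a • u + b • c‖ = 1 := by simpa using hS hp
    have h2 : ‖a • u + (b - 1) • c‖ ≤ ρ := by
      have := hc hp
      rw [Metric.mem_closedBall, dist_eq_norm] at this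
      have h2 : a • u + b • c - c = a • u + (b - 1) • c := by module
      rwa [h2] at this
    have h3 := haumin a (b - 1)
    have hb1 : b - 1 < 0 := by linarith
    have hμ : 0 ≤ b / (b - 1) := div_nonneg_of_nonpos hb hb1.le
    have hμ1 : b / (b - 1) ≤ 1 := by
      rw [div_le_one_of_neg hb1]; linarith
    have h4 : a • u + b • c = (1 - b / (b - 1)) • (a • u)
        + (b / (b - 1)) • (a • u + (b - 1) • c) := by
      have : (b / (b - 1)) * (b - 1) = b := div_mul_cancel₀ _ hb1.ne
      rw [smul_add (b / (b - 1)), smul_smul (b / (b - 1)) (b - 1), this]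
      module
    have h5 : ‖a • u + b • c‖ ≤ (1 - b / (b - 1)) * ‖a • u‖
        + (b / (b - 1)) * ‖a • u + (b - 1) • c‖ := by
      calc ‖a • u + b • c‖ = ‖(1 - b / (b - 1)) • (a • u)
        + (b / (b - 1)) • (a • u + (b - 1) • c)‖ := by rw [← h4]
        _ ≤ _ := norm_add_le _ _
        _ = _ := by
          rw [norm_smul _ (a • u), norm_smul _ (a • u + _), Real.norm_of_nonneg hμ,
            Real.norm_of_nonneg (by linarith)]
    nlinarith
  obtain ⟨a, b, hb, hab⟩ := convexHull_min hsub hconv h0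
  exact hb.ne' (hli a b hab).2

/-- Every unit complex number is `exp (2 π i s)` with `s ∈ [0,1]`. -/
lemma exists_param (w : ℂ) (hw : ‖w‖ = 1) : ∃ s ∈ Set.Icc (0:ℝ) 1,
    w.re = Real.cos (2 * Real.pi * s) ∧ w.im = Real.sin (2 * Real.pi * s) := by
  have hw0 : w ≠ 0 := by rintro rfl; simp at hw
  have hc := Complex.cos_arg hw0
  have hs := Complex.sin_arg w
  rw [hw, div_one] at hc hs
  have hpi := Real.pi_pos
  have h1 := Complex.neg_pi_lt_arg w
  have h2 := Complex.arg_le_pi w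
  rcases le_total 0 w.arg with h | h
  · refine ⟨w.arg / (2 * Real.pi), ⟨by positivity, ?_⟩, ?_⟩
    · rw [div_le_one (by positivity)]; linarith
    · rw [mul_div_cancel₀ _ (by positivity)]; exact ⟨hc.symm, hs.symm⟩
  · refine ⟨w.arg / (2 * Real.pi) + 1, ⟨?_, ?_⟩, ?_⟩
    · have : -1 ≤ w.arg / (2 * Real.pi) := by
        rw [le_div_iff₀ (by positivity)]; linarith
      linarith
    · have : w.arg / (2 * Real.pi) ≤ 0 := div_nonpos_of_nonpos_of_nonneg h (by positivity)
      linarith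
    · rw [mul_add, mul_div_cancel₀ _ (by positivity), mul_one, Real.cos_add_two_pi,
        Real.sin_add_two_pi]; exact ⟨hc.symm, hs.symm⟩

/-- An injective loop in the unit sphere does not extend to a nowhere zero map of the plane. -/
lemma no_extension {V : Type u} [NormedAddCommGroup V]
    [NormedSpace ℝ V] (hdim : Module.finrank ℝ V = 2)
    (γ : ℝ → V) (hsphere : ∀ s ∈ Set.Icc (0:ℝ) 1, ‖γ s‖ = 1)
    (hinj : Set.InjOn γ (Set.Ico 0 1)) (g : C(ℂ, V)) (hg : ∀ w, g w ≠ 0)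
    (hgγ : ∀ s ∈ Set.Icc (0:ℝ) 1, g (Complex.exp ((2 * Real.pi * s : ℝ) * Complex.I)) = γ s) :
    False := by
  have hfin : FiniteDimensional ℝ V := Module.finite_of_finrank_pos (by omega)
  let e : V ≃L[ℝ] ℂ := ContinuousLinearEquiv.ofFinrankEq (by rw [hdim, Complex.finrank_real_complex])
  have hne : ∀ w, e (g w) ≠ 0 := fun w => by simpa using hg w
  obtain ⟨L, ⟨-, hL⟩, -⟩ := Complex.isCoveringMapOn_exp.existsUnique_continuousMap_lifts
    (A := ℂ) ⟨fun w => e (g w), by fun_prop⟩ (a₀ := 0) (e₀ := Complex.log (e (g 0)))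
    (by simpa using Complex.exp_log (hne 0)) (fun a => by simpa using hg a)
  have hL' : ∀ w, Complex.exp (L w) = e (g w) := fun w => congrFun hL w
  let z : ℝ → ℂ := fun s => Complex.exp ((2 * Real.pi * s : ℝ) * Complex.I)
  have hz : Continuous z := by fun_prop
  let θ : ℝ → ℝ := fun s => (L (z s)).im
  have hθ : Continuous θ := by fun_prop
  have hθinj : Set.InjOn θ (Set.Ico 0 1) := by
    intro s hs t ht hst
    apply hinj hs ht
    have hs' : s ∈ Set.Icc (0:ℝ) 1 := Set.Ico_subset_Icc_self hs
    have ht' : t ∈ Set.Icc (0:ℝ) 1 := Set.Ico_subset_Icc_self ht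
    have h1 : e (γ s) = Complex.exp (L (z s)) := by rw [hL', hgγ s hs']
    have h2 : e (γ t) = Complex.exp (L (z t)) := by rw [hL', hgγ t ht']
    set k : ℝ := Real.exp ((L (z s)).re - (L (z t)).re) with hk
    have h3 : e (γ s) = k • e (γ t) := by
      rw [h1, h2, Complex.real_smul, hk, Complex.ofReal_exp, ← Complex.exp_add]
      congr 1
      apply Complex.ext
      · simp
      · simpa using hst
    have h4 : γ s = k • γ t := by
      apply e.injective; rw [h3, map_smul]
    have h5 := congrArg norm h4
    rw [norm_smul, hsphere s hs', hsphere t ht', mul_one, Real.norm_of_nonneg (Real.exp_pos _).le] at h5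
    rw [h4, hk, ← h5, one_smul]
  have h01 : θ 0 = θ 1 := by
    have : z 0 = z 1 := by
      simp only [z]
      have := Complex.exp_two_pi_mul_I
      push_cast
      simp [this]
    simp only [θ, this]
  have hne2 : θ 0 ≠ θ (1/2) := fun h => by
    have := hθinj (by norm_num) (by norm_num) h
    norm_num at this
  set m := (θ 0 + θ (1/2)) / 2 with hm
  have ha : m ∈ Set.uIcc (θ 0) (θ (1/2)) := by
    rw [Set.mem_uIcc]; rcases le_total (θ 0) (θ (1/2)) with h | h
    · left; constructor <;> linarith
    · right; constructor <;> linarith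
  have hb : m ∈ Set.uIcc (θ (1/2)) (θ 1) := by
    rw [← h01, Set.uIcc_comm]; exact ha
  obtain ⟨x, hx, hxm⟩ := intermediate_value_uIcc hθ.continuousOn ha
  obtain ⟨y, hy, hym⟩ := intermediate_value_uIcc hθ.continuousOn hb
  rw [Set.uIcc_of_le (by norm_num)] at hx hy
  have hy1 : y ≠ 1 := by
    rintro rfl
    apply hne2; rw [← h01] at hym; linarith
  have hyl : y < 1 := lt_of_le_of_ne hy.2 hy1
  have hxy := hθinj ⟨hx.1, by linarith [hx.2]⟩ ⟨by linarith [hy.1], hyl⟩ (hxm.trans hym.symm)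
  have hx2 : x = 1/2 := le_antisymm hx.2 (by rw [hxy]; exact hy.1)
  subst hx2
  apply hne2; linarith

/-- Proposition 6.3: let `V` be a `2`-dimensional normed space,
`ι : V → Y` an isometric embedding into a metric space `Y`, and `γ` a Lipschitz loop
parametrizing the unit sphere `∂B_V` injectively on `[0,1)`.  Then every singular
Lipschitz disc `φ : D² → Y` bounding `ι ∘ γ` satisfies
`sup_{w ∈ D²} dist(φ(w), ι(∂B_V)) ≥ 1/J(V)`  (stated here as: any upper bound `R`
of the distances `dist(φ(w), ι(∂B_V))`, `w ∈ D²`, satisfies `1/J(V) ≤ R`). -/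
theorem fillrad_sphere_lower_bound {V : Type u} [NormedAddCommGroup V]
    [NormedSpace ℝ V] (hdim : Module.finrank ℝ V = 2)
    {Y : Type v} [MetricSpace Y] (ι : V → Y) (hι : Isometry ι)
    (γ : ℝ → V) (hγ : IsLipLoop γ)
    (hsphere : γ '' Set.Icc 0 1 = Metric.sphere (0:V) 1)
    (hinj : Set.InjOn γ (Set.Ico 0 1))
    (φ : ℝ × ℝ → Y) (hφ : BoundsLoop φ (fun s => ι (γ s)))
    (R : ℝ) (hR : ∀ w ∈ D2, Metric.infDist (φ w) (ι '' Metric.sphere (0:V) 1) ≤ R) :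
    1 / jungConstant V ≤ R := by
  classical
  have hfin : FiniteDimensional ℝ V := Module.finite_of_finrank_pos (by omega)
  obtain ⟨⟨K, hK⟩, hbd⟩ := hφ
  by_contra hlt
  push Not at hlt
  have hR0 : 0 ≤ R := Metric.infDist_nonneg.trans (hR (0, 0) (by simp [D2]))
  have hJ0 : 0 ≤ jungConstant V := Real.sInf_nonneg fun r hr => hr.1
  have hJ : 0 < jungConstant V := by
    rcases hJ0.eq_or_lt with h | h
    · rw [← h] at hlt; simp at hlt; linarith
    · exact h
  rw [lt_div_iff₀ hJ] at hlt
  -- choose r and R'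
  obtain ⟨r, R', hr0, hr, hRR', hrR'⟩ : ∃ r R' : ℝ, 0 ≤ r ∧
      (∀ A : Set V, EMetric.diam A ≤ 2 → ∃ c : V, A ⊆ Metric.closedBall c r) ∧
      R < R' ∧ R' * r < 1 := by
    have hne : {r : ℝ | 0 ≤ r ∧
        ∀ A : Set V, EMetric.diam A ≤ 2 → ∃ c : V, A ⊆ Metric.closedBall c r}.Nonempty := by
      by_contra h
      rw [Set.not_nonempty_iff_eq_empty] at h
      rw [jungConstant, h, Real.sInf_empty] at hJ
      exact lt_irrefl _ hJ
    obtain ⟨R', h1, h2⟩ : ∃ R' > R, R' * jungConstant V < 1 := by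
      refine ⟨(R + 1 / jungConstant V) / 2, ?_, ?_⟩
      · have : R < 1 / jungConstant V := by rwa [lt_div_iff₀ hJ]
        linarith
      · have : (R + 1 / jungConstant V) / 2 * jungConstant V = (R * jungConstant V + 1) / 2 := by
          field_simp
        linarith
    have hR'0 : 0 < R' := lt_of_le_of_lt hR0 h1
    have h3 : jungConstant V < 1 / R' := by rw [lt_div_iff₀ hR'0]; linarith
    obtain ⟨r, hr, hr2⟩ := exists_lt_of_csInf_lt hne h3
    refine ⟨r, R', hr.1, hr.2, h1, ?_⟩
    rw [lt_div_iff₀ hR'0] at hr2; linarith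
  have hR'0 : 0 < R' := lt_of_le_of_lt hR0 hRR'
  have hkey : ∀ y : Y, (0:V) ∉ convexHull ℝ {v : V | v ∈ Metric.sphere (0:V) 1 ∧ dist y (ι v) < R'} := by
    intro y
    set S := {v : V | v ∈ Metric.sphere (0:V) 1 ∧ dist y (ι v) < R'} with hS
    obtain ⟨c, hc⟩ := hr ((fun v => R'⁻¹ • v) '' S) (by
      apply EMetric.diam_le
      rintro _ ⟨p, hp, rfl⟩ _ ⟨q, hq, rfl⟩
      have h1 : dist p q ≤ 2 * R' := by
        rw [← hι.dist_eq]
        have := dist_triangle_left (ι p) (ι q) y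
        linarith [hp.2, hq.2]
      rw [edist_dist, dist_smul₀, Real.norm_of_nonneg (by positivity)]
      have : R'⁻¹ * dist p q ≤ 2 := by
        rw [inv_mul_le_iff₀ hR'0]; linarith
      calc _ ≤ ENNReal.ofReal 2 := ENNReal.ofReal_le_ofReal this
        _ = 2 := by simp)
    refine zero_notMem_convexHull hdim S (fun v hv => hv.1) (R' • c) (R' * r) hrR' ?_
    intro v hv
    have h1 := hc ⟨v, hv, rfl⟩
    rw [Metric.mem_closedBall] at h1 ⊢
    have : v = R' • (R'⁻¹ • v) := by rw [smul_smul, mul_inv_cancel₀ hR'0.ne', one_smul]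
    rw [this, dist_smul₀, Real.norm_of_nonneg hR'0.le]
    gcongr
  -- the radial retraction
  let ρ : ℂ → ℂ := fun w => ((max 1 ‖w‖)⁻¹ : ℝ) • w
  have hmax : ∀ w : ℂ, 0 < max 1 ‖w‖ := fun w => lt_of_lt_of_le one_pos (le_max_left _ _)
  have hρc : Continuous ρ :=
    (Continuous.inv₀ (by fun_prop) (fun w => (hmax w).ne')).smul continuous_id
  have hρn : ∀ w, ‖ρ w‖ ≤ 1 := by
    intro w
    simp only [ρ]
    rw [norm_smul, Real.norm_of_nonneg (inv_nonneg.2 (hmax w).le), inv_mul_le_iff₀ (hmax w), mul_one]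
    exact le_max_right _ _
  have hρout : ∀ w : ℂ, 1 ≤ ‖w‖ → ρ w = (‖w‖⁻¹ : ℝ) • w := fun w hw => by
    simp only [ρ, max_eq_right hw]
  have hρin : ∀ w : ℂ, ‖w‖ ≤ 1 → ρ w = w := fun w hw => by
    simp only [ρ, max_eq_left hw, inv_one, one_smul]
  have hD2 : ∀ w : ℂ, ‖w‖ ≤ 1 → (w.re, w.im) ∈ D2 := by
    intro w hw
    have := Complex.sq_norm w
    rw [Complex.normSq_apply] at this
    simp only [D2, Set.mem_setOf_eq]
    nlinarith [norm_nonneg w]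
  let Φ : ℂ → Y := fun w => φ ((ρ w).re, (ρ w).im)
  have hΦ : Continuous Φ :=
    hK.continuousOn.comp_continuous (by fun_prop) (fun w => hD2 _ (hρn w))
  have hsph : ∀ s ∈ Set.Icc (0:ℝ) 1, ‖γ s‖ = 1 := by
    intro s hs
    have : γ s ∈ Metric.sphere (0:V) 1 := hsphere ▸ ⟨s, hs, rfl⟩
    simpa using this
  have hΦexp : ∀ s ∈ Set.Icc (0:ℝ) 1,
      Φ (Complex.exp ((2 * Real.pi * s : ℝ) * Complex.I)) = ι (γ s) := by
    intro s hs
    have : ρ (Complex.exp ((2 * Real.pi * s : ℝ) * Complex.I)) = _ :=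
      hρin _ (Complex.norm_exp_ofReal_mul_I _).le
    simp only [Φ, this, Complex.exp_ofReal_mul_I_re, Complex.exp_ofReal_mul_I_im]
    exact hbd s hs
  let b : ℂ → V := fun w => Function.invFun ι (Φ w)
  have hinv : ∀ v, Function.invFun ι (ι v) = v := Function.leftInverse_invFun hι.injective
  -- on the unit circle
  have hcirc : ∀ w : ℂ, ‖w‖ = 1 → ι (b w) = Φ w ∧ b w ∈ Metric.sphere (0:V) 1 := by
    intro w hw
    obtain ⟨s, hs, hc, hsn⟩ := exists_param w hw
    have : Φ w = ι (γ s) := by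
      simp only [Φ, hρin w hw.le, hc, hsn]; exact hbd s hs
    simp only [b, this, hinv, true_and]
    simpa using hsph s hs
  have hnn : ∀ w : ℂ, w ≠ 0 → ‖(‖w‖⁻¹ : ℝ) • w‖ = 1 := by
    intro w hw
    rw [norm_smul, norm_inv, norm_norm, inv_mul_cancel₀ (norm_ne_zero_iff.2 hw)]
  have hΦout : ∀ w : ℂ, 1 ≤ ‖w‖ → Φ ((‖w‖⁻¹ : ℝ) • w) = Φ w := by
    intro w hw
    have hw0 : w ≠ 0 := by rintro rfl; simp at hw; linarith
    simp only [Φ]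
    rw [hρin _ (hnn w hw0).le, hρout w hw]
  let n : ℂ → ℂ := fun w => (‖w‖⁻¹ : ℝ) • w
  have hn : ContinuousOn n {0}ᶜ := by
    have h1 : ContinuousOn (fun w : ℂ => ‖w‖⁻¹) {0}ᶜ :=
      continuous_norm.continuousOn.inv₀ (fun w hw => norm_ne_zero_iff.2 hw)
    exact h1.smul continuousOn_id
  let t : ℂ → Set V := fun w => if 1 ≤ ‖w‖ then {b w} else
    convexHull ℝ {v : V | v ∈ Metric.sphere (0:V) 1 ∧ dist (Φ w) (ι v) < R'}
  have htconv : ∀ w, Convex ℝ (t w) := by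
    intro w
    by_cases h : 1 ≤ ‖w‖
    · simp only [t, if_pos h]; exact convex_singleton _
    · simp only [t, if_neg h]; exact convex_convexHull _ _
  have hloc : ∀ w : ℂ, ∃ U ∈ nhds w, ∃ g : ℂ → V, ContinuousOn g U ∧ ∀ y ∈ U, g y ∈ t y := by
    intro w
    by_cases h : 1 ≤ ‖w‖
    · have hw0 : w ≠ 0 := by rintro rfl; simp at h; linarith
      have hnhds : ({0}ᶜ : Set ℂ) ∈ nhds w := isOpen_compl_singleton.mem_nhds hw0
      refine ⟨{0}ᶜ ∩ {y | dist (Φ y) (Φ (n y)) < R'}, ?_, fun y => b (n y), ?_, ?_⟩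
      · refine Filter.inter_mem hnhds ?_
        have hcA : ContinuousAt (fun y => dist (Φ y) (Φ (n y))) w :=
          hΦ.continuousAt.dist (ContinuousAt.comp (g := Φ) (f := n) hΦ.continuousAt (hn.continuousAt hnhds))
        apply hcA.eventually_lt_const
        change dist (Φ w) (Φ (n w)) < R'
        rw [show Φ (n w) = Φ w from hΦout w h, dist_self]
        exact hR'0
      · rw [hι.isEmbedding.isInducing.continuousOn_iff]
        have : ContinuousOn (fun y => Φ (n y)) {0}ᶜ := hΦ.comp_continuousOn hn
        refine (this.mono Set.inter_subset_left).congr ?_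
        intro y hy
        exact (hcirc _ (hnn y hy.1)).1
      · rintro y ⟨hy0, hy⟩
        by_cases hy1 : 1 ≤ ‖y‖
        · simp only [t, if_pos hy1, Set.mem_singleton_iff, b]
          rw [show Φ (n y) = Φ y from hΦout y hy1]
        · simp only [t, if_neg hy1]
          apply subset_convexHull
          obtain ⟨h1, h2⟩ := hcirc (n y) (hnn y hy0)
          refine ⟨h2, ?_⟩
          rw [h1]; exact hy
    · push Not at h
      have h1 : Metric.infDist (Φ w) (ι '' Metric.sphere (0:V) 1) < R' :=
        (hR _ (hD2 _ (hρn w))).trans_lt hRR'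
      have hne : (ι '' Metric.sphere (0:V) 1).Nonempty := by
        rw [← hsphere]
        exact ⟨_, _, ⟨0, by norm_num, rfl⟩, rfl⟩
      obtain ⟨_, ⟨v, hv, rfl⟩, hvd⟩ := (Metric.infDist_lt_iff hne).1 h1
      refine ⟨{y | ‖y‖ < 1} ∩ {y | dist (Φ y) (ι v) < R'}, ?_, fun _ => v, continuousOn_const, ?_⟩
      · refine Filter.inter_mem ?_ ?_
        · exact (isOpen_lt continuous_norm continuous_const).mem_nhds h
        · exact (isOpen_lt (hΦ.dist continuous_const) continuous_const).mem_nhds hvd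
      · rintro y ⟨hy1, hy⟩
        have hy1' : ¬ 1 ≤ ‖y‖ := not_le.2 hy1
        simp only [t, if_neg hy1']
        exact subset_convexHull _ _ ⟨hv, hy⟩
  obtain ⟨g, hg⟩ := exists_continuous_forall_mem_convex_of_local htconv hloc
  refine no_extension hdim γ hsph hinj g ?_ ?_
  · intro w hw
    have h1 := hg w
    rw [hw] at h1
    by_cases h : 1 ≤ ‖w‖
    · simp only [t, if_pos h, Set.mem_singleton_iff] at h1
      have hw0 : w ≠ 0 := by rintro rfl; simp at h; linarith
      have h2 := (hcirc _ (hnn w hw0)).2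
      simp only [b, hΦout w h] at h2
      change 0 = Function.invFun ι (Φ w) at h1
      rw [← h1] at h2
      simp at h2
    · simp only [t, if_neg h] at h1
      exact hkey _ h1
  · intro s hs
    have h1 := hg (Complex.exp ((2 * Real.pi * s : ℝ) * Complex.I))
    have h2 := (Complex.norm_exp_ofReal_mul_I (2 * Real.pi * s)).ge
    simp only [t, if_pos h2, Set.mem_singleton_iff] at h1
    rw [h1]
    simp only [b]
    rw [hΦexp s hs, hinv]

end SharpIsop
end

section
/- For every 2-dimensional real normed space V one has J(V)·length(∂B_V) ≤ 32/3; equivalently, α_V := 1/(J(V)·length(∂B_V)) ≥ 3/32. Moreover, for V = ℝ² with the supremum norm one has J(V) = 1 and length(∂B_V) = 8, so α_V = 1/8. Consequently, the infimum ᾱ₀ of α_V over all 2-dimensional real normed spaces V satisfies 3/32 ≤ ᾱ₀ ≤ 1/8. -/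
open scoped NNReal ENNReal
open MeasureTheory Filter

universe u v

namespace SharpIsop

/-- `γ` is an injective Lipschitz loop parametrizing the unit sphere `∂B_V`. -/
def SphereParam (V : Type u) [NormedAddCommGroup V] [NormedSpace ℝ V]
    (γ : ℝ → V) : Prop :=
  IsLipLoop γ ∧ Set.InjOn γ (Set.Ico 0 1) ∧ γ '' Set.Icc 0 1 = Metric.sphere (0:V) 1

/-- The set of values `α_V = 1/(J(V)·length(∂B_V))` over all `2`-dimensional real
normed spaces `V` (with the unit sphere length computed from any injective Lipschitz
parametrization). -/
def alphaSet : Set ℝ :=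
  {a | ∃ (V : Type) (nV : NormedAddCommGroup V),
    letI := nV
    ∃ sV : NormedSpace ℝ V,
      letI := sV
      Module.finrank ℝ V = 2 ∧ ∃ γ : ℝ → V, SphereParam V γ ∧
        a = 1 / (jungConstant V * loopLength γ)}

lemma var_mono {f : ℝ → ℝ} {a b : ℝ} (hab : a ≤ b) (hf : MonotoneOn f (Set.Icc a b)) :
    eVariationOn f (Set.Icc a b) ≤ ENNReal.ofReal (f b - f a) := by
  have := hf.eVariationOn_le (Set.left_mem_Icc.2 hab) (Set.right_mem_Icc.2 hab)
  simpa using this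

lemma var_neg (f : ℝ → ℝ) (s : Set ℝ) : eVariationOn (fun x => - f x) s = eVariationOn f s := by
  simp [eVariationOn, edist_neg_neg]

lemma var_anti {f : ℝ → ℝ} {a b : ℝ} (hab : a ≤ b) (hf : AntitoneOn f (Set.Icc a b)) :
    eVariationOn f (Set.Icc a b) ≤ ENNReal.ofReal (f a - f b) := by
  rw [← var_neg]
  refine (var_mono hab hf.neg).trans (le_of_eq ?_)
  congr 1; ring

lemma var_split {X : Type*} [PseudoEMetricSpace X] (f : ℝ → X) {a b c : ℝ} (hab : a ≤ b)
    (hbc : b ≤ c) :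
    eVariationOn f (Set.Icc a c) =
      eVariationOn f (Set.Icc a b) + eVariationOn f (Set.Icc b c) := by
  have := eVariationOn.Icc_add_Icc f (s := Set.univ) hab hbc trivial
  simpa using this.symm

lemma ivt_ex {f : ℝ → ℝ} (hf : ContinuousOn f (Set.Icc 0 1)) {u v t : ℝ} (h0 : 0 ≤ u)
    (huv : u ≤ v) (h1 : v ≤ 1) (h : (f u < t ∧ t < f v) ∨ (f v < t ∧ t < f u)) :
    ∃ s, u < s ∧ s < v ∧ f s = t := by
  have hc : ContinuousOn f (Set.Icc u v) := hf.mono (Set.Icc_subset_Icc h0 h1)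
  rcases h with h | h
  · obtain ⟨s, hs, rfl⟩ := intermediate_value_Ioo huv hc h
    exact ⟨s, hs.1, hs.2, rfl⟩
  · obtain ⟨s, hs, rfl⟩ := intermediate_value_Ioo' huv hc h
    exact ⟨s, hs.1, hs.2, rfl⟩

lemma var_le_aux {f : ℝ → ℝ} (hf : ContinuousOn f (Set.Icc 0 1))
    (hb : ∀ s ∈ Set.Icc (0:ℝ) 1, |f s| ≤ 1) (h01 : f 0 = f 1)
    (h3 : ∀ u v w, 0 ≤ u → u < v → v < w → w < 1 → f u = f v → f v = f w → |f u| < 1 → False)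
    {s0 s1 : ℝ} (hs0 : 0 ≤ s0) (hs : s0 ≤ s1) (hs1 : s1 < 1) (e0 : f s0 = -1) (e1 : f s1 = 1) :
    eVariationOn f (Set.Icc 0 1) ≤ ENNReal.ofReal 4 := by
  have hB : ∀ s, 0 ≤ s → s ≤ 1 → -1 ≤ f s ∧ f s ≤ 1 := fun s h h' => abs_le.1 (hb s ⟨h, h'⟩)
  have m1 : AntitoneOn f (Set.Icc 0 s0) := by
    intro u hu v hv huv
    by_contra! hlt
    obtain ⟨t, ht1, ht2⟩ := exists_between hlt
    have bu := hB u hu.1 (by linarith [hu.2])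
    have bv := hB v hv.1 (by linarith [hv.2])
    obtain ⟨a, ha1, ha2, ha⟩ := ivt_ex hf hu.1 huv (by linarith [hv.2]) (Or.inl ⟨ht1, ht2⟩)
    obtain ⟨b, hb1, hb2, hb⟩ := ivt_ex hf hv.1 hv.2 (by linarith) (t := t)
      (Or.inr ⟨by linarith, ht2⟩)
    obtain ⟨c, hc1, hc2, hc⟩ := ivt_ex hf hs0 hs (by linarith) (t := t)
      (Or.inl ⟨by linarith, by linarith⟩)
    exact h3 a b c (by linarith [hu.1]) (by linarith) (by linarith) (by linarith) (by linarith)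
      (by linarith) (abs_lt.2 ⟨by linarith, by linarith⟩)
  have m2 : MonotoneOn f (Set.Icc s0 s1) := by
    intro u hu v hv huv
    by_contra! hlt
    obtain ⟨t, ht1, ht2⟩ := exists_between hlt
    have bu := hB u (by linarith [hu.1]) (by linarith [hu.2])
    have bv := hB v (by linarith [hv.1]) (by linarith [hv.2])
    obtain ⟨a, ha1, ha2, ha⟩ := ivt_ex hf hs0 hu.1 (by linarith [hu.2]) (t := t)
      (Or.inl ⟨by linarith, by linarith⟩)
    obtain ⟨b, hb1, hb2, hb⟩ := ivt_ex hf (by linarith [hu.1]) huv (by linarith [hv.2]) (t := t)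
      (Or.inr ⟨by linarith, by linarith⟩)
    obtain ⟨c, hc1, hc2, hc⟩ := ivt_ex hf (by linarith [hv.1]) hv.2 (by linarith) (t := t)
      (Or.inl ⟨by linarith, by linarith⟩)
    exact h3 a b c (by linarith [hu.1]) (by linarith) (by linarith) (by linarith) (by linarith)
      (by linarith) (abs_lt.2 ⟨by linarith, by linarith⟩)
  have m3 : AntitoneOn f (Set.Icc s1 1) := by
    intro u hu v hv huv
    by_contra! hlt
    obtain ⟨t, ht1, ht2⟩ := exists_between hlt
    have bu := hB u (by linarith [hu.1]) (by linarith [hu.2])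
    have bv := hB v (by linarith [hv.1]) (by linarith [hv.2])
    obtain ⟨a, ha1, ha2, ha⟩ := ivt_ex hf hs0 hs (by linarith) (t := t)
      (Or.inl ⟨by linarith, by linarith⟩)
    obtain ⟨b, hb1, hb2, hb⟩ := ivt_ex hf (by linarith) hu.1 hu.2 (t := t)
      (Or.inr ⟨by linarith, by linarith⟩)
    obtain ⟨c, hc1, hc2, hc⟩ := ivt_ex hf (by linarith [hu.1]) huv hv.2 (t := t)
      (Or.inl ⟨by linarith, by linarith⟩)
    exact h3 a b c (by linarith [hu.1]) (by linarith) (by linarith) (by linarith [hv.2])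
      (by linarith) (by linarith) (abs_lt.2 ⟨by linarith, by linarith⟩)
  have b0 := hB 0 (by norm_num) (by norm_num)
  rw [var_split f hs0 (by linarith : s0 ≤ 1), var_split f hs hs1.le]
  refine (add_le_add (var_anti hs0 m1) (add_le_add (var_mono hs m2) (var_anti hs1.le m3))).trans ?_
  rw [← ENNReal.ofReal_add (by linarith) (by linarith),
    ← ENNReal.ofReal_add (by linarith) (by linarith)]
  exact ENNReal.ofReal_le_ofReal (by linarith)

lemma var_le {f : ℝ → ℝ} (hf : ContinuousOn f (Set.Icc 0 1))
    (hb : ∀ s ∈ Set.Icc (0:ℝ) 1, |f s| ≤ 1) (h01 : f 0 = f 1)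
    (h3 : ∀ u v w, 0 ≤ u → u < v → v < w → w < 1 → f u = f v → f v = f w → |f u| < 1 → False)
    {s0 s1 : ℝ} (hs0 : 0 ≤ s0) (hs0' : s0 < 1) (hs1 : 0 ≤ s1) (hs1' : s1 < 1)
    (e0 : f s0 = -1) (e1 : f s1 = 1) :
    eVariationOn f (Set.Icc 0 1) ≤ ENNReal.ofReal 4 := by
  rcases le_total s0 s1 with h | h
  · exact var_le_aux hf hb h01 h3 hs0 h hs1' e0 e1
  · rw [← var_neg]
    refine var_le_aux hf.neg (by simpa using hb) (by simpa using h01) ?_ hs1 h hs0' (by simp [e1])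
      (by simp [e0])
    intro u v w hu huv hvw hw a b c
    exact h3 u v w hu huv hvw hw (by simpa using a) (by simpa using b) (by simpa using c)

lemma var_add {X : Type*} [PseudoEMetricSpace X] (g : ℝ → X) (f1 f2 : ℝ → ℝ) (s : Set ℝ)
    (h : ∀ u v, edist (g u) (g v) ≤ edist (f1 u) (f1 v) + edist (f2 u) (f2 v)) :
    eVariationOn g s ≤ eVariationOn f1 s + eVariationOn f2 s := by
  refine iSup_le ?_
  rintro ⟨n, u, hu, us⟩
  calc _ ≤ ∑ i ∈ Finset.range n, (edist (f1 (u (i+1))) (f1 (u i)) + edist (f2 (u (i+1))) (f2 (u i))) :=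
        Finset.sum_le_sum fun i _ => h _ _
    _ ≤ _ := by
      rw [Finset.sum_add_distrib]
      exact add_le_add (eVariationOn.sum_le hu us) (eVariationOn.sum_le hu us)

section
variable {V : Type*} [NormedAddCommGroup V] [NormedSpace ℝ V]

lemma no_two {x y : V} (hx : ‖x‖ = 1) {t b c l : ℝ} (ht : |t| < 1) (hl : 0 < l) (hl1 : l < 1)
    (hc : c = l * b) (h1 : ‖t • x + b • y‖ = 1) (h2 : ‖t • x + c • y‖ = 1) : False := by
  have : t • x + c • y = ((1 - l) * t) • x + l • (t • x + b • y) := by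
    subst hc; module
  have h4 := norm_add_le (((1 - l) * t) • x) (l • (t • x + b • y))
  rw [← this, h2, norm_smul, norm_smul, hx, h1, Real.norm_eq_abs, Real.norm_eq_abs, abs_mul,
    abs_of_pos hl, abs_of_pos (by linarith : 0 < 1 - l)] at h4
  nlinarith

lemma no_two' {x y : V} (hx : ‖x‖ = 1) {t b c : ℝ} (ht : |t| < 1)
    (hne : b ≠ c) (hbc : 0 < b * c) (h1 : ‖t • x + b • y‖ = 1) (h2 : ‖t • x + c • y‖ = 1) :
    False := by
  have key : ∀ b c : ℝ, 0 < c / b → c / b < 1 → ‖t • x + b • y‖ = 1 → ‖t • x + c • y‖ = 1 → False := by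
    intro b c h h' hb hc
    have hb0 : b ≠ 0 := by rintro rfl; simp at h
    exact no_two hx ht h h' (by field_simp) hb hc
  have hb0 : b ≠ 0 := by rintro rfl; simp at hbc
  have hc0 : c ≠ 0 := by rintro rfl; simp at hbc
  have hp : 0 < c / b := by
    have : c / b = b * c / b ^ 2 := by field_simp
    rw [this]; positivity
  rcases lt_trichotomy (c / b) 1 with h | h | h
  · exact key b c hp h h1 h2
  · rw [div_eq_one_iff_eq hb0] at h; exact hne h.symm
  · refine key c b ?_ ?_ h2 h1
    · rw [← inv_div]; positivity
    · rw [← inv_div]; exact inv_lt_one_of_one_lt₀ h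

lemma no_three {x y : V} (hx : ‖x‖ = 1) {t a b c : ℝ} (ht : |t| < 1)
    (hab : a ≠ b) (hbc : b ≠ c) (hac : a ≠ c) (h1 : ‖t • x + a • y‖ = 1)
    (h2 : ‖t • x + b • y‖ = 1) (h3 : ‖t • x + c • y‖ = 1) : False := by
  have nz : ∀ b : ℝ, ‖t • x + b • y‖ = 1 → b ≠ 0 := by
    rintro b hb rfl
    simp [norm_smul, hx] at hb; linarith
  have ha := nz a h1
  have hb := nz b h2
  have hc := nz c h3
  rcases ha.lt_or_gt with ha | ha <;> rcases hb.lt_or_gt with hb | hb <;>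
    rcases hc.lt_or_gt with hc | hc
  all_goals first
    | exact no_two' hx ht hab (by nlinarith) h1 h2
    | exact no_two' hx ht hbc (by nlinarith) h2 h3
    | exact no_two' hx ht hac (by nlinarith) h1 h3

lemma auerbach (h : Module.finrank ℝ V = 2) : ∃ (x y : V) (a b : V →L[ℝ] ℝ),
    ‖x‖ = 1 ∧ ‖y‖ = 1 ∧ (∀ v, |a v| ≤ ‖v‖) ∧ (∀ v, |b v| ≤ ‖v‖) ∧
    (∀ v, v = a v • x + b v • y) ∧ a x = 1 ∧ b y = 1 := by
  haveI : FiniteDimensional ℝ V := Module.finite_of_finrank_eq_succ h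
  haveI : ProperSpace V := FiniteDimensional.proper ℝ V
  let L : V ≃L[ℝ] (ℝ × ℝ) := ContinuousLinearEquiv.ofFinrankEq (by simp [h])
  let D : V × V → ℝ := fun p => (L p.1).1 * (L p.2).2 - (L p.1).2 * (L p.2).1
  have hD : Continuous D := by fun_prop
  obtain ⟨⟨x, y⟩, hxy, hmax⟩ := ((isCompact_closedBall (0:V) 1).prod
    (isCompact_closedBall (0:V) 1)).exists_isMaxOn ⟨(0, 0), by simp⟩ hD.continuousOn
  simp only [Set.mem_prod, mem_closedBall_zero_iff] at hxy
  have hm : ∀ v w : V, ‖v‖ ≤ 1 → ‖w‖ ≤ 1 → D (v, w) ≤ D (x, y) := fun v w hv hw =>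
    hmax (a := (v, w)) (by simp [hv, hw])
  have hpos : 0 < D (x, y) := by
    let e := L.symm (1, 0)
    let f := L.symm (0, 1)
    have he : 0 < ‖e‖ := by
      rw [norm_pos_iff]; intro h0
      have : L e = (1, 0) := by simp [e]
      rw [h0] at this; simp [Prod.ext_iff] at this
    have hf : 0 < ‖f‖ := by
      rw [norm_pos_iff]; intro h0
      have : L f = (0, 1) := by simp [f]
      rw [h0] at this; simp [Prod.ext_iff] at this
    have := hm (‖e‖⁻¹ • e) (‖f‖⁻¹ • f) (by rw [norm_smul]; simp [he.ne'])
      (by rw [norm_smul]; simp [hf.ne'])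
    refine lt_of_lt_of_le ?_ this
    simp only [D, map_smul, e, f, ContinuousLinearEquiv.apply_symm_apply]
    simp only [Prod.smul_fst, Prod.smul_snd, smul_eq_mul, mul_one, mul_zero, sub_zero]
    positivity
  set d := D (x, y) with hd
  have hd' : d = (L x).1 * (L y).2 - (L x).2 * (L y).1 := rfl
  let p1 : V →L[ℝ] ℝ := (ContinuousLinearMap.fst ℝ ℝ ℝ).comp L.toContinuousLinearMap
  let p2 : V →L[ℝ] ℝ := (ContinuousLinearMap.snd ℝ ℝ ℝ).comp L.toContinuousLinearMap
  let a : V →L[ℝ] ℝ := d⁻¹ • ((L y).2 • p1 - (L y).1 • p2)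
  let b : V →L[ℝ] ℝ := d⁻¹ • ((L x).1 • p2 - (L x).2 • p1)
  have ha : ∀ v, a v = d⁻¹ * D (v, y) := fun v => by simp [a, p1, p2, D]; left; ring
  have hb : ∀ v, b v = d⁻¹ * D (x, v) := fun v => by simp [b, p1, p2, D]
  have bd : ∀ a : V →L[ℝ] ℝ, (∀ v, ‖v‖ ≤ 1 → a v ≤ 1) → ∀ v, |a v| ≤ ‖v‖ := by
    intro a ha v
    have h1 : ∀ v, a v ≤ ‖v‖ := by
      intro v
      rcases eq_or_ne v 0 with rfl | hv
      · simp
      have hv' := norm_pos_iff.2 hv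
      have := ha (‖v‖⁻¹ • v) (by rw [norm_smul]; simp [hv])
      rw [map_smul, smul_eq_mul, inv_mul_le_iff₀ hv'] at this
      linarith
    have h2 := h1 (-v)
    rw [map_neg, norm_neg] at h2
    exact abs_le.2 ⟨by linarith, h1 v⟩
  have hA := bd a fun v hv => by
    rw [ha, inv_mul_le_iff₀ hpos, mul_one]; exact hm _ _ hv hxy.2
  have hB := bd b fun v hv => by
    rw [hb, inv_mul_le_iff₀ hpos, mul_one]; exact hm _ _ hxy.1 hv
  have ax : a x = 1 := by rw [ha]; exact inv_mul_cancel₀ hpos.ne'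
  have bY : b y = 1 := by rw [hb]; exact inv_mul_cancel₀ hpos.ne'
  refine ⟨x, y, a, b, ?_, ?_, hA, hB, ?_, ax, bY⟩
  · have := hA x; rw [ax] at this; simp at this; linarith [hxy.1]
  · have := hB y; rw [bY] at this; simp at this; linarith [hxy.2]
  · intro v
    apply L.injective
    rw [ha, hb]
    have hne : d ≠ 0 := hpos.ne'
    ext
    · simp [D]; field_simp; rw [hd']; ring
    · simp [D]; field_simp; rw [hd']; ring

lemma coord_var {γ : ℝ → V} (hγ : SphereParam V γ) {x y : V} {a b : V →L[ℝ] ℝ}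
    (hx : ‖x‖ = 1) (ha : ∀ v, |a v| ≤ ‖v‖) (hv : ∀ v, v = a v • x + b v • y) (ax : a x = 1) :
    eVariationOn (fun s => a (γ s)) (Set.Icc 0 1) ≤ ENNReal.ofReal 4 := by
  obtain ⟨⟨⟨K, hK⟩, h01⟩, hinj, himg⟩ := hγ
  have hn : ∀ s ∈ Set.Icc (0:ℝ) 1, ‖γ s‖ = 1 := fun s hs => by
    have : γ s ∈ Metric.sphere (0:V) 1 := himg ▸ ⟨s, hs, rfl⟩
    simpa using this
  have ex : ∀ v : V, ‖v‖ = 1 → ∃ s, 0 ≤ s ∧ s < 1 ∧ γ s = v := by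
    intro v hv
    have : v ∈ γ '' Set.Icc 0 1 := by rw [himg]; simpa using hv
    obtain ⟨s, hs, rfl⟩ := this
    rcases hs.2.lt_or_eq with h | h
    · exact ⟨s, hs.1, h, rfl⟩
    · exact ⟨0, le_rfl, one_pos, by rw [h, h01]⟩
  obtain ⟨s1, h1, h1', e1⟩ := ex x hx
  obtain ⟨s0, h0, h0', e0⟩ := ex (-x) (by simpa using hx)
  refine var_le (a.continuous.comp_continuousOn hK.continuousOn)
    (fun s hs => (ha _).trans (hn s hs).le) (by simp [h01]) ?_ h0 h0' h1 h1'
    (by simp [e0, ax]) (by simp [e1, ax])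
  intro u v w hu huv hvw hw e e' hlt
  have key : ∀ p q, 0 ≤ p → p < q → q < 1 → a (γ p) = a (γ q) → b (γ p) ≠ b (γ q) := by
    intro p q hp hpq hq he hb
    have : γ p = γ q := by rw [hv (γ p), hv (γ q), he, hb]
    exact hpq.ne (hinj ⟨hp, by linarith⟩ ⟨by linarith, hq⟩ this)
  have nu := hn u ⟨hu, by linarith⟩
  have nv := hn v ⟨by linarith, by linarith⟩
  have nw := hn w ⟨by linarith, by linarith⟩
  rw [hv (γ u)] at nu
  rw [hv (γ v), ← e] at nv
  rw [hv (γ w), ← e', ← e] at nw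
  exact no_three hx hlt (key u v hu huv (by linarith) e) (key v w (by linarith) hvw hw e')
    (key u w hu (by linarith) hw (e.trans e')) nu nv nw

lemma length_le (h : Module.finrank ℝ V = 2) {γ : ℝ → V} (hγ : SphereParam V γ) :
    eVariationOn γ (Set.Icc 0 1) ≤ ENNReal.ofReal 8 := by
  obtain ⟨x, y, a, b, hx, hy, ha, hb, hv, ax, bY⟩ := auerbach h
  have h1 := coord_var hγ hx ha hv ax
  have h2 := coord_var (a := b) (b := a) hγ hy hb (fun v => by rw [add_comm]; exact hv v) bY
  have := var_add γ (fun s => a (γ s)) (fun s => b (γ s)) (Set.Icc 0 1) (by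
    intro u v
    rw [edist_dist, edist_dist, edist_dist, ← ENNReal.ofReal_add dist_nonneg dist_nonneg]
    apply ENNReal.ofReal_le_ofReal
    rw [dist_eq_norm, Real.dist_eq, Real.dist_eq]
    conv_lhs => rw [hv (γ u - γ v)]
    refine (norm_add_le _ _).trans ?_
    rw [norm_smul, norm_smul, hx, hy]
    simp)
  refine this.trans ((add_le_add h1 h2).trans ?_)
  rw [← ENNReal.ofReal_add (by norm_num) (by norm_num)]
  norm_num
end

section
variable {V : Type*} [NormedAddCommGroup V] [NormedSpace ℝ V]

lemma dist_le_of_diam {A : Set V} (hA : EMetric.diam A ≤ 2) {x y : V} (hx : x ∈ A) (hy : y ∈ A) :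
    ‖x - y‖ ≤ 2 := by
  have := Metric.edist_le_of_ediam_le hx hy hA
  rw [edist_dist, dist_eq_norm] at this
  have h2 : (2 : ℝ≥0∞) = ENNReal.ofReal 2 := by norm_num
  rw [h2] at this
  exact (ENNReal.ofReal_le_ofReal_iff (by norm_num)).1 this

lemma three_ball {p q r : V} (h1 : ‖p - q‖ ≤ 2) (h2 : ‖p - r‖ ≤ 2) :
    ‖(1/3 : ℝ) • (p + q + r) - p‖ ≤ 4/3 := by
  have : (1/3 : ℝ) • (p + q + r) - p = -((1/3 : ℝ) • ((p - q) + (p - r))) := by module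
  rw [this, norm_neg, norm_smul]
  have := norm_add_le (p - q) (p - r)
  norm_num
  linarith

lemma jung_mem (h : Module.finrank ℝ V = 2) (A : Set V) (hA : EMetric.diam A ≤ 2) :
    ∃ c : V, A ⊆ Metric.closedBall c (4/3) := by
  classical
  have : FiniteDimensional ℝ V := Module.finite_of_finrank_eq_succ h
  have : ProperSpace V := FiniteDimensional.proper ℝ V
  have key := Convex.helly_theorem_compact' (𝕜 := ℝ) (F := fun a : A => Metric.closedBall (a : V) (4/3))
    (fun a => convex_closedBall _ _) (fun a => isCompact_closedBall _ _) ?_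
  · obtain ⟨c, hc⟩ := key
    refine ⟨c, fun a ha => ?_⟩
    have := Set.mem_iInter.1 hc ⟨a, ha⟩
    rw [Metric.mem_closedBall, dist_comm] at this
    exact this
  intro I hI
  rw [h] at hI
  have ex : I = ∅ ∨ ∃ p q r : A, I ⊆ {p, q, r} := by
    rcases I.eq_empty_or_nonempty with h | ⟨p, hp⟩
    · exact Or.inl h
    right
    rcases (I.erase p).eq_empty_or_nonempty with h | ⟨q, hq⟩
    · refine ⟨p, p, p, fun z hz => ?_⟩
      by_contra hne
      have : z ∈ I.erase p := Finset.mem_erase.2 ⟨by simpa using hne, hz⟩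
      simp [h] at this
    rcases ((I.erase p).erase q).eq_empty_or_nonempty with h | ⟨r, hr⟩
    · refine ⟨p, q, q, fun z hz => ?_⟩
      by_contra hne
      simp at hne
      have : z ∈ (I.erase p).erase q := by simp [hne, hz]
      simp [h] at this
    · refine ⟨p, q, r, fun z hz => ?_⟩
      by_contra hne
      simp at hne
      have hz' : z ∈ ((I.erase p).erase q).erase r := by simp [hne, hz]
      have := Finset.card_pos.2 ⟨z, hz'⟩
      rw [Finset.card_erase_of_mem hr, Finset.card_erase_of_mem hq, Finset.card_erase_of_mem hp] at this
      omega
  rcases ex with rfl | ⟨p, q, r, hs⟩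
  · simp
  refine ⟨(1/3 : ℝ) • ((p:V) + q + r), ?_⟩
  simp only [Set.mem_iInter]
  intro i hi
  have d : ∀ x y : A, ‖(x:V) - y‖ ≤ 2 := fun x y => dist_le_of_diam hA x.2 y.2
  have := hs hi
  simp only [Finset.mem_insert, Finset.mem_singleton] at this
  rw [mem_closedBall_iff_norm]
  rcases this with rfl | rfl | rfl
  · exact three_ball (d _ _) (d _ _)
  · have := three_ball (d i p) (d i r)
    rwa [show (i:V) + p + r = p + i + r by abel] at this
  · have := three_ball (d i p) (d i q)
    rwa [show (i:V) + p + q = p + q + i by abel] at this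

lemma one_le_of_mem [Nontrivial V] {r : ℝ} (hr : ∀ A : Set V, EMetric.diam A ≤ 2 → ∃ c : V, A ⊆ Metric.closedBall c r) :
    1 ≤ r := by
  obtain ⟨x, hx⟩ := exists_norm_eq V (zero_le_one' ℝ)
  have hd : ‖x - -x‖ = 2 := by
    rw [sub_neg_eq_add, ← two_smul ℝ x, norm_smul, hx]; norm_num
  obtain ⟨c, hc⟩ := hr {x, -x} (by
    have := Metric.ediam_pair (x := x) (y := -x)
    refine le_of_eq (this.trans ?_)
    rw [edist_dist, dist_eq_norm, hd]; norm_num)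
  have h1 := hc (Set.mem_insert _ _)
  have h2 := hc (Set.mem_insert_of_mem _ (Set.mem_singleton _))
  have := dist_triangle_right x (-x) c
  rw [Metric.mem_closedBall] at h1 h2
  rw [dist_eq_norm x (-x), hd] at this
  linarith

lemma jung_le (h : Module.finrank ℝ V = 2) : jungConstant V ≤ 4/3 :=
  csInf_le ⟨0, fun _ h => h.1⟩ ⟨by norm_num, jung_mem h⟩

lemma le_jung (h : Module.finrank ℝ V = 2) : 1 ≤ jungConstant V := by
  have : Nontrivial V := Module.nontrivial_of_finrank_pos (R := ℝ) (by omega)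
  exact le_csInf ⟨4/3, by norm_num, jung_mem h⟩ fun r hr => one_le_of_mem hr.2

lemma loopLength_le (h : Module.finrank ℝ V = 2) {γ : ℝ → V} (hγ : SphereParam V γ) :
    loopLength γ ≤ 8 := ENNReal.toReal_le_of_le_ofReal (by norm_num) (length_le h hγ)

lemma loopLength_pos (h : Module.finrank ℝ V = 2) {γ : ℝ → V} (hγ : SphereParam V γ) :
    0 < loopLength γ := by
  have : Nontrivial V := Module.nontrivial_of_finrank_pos (R := ℝ) (by omega)
  refine ENNReal.toReal_pos ?_ (ne_top_of_le_ne_top ENNReal.ofReal_ne_top (length_le h hγ))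
  intro h0
  rw [eVariationOn.eq_zero_iff] at h0
  obtain ⟨x, hx⟩ := exists_norm_eq V (zero_le_one' ℝ)
  have himg := hγ.2.2
  have h1 : x ∈ γ '' Set.Icc 0 1 := by rw [himg]; simpa using hx
  have h2 : -x ∈ γ '' Set.Icc 0 1 := by rw [himg]; simpa using hx
  obtain ⟨s, hs, e⟩ := h1
  obtain ⟨t, ht, e'⟩ := h2
  have := h0 s hs t ht
  rw [edist_eq_zero, e, e'] at this
  have h3 : (2:ℝ) • x = 0 := by
    rw [two_smul]; nth_rewrite 1 [this]; simp
  have h4 : x = 0 := (smul_eq_zero.1 h3).resolve_left (by norm_num)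
  simp [h4] at hx

lemma prod_le (h : Module.finrank ℝ V = 2) {γ : ℝ → V} (hγ : SphereParam V γ) :
    jungConstant V * loopLength γ ≤ 32 / 3 := by
  have h1 := jung_le h
  have h2 := le_jung h
  have h3 := loopLength_le h hγ
  have h4 := loopLength_pos h hγ
  nlinarith
end

lemma one_dim (S : Set ℝ) (hS : ∀ x ∈ S, ∀ y ∈ S, |x - y| ≤ 2) : ∃ c, ∀ x ∈ S, |x - c| ≤ 1 := by
  rcases S.eq_empty_or_nonempty with rfl | hne
  · simp
  refine ⟨sInf S + 1, fun x hx => ?_⟩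
  have hb : ∀ y ∈ S, x - 2 ≤ y := fun y hy => by linarith [(abs_le.1 (hS x hx y hy)).2]
  have h1 : x - 2 ≤ sInf S := le_csInf hne hb
  have h2 : sInf S ≤ x := csInf_le ⟨x - 2, hb⟩ hx
  rw [abs_le]; constructor <;> linarith

lemma finrank_prod : Module.finrank ℝ (ℝ × ℝ) = 2 := by simp

lemma jung_prod : jungConstant (ℝ × ℝ) = 1 := by
  refine le_antisymm ?_ (le_jung finrank_prod)
  refine csInf_le ⟨0, fun _ h => h.1⟩ ⟨by norm_num, fun A hA => ?_⟩
  have d : ∀ x ∈ A, ∀ y ∈ A, |x.1 - y.1| ≤ 2 ∧ |x.2 - y.2| ≤ 2 := by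
    intro x hx y hy
    have := dist_le_of_diam hA hx hy
    rw [Prod.norm_def] at this
    simpa using this
  obtain ⟨c, hc⟩ := one_dim (Prod.fst '' A) (by
    rintro _ ⟨x, hx, rfl⟩ _ ⟨y, hy, rfl⟩; exact (d x hx y hy).1)
  obtain ⟨c', hc'⟩ := one_dim (Prod.snd '' A) (by
    rintro _ ⟨x, hx, rfl⟩ _ ⟨y, hy, rfl⟩; exact (d x hx y hy).2)
  refine ⟨(c, c'), fun x hx => ?_⟩
  rw [mem_closedBall_iff_norm, Prod.norm_def]
  simpa using ⟨hc _ ⟨x, hx, rfl⟩, hc' _ ⟨x, hx, rfl⟩⟩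

def corner : Fin 4 → ℝ × ℝ := ![(1, 1), (1, -1), (-1, 1), (-1, -1)]

lemma corner_dist {i j : Fin 4} (h : i ≠ j) : edist (corner i) (corner j) = 2 := by
  have : dist (corner i) (corner j) = 2 := by
    revert h
    fin_cases i <;> fin_cases j <;> simp [corner, Prod.dist_eq, Real.dist_eq] <;> norm_num
  rw [edist_dist, this]; norm_num

lemma corner_norm (i : Fin 4) : ‖corner i‖ = 1 := by
  fin_cases i <;> simp [corner, Prod.norm_def]

lemma length_prod (γ : ℝ → ℝ × ℝ) (hγ : SphereParam (ℝ × ℝ) γ) : loopLength γ = 8 := by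
  refine le_antisymm (loopLength_le finrank_prod hγ) ?_
  have hfin := ne_top_of_le_ne_top ENNReal.ofReal_ne_top (length_le finrank_prod hγ)
  obtain ⟨⟨-, h01⟩, hinj, himg⟩ := hγ
  have ex : ∀ i, ∃ s, s ∈ Set.Icc (0:ℝ) 1 ∧ γ s = corner i := by
    intro i
    have : corner i ∈ γ '' Set.Icc 0 1 := by rw [himg]; simpa using corner_norm i
    exact this
  choose t ht e using ex
  let σ := Tuple.sort t
  have hm : Monotone (t ∘ σ) := Tuple.monotone_sort t
  have m : ∀ {i j : Fin 4}, i ≤ j → t (σ i) ≤ t (σ j) := fun h => hm h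
  have hd : ∀ {i j : Fin 4}, i ≠ j → edist (γ (t (σ i))) (γ (t (σ j))) = 2 := fun h => by
    rw [e, e]; exact corner_dist (σ.injective.ne h)
  have l : ∀ a b : ℝ, a ≤ b → edist (γ a) (γ b) ≤ eVariationOn γ (Set.Icc a b) := fun a b h =>
    eVariationOn.edist_le γ (Set.left_mem_Icc.2 h) (Set.right_mem_Icc.2 h)
  have h0 := (ht (σ 0)).1
  have h1 := m (show (0 : Fin 4) ≤ 1 by decide)
  have h2 := m (show (1 : Fin 4) ≤ 2 by decide)
  have h3 := m (show (2 : Fin 4) ≤ 3 by decide)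
  have h4 := (ht (σ 3)).2
  have key : (8 : ℝ≥0∞) ≤ eVariationOn γ (Set.Icc 0 1) := by
    rw [var_split γ h0 (by linarith : t (σ 0) ≤ 1), var_split γ h1 (by linarith : t (σ 1) ≤ 1),
      var_split γ h2 (by linarith : t (σ 2) ≤ 1), var_split γ h3 h4]
    have l1 := l _ _ h1
    have l2 := l _ _ h2
    have l3 := l _ _ h3
    rw [hd (by decide)] at l1 l2 l3
    have l4 : (2 : ℝ≥0∞) ≤ edist (γ 0) (γ (t (σ 0))) + edist (γ (t (σ 3))) (γ 1) := by
      rw [← hd (show (3 : Fin 4) ≠ 0 by decide), add_comm, h01]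
      exact edist_triangle _ _ _
    have l5 := l _ _ h0
    have l6 := l _ _ h4
    calc (8 : ℝ≥0∞) = 2 + (2 + (2 + 2)) := by norm_num
      _ ≤ 2 + (2 + (2 + (edist (γ 0) (γ (t (σ 0))) + edist (γ (t (σ 3))) (γ 1)))) := by gcongr
      _ = edist (γ 0) (γ (t (σ 0))) + (2 + (2 + (2 + edist (γ (t (σ 3))) (γ 1)))) := by ring
      _ ≤ _ := by gcongr
  have := ENNReal.toReal_mono hfin key
  simpa [loopLength] using this

noncomputable def sq (s : ℝ) : ℝ × ℝ :=
  (max (-1) (min 1 (|8 * s - 4| - 2)), max (max (-1) (min 1 (2 - |8 * s - 2|))) (8 * s - 8))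

lemma clamp1 {c : ℝ} (h : 1 ≤ c) : max (-1) (min 1 c) = 1 := by
  rw [min_eq_left h]; norm_num

lemma clamp2 {c : ℝ} (h : c ≤ -1) : max (-1) (min 1 c) = -1 := by
  rw [min_eq_right (by linarith), max_eq_left h]

lemma clamp3 {c : ℝ} (h : -1 ≤ c) (h' : c ≤ 1) : max (-1) (min 1 c) = c := by
  rw [min_eq_right h', max_eq_right h]

lemma sq1 {s : ℝ} (h : 0 ≤ s) (h' : s ≤ 1/8) : sq s = (1, 8 * s) := by
  rw [sq, abs_of_nonpos (by linarith : 8 * s - 4 ≤ 0), abs_of_nonpos (by linarith : 8 * s - 2 ≤ 0),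
    clamp1 (by linarith), clamp3 (by linarith) (by linarith), max_eq_left (by linarith)]
  ext <;> simp

lemma sq2 {s : ℝ} (h : 1/8 ≤ s) (h' : s ≤ 3/8) : sq s = (2 - 8 * s, 1) := by
  have : |8 * s - 2| ≤ 1 := abs_le.2 ⟨by linarith, by linarith⟩
  rw [sq, abs_of_nonpos (by linarith : 8 * s - 4 ≤ 0), clamp3 (by linarith) (by linarith),
    clamp1 (by linarith), max_eq_left (by linarith)]
  ext
  · simp only; ring
  · simp

lemma sq3 {s : ℝ} (h : 3/8 ≤ s) (h' : s ≤ 5/8) : sq s = (-1, 4 - 8 * s) := by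
  have : |8 * s - 4| ≤ 1 := abs_le.2 ⟨by linarith, by linarith⟩
  rw [sq, abs_of_nonneg (by linarith : 0 ≤ 8 * s - 2), clamp2 (by linarith),
    clamp3 (by linarith) (by linarith), max_eq_left (by linarith)]
  ext
  · simp
  · simp only; ring

lemma sq4 {s : ℝ} (h : 5/8 ≤ s) (h' : s ≤ 7/8) : sq s = (8 * s - 6, -1) := by
  rw [sq, abs_of_nonneg (by linarith : 0 ≤ 8 * s - 2), abs_of_nonneg (by linarith : 0 ≤ 8 * s - 4),
    clamp3 (by linarith) (by linarith), clamp2 (by linarith), max_eq_left (by linarith)]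
  ext
  · simp only; ring
  · simp

lemma sq5 {s : ℝ} (h : 7/8 ≤ s) : sq s = (1, 8 * s - 8) := by
  rw [sq, abs_of_nonneg (by linarith : 0 ≤ 8 * s - 2), abs_of_nonneg (by linarith : 0 ≤ 8 * s - 4),
    clamp1 (by linarith), clamp2 (by linarith), max_eq_right (by linarith)]

lemma sq_cases {s : ℝ} (h : 0 ≤ s) :
    (s ≤ 1/8 ∧ (sq s).1 = 1 ∧ (sq s).2 = 8 * s) ∨
    (1/8 < s ∧ s ≤ 3/8 ∧ (sq s).1 = 2 - 8 * s ∧ (sq s).2 = 1) ∨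
    (3/8 < s ∧ s ≤ 5/8 ∧ (sq s).1 = -1 ∧ (sq s).2 = 4 - 8 * s) ∨
    (5/8 < s ∧ s ≤ 7/8 ∧ (sq s).1 = 8 * s - 6 ∧ (sq s).2 = -1) ∨
    (7/8 < s ∧ (sq s).1 = 1 ∧ (sq s).2 = 8 * s - 8) := by
  rcases le_or_gt s (1/8) with h1 | h1
  · left; rw [sq1 h h1]; exact ⟨h1, rfl, rfl⟩
  right
  rcases le_or_gt s (3/8) with h2 | h2
  · left; rw [sq2 h1.le h2]; exact ⟨h1, h2, rfl, rfl⟩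
  right
  rcases le_or_gt s (5/8) with h3 | h3
  · left; rw [sq3 h2.le h3]; exact ⟨h2, h3, rfl, rfl⟩
  right
  rcases le_or_gt s (7/8) with h4 | h4
  · left; rw [sq4 h3.le h4]; exact ⟨h3, h4, rfl, rfl⟩
  right
  rw [sq5 h4.le]; exact ⟨h4, rfl, rfl⟩

lemma sq_param : SphereParam (ℝ × ℝ) sq := by
  have l0 : ∀ c : ℝ, LipschitzWith 8 fun s : ℝ => 8 * s - c := fun c =>
    LipschitzWith.of_dist_le_mul fun x y => by
      rw [Real.dist_eq, Real.dist_eq, show 8 * x - c - (8 * y - c) = 8 * (x - y) by ring, abs_mul]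
      norm_num
  have la : ∀ c : ℝ, LipschitzWith 8 fun s : ℝ => |8 * s - c| := fun c =>
    LipschitzWith.of_dist_le_mul fun x y => by
      refine le_trans ?_ ((l0 c).dist_le_mul x y)
      rw [Real.dist_eq, Real.dist_eq]
      exact abs_abs_sub_abs_le _ _
  refine ⟨⟨⟨8, ?_⟩, ?_⟩, ?_, ?_⟩
  · have f1 : LipschitzWith 8 fun s : ℝ => |8 * s - 4| - 2 := 
      LipschitzWith.of_dist_le_mul fun x y => by simpa using (la 4).dist_le_mul x y
    have f2 : LipschitzWith 8 fun s : ℝ => 2 - |8 * s - 2| := 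
      LipschitzWith.of_dist_le_mul fun x y => by
        rw [dist_sub_left]; exact (la 2).dist_le_mul x y
    have g1 := (f1.const_min 1).const_max (-1)
    have g2 := ((f2.const_min 1).const_max (-1)).max (l0 8)
    have := g1.prodMk g2
    simp only [max_self] at this
    exact this.lipschitzOnWith
  · norm_num [sq]
  · intro s hs t ht h
    obtain ⟨h1, h2⟩ := Prod.ext_iff.1 h
    obtain ⟨hs, hs'⟩ := hs
    obtain ⟨ht, ht'⟩ := ht
    have a := sq_cases hs
    have b := sq_cases ht
    clear l0 la h
    rw [h1, h2] at a
    rcases a with a | a | a | a | a <;> rcases b with b | b | b | b | b <;> linarith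
  · ext ⟨x, y⟩
    rw [mem_sphere_zero_iff_norm, Prod.norm_def]
    simp only [Real.norm_eq_abs, Set.mem_image, Set.mem_Icc]
    clear l0 la
    constructor
    · rintro ⟨s, ⟨h0, h1⟩, he⟩
      have a := sq_cases h0
      rw [he] at a
      dsimp only at a
      rcases a with ⟨_, e, e'⟩ | ⟨_, _, e, e'⟩ | ⟨_, _, e, e'⟩ | ⟨_, _, e, e'⟩ | ⟨_, e, e'⟩
      · rw [e, abs_one, max_eq_left (abs_le.2 ⟨by linarith, by linarith⟩)]
      · rw [e', abs_one, max_eq_right (abs_le.2 ⟨by linarith, by linarith⟩)]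
      · rw [e, abs_neg, abs_one, max_eq_left (abs_le.2 ⟨by linarith, by linarith⟩)]
      · rw [e', abs_neg, abs_one, max_eq_right (abs_le.2 ⟨by linarith, by linarith⟩)]
      · rw [e, abs_one, max_eq_left (abs_le.2 ⟨by linarith, by linarith⟩)]
    · intro h
      have hx : |x| ≤ 1 := h ▸ le_max_left _ _
      have hy : |y| ≤ 1 := h ▸ le_max_right _ _
      rw [abs_le] at hx hy
      obtain ⟨hx1, hx2⟩ := hx
      obtain ⟨hy1, hy2⟩ := hy
      have : x = 1 ∨ x = -1 ∨ y = 1 ∨ y = -1 := by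
        rcases max_choice |x| |y| with h' | h' <;> rw [h'] at h
        · rcases (abs_eq zero_le_one).1 h with h | h <;> simp [h]
        · rcases (abs_eq zero_le_one).1 h with h | h <;> simp [h]
      rcases this with rfl | rfl | rfl | rfl
      · rcases le_total 0 y with h | h
        · refine ⟨y / 8, ⟨by linarith, by linarith⟩, ?_⟩
          rw [sq1 (by linarith) (by linarith)]; ext <;> simp only; ring
        · refine ⟨1 + y / 8, ⟨by linarith, by linarith⟩, ?_⟩
          rw [sq5 (by linarith)]; ext <;> simp only; ring
      · refine ⟨1/2 - y / 8, ⟨by linarith, by linarith⟩, ?_⟩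
        rw [sq3 (by linarith) (by linarith)]; ext <;> simp only; ring
      · refine ⟨1/4 - x / 8, ⟨by linarith, by linarith⟩, ?_⟩
        rw [sq2 (by linarith) (by linarith)]; ext <;> simp only; ring
      · refine ⟨3/4 + x / 8, ⟨by linarith, by linarith⟩, ?_⟩
        rw [sq4 (by linarith) (by linarith)]; ext <;> simp only; ring

lemma alpha_lb : ∀ a ∈ alphaSet, 3 / 32 ≤ a := by
  rintro a ⟨V, nV, sV, h, γ, hγ, rfl⟩
  have h1 := prod_le h hγ
  have h2 : 0 < jungConstant V * loopLength γ :=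
    mul_pos (by linarith [le_jung h]) (loopLength_pos h hγ)
  rw [le_div_iff₀ h2]
  linarith

lemma alpha_mem : (1 / 8 : ℝ) ∈ alphaSet :=
  ⟨ℝ × ℝ, inferInstance, inferInstance, finrank_prod, sq, sq_param, by
    rw [jung_prod, length_prod _ sq_param, one_mul]⟩

/-- for every `2`-dimensional real normed space `V` one has
`J(V)·length(∂B_V) ≤ 32/3`; for `ℝ²` with the sup norm, `J = 1` and
`length(∂B) = 8`; consequently `3/32 ≤ ᾱ₀ = inf_V α_V ≤ 1/8`. -/
theorem jung_times_girth_bounds :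
    (∀ (V : Type) [NormedAddCommGroup V] [NormedSpace ℝ V],
        Module.finrank ℝ V = 2 → ∀ γ : ℝ → V, SphereParam V γ →
          jungConstant V * loopLength γ ≤ 32 / 3) ∧
    jungConstant (ℝ × ℝ) = 1 ∧
    (∀ γ : ℝ → ℝ × ℝ, SphereParam (ℝ × ℝ) γ → loopLength γ = 8) ∧
    3 / 32 ≤ sInf alphaSet ∧ sInf alphaSet ≤ 1 / 8 := by
  exact ⟨fun V _ _ h γ hγ => prod_le h hγ, jung_prod, length_prod,
    le_csInf ⟨_, alpha_mem⟩ alpha_lb, csInf_le ⟨_, alpha_lb⟩ alpha_mem⟩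

end SharpIsop
end

section
/- Let X be a metric space, k ≥ 1, K ⊂ ℝ^k a Borel set, and φ: K → X a Lipschitz map with H^k(φ(K)) > 0. Then there exists a norm ‖·‖ on ℝ^k with the following property: for every ε>0 and every finite set Λ ⊂ ℝ^k there exist r>0 and a map ψ: Λ → X such that (1+ε)^{-1}·r‖a−b‖ ≤ d(ψ(a),ψ(b)) ≤ (1+ε)·r‖a−b‖ for all a,b ∈ Λ. -/
open scoped NNReal ENNReal
open MeasureTheory Filter

universe u v

namespace SharpIsop

open Metric Topology


lemma aux_avg {k : ℕ} (f : (Fin k → ℝ) → ℝ) (L : ℝ≥0) (hf : LipschitzWith L f)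
    (m : (Fin k → ℝ) → ℝ) (hm : LocallyIntegrable m volume) (v p : Fin k → ℝ)
    (hfm : ∀ y, |fderiv ℝ f y v| ≤ m y) (ρ S C : ℝ) (hρ : 0 < ρ) (hS : 0 ≤ S)
    (hC : ∀ s ∈ Set.Icc 0 S, (⨍ y in closedBall (p + s • v) ρ, m y) ≤ C) :
    |f (p + S • v) - f p| ≤ 2 * L * ρ + S * C := by
  set B : Set (Fin k → ℝ) := closedBall 0 ρ with hB
  have hBc : IsCompact B := isCompact_closedBall _ _
  have hV : 0 < volume.real B := by
    rw [measureReal_def]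
    exact ENNReal.toReal_pos (measure_closedBall_pos _ _ hρ).ne' hBc.measure_lt_top.ne
  have hcont : ∀ c : Fin k → ℝ, Continuous fun u => f (c + u) := fun c =>
    hf.continuous.comp (by fun_prop)
  have hint : ∀ c : Fin k → ℝ, IntegrableOn (fun u => f (c + u)) B := fun c =>
    (hcont c).continuousOn.integrableOn_compact hBc
  have htr : ∀ c : Fin k → ℝ, ∫ u in B, m (c + u) = ∫ y in closedBall c ρ, m y := by
    intro c
    have := (measurePreserving_add_left (volume : Measure (Fin k → ℝ)) c).setIntegral_preimage_emb
      (measurableEmbedding_addLeft c) m (closedBall c ρ)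
    rw [← this]
    congr 2
    ext u
    simp [hB, dist_eq_norm]
  have hvol : ∀ c : Fin k → ℝ, volume.real (closedBall c ρ) = volume.real B := by
    intro c
    simp [measureReal_def, hB, Measure.addHaar_closedBall_center]
  have hmint : ∀ c : Fin k → ℝ, IntegrableOn (fun u => m (c + u)) B := by
    intro c
    have := (measurePreserving_add_left (volume : Measure (Fin k → ℝ)) c).integrableOn_comp_preimage
      (measurableEmbedding_addLeft c) (f := m) (s := closedBall c ρ)
    have h2 := this.2 (hm.integrableOn_isCompact (isCompact_closedBall _ _))
    have h3 : (fun x => c + x) ⁻¹' closedBall c ρ = B := by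
      ext u
      simp [hB, dist_eq_norm]
    rw [h3] at h2
    exact h2
  have hder : ∀ s : ℝ, HasDerivAt (fun s : ℝ => ∫ u in B, f (p + s • v + u))
      (∫ u in B, fderiv ℝ f (p + s • v + u) v) s := by
    intro s
    refine (hasDerivAt_integral_of_dominated_loc_of_lip (s := Set.univ) (bound := fun _ => (L * ‖v‖₊ : ℝ≥0))
      (by simp) ?_ ?_ ?_ ?_ ?_ ?_).2
    · exact Eventually.of_forall fun t => (hcont _).aestronglyMeasurable
    · exact hint _
    · exact ((measurable_fderiv_apply_const ℝ f v).comp (measurable_const_add _)).aestronglyMeasurable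
    · refine Eventually.of_forall fun u => ?_
      have : LipschitzWith ‖v‖₊ (fun s : ℝ => p + s • v + u) := by
        refine LipschitzWith.of_dist_le_mul fun a b => ?_
        simp [dist_eq_norm, ← sub_smul, norm_smul, mul_comm]
      have := (hf.comp this).lipschitzOnWith (s := Set.univ)
      simpa [Function.comp_def] using this
    · exact integrableOn_const hBc.measure_lt_top.ne
    · have h1 : ∀ᵐ u : Fin k → ℝ, DifferentiableAt ℝ f (p + s • v + u) :=
        (measurePreserving_add_left volume (p + s • v)).quasiMeasurePreserving.ae hf.ae_differentiableAt
      refine ae_restrict_of_ae ?_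
      filter_upwards [h1] with u hu
      have h2 : HasDerivAt (fun s : ℝ => p + s • v + u) v s := by
        simpa using (((hasDerivAt_id s).smul_const v).const_add p).add_const u
      exact hu.hasFDerivAt.comp_hasDerivAt s h2
  have hbd : ∀ s ∈ Set.Icc 0 S, ‖∫ u in B, fderiv ℝ f (p + s • v + u) v‖ ≤ C * volume.real B := by
    intro s hs
    calc _ ≤ ∫ u in B, m (p + s • v + u) :=
          norm_integral_le_of_norm_le (hmint _) (Eventually.of_forall fun u => hfm _)
      _ = ∫ y in closedBall (p + s • v) ρ, m y := htr _
      _ ≤ C * volume.real B := by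
        have := hC s hs
        rw [setAverage_eq, hvol, smul_eq_mul, inv_mul_le_iff₀ hV] at this
        linarith
  have h3 := (convex_Icc (0:ℝ) S).norm_image_sub_le_of_norm_hasDerivWithin_le
    (f := fun s : ℝ => ∫ u in B, f (p + s • v + u)) (fun s hs => (hder s).hasDerivWithinAt) hbd
    (Set.left_mem_Icc.2 hS) (Set.right_mem_Icc.2 hS)
  have h4 : ∀ c : Fin k → ℝ, |(∫ u in B, f (c + u)) - volume.real B * f c| ≤ L * ρ * volume.real B := by
    intro c
    have : (∫ u in B, f (c + u)) - volume.real B * f c = ∫ u in B, (f (c + u) - f c) := by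
      rw [integral_sub (hint c) (integrableOn_const hBc.measure_lt_top.ne)]
      simp
    rw [this, ← Real.norm_eq_abs]
    refine norm_setIntegral_le_of_norm_le_const hBc.measure_lt_top fun u hu => ?_
    have := hf.dist_le_mul (c + u) c
    rw [dist_eq_norm, dist_eq_norm] at this
    refine this.trans ?_
    simp [hB] at hu
    simp
    gcongr
  have h5 := h4 (p + S • v)
  have h6 := h4 p
  simp only [zero_smul, add_zero, sub_zero, Real.norm_eq_abs, abs_of_nonneg hS] at h3
  rw [← mul_le_mul_iff_left₀ hV]
  have : |f (p + S • v) - f p| * volume.real B = |volume.real B * f (p + S • v) - volume.real B * f p| := by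
    rw [← mul_sub, abs_mul, abs_of_pos hV, mul_comm]
  rw [this]
  rw [abs_le] at *
  constructor <;> nlinarith

noncomputable def mdN {k : ℕ} (f : ℕ → (Fin k → ℝ) → ℝ) (x v : Fin k → ℝ) : ℝ :=
  ⨆ i, |fderiv ℝ (f i) x v|


lemma fd_le {k : ℕ} {f : ℕ → (Fin k → ℝ) → ℝ} {L : ℝ≥0} (hf : ∀ i, LipschitzWith L (f i)) (x v : Fin k → ℝ) (i : ℕ) : |fderiv ℝ (f i) x v| ≤ L * ‖v‖ := by
  refine ((fderiv ℝ (f i) x).le_opNorm v).trans ?_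
  gcongr
  exact norm_fderiv_le_of_lipschitz ℝ (hf i)

lemma mdN_bdd {k : ℕ} {f : ℕ → (Fin k → ℝ) → ℝ} {L : ℝ≥0} (hf : ∀ i, LipschitzWith L (f i)) (x v : Fin k → ℝ) : BddAbove (Set.range fun i => |fderiv ℝ (f i) x v|) :=
  ⟨L * ‖v‖, by rintro _ ⟨i, rfl⟩; exact fd_le hf x v i⟩

lemma le_mdN {k : ℕ} {f : ℕ → (Fin k → ℝ) → ℝ} {L : ℝ≥0} (hf : ∀ i, LipschitzWith L (f i)) (x v : Fin k → ℝ) (i : ℕ) : |fderiv ℝ (f i) x v| ≤ mdN f x v :=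
  le_ciSup (mdN_bdd hf x v) i

lemma mdN_nonneg {k : ℕ} {f : ℕ → (Fin k → ℝ) → ℝ} {L : ℝ≥0} (hf : ∀ i, LipschitzWith L (f i)) (x v : Fin k → ℝ) : 0 ≤ mdN f x v :=
  (abs_nonneg _).trans (le_mdN hf x v 0)

lemma mdN_le {k : ℕ} {f : ℕ → (Fin k → ℝ) → ℝ} {L : ℝ≥0} (hf : ∀ i, LipschitzWith L (f i)) (x v : Fin k → ℝ) : mdN f x v ≤ L * ‖v‖ := ciSup_le fun i => fd_le hf x v i

lemma mdN_add {k : ℕ} {f : ℕ → (Fin k → ℝ) → ℝ} {L : ℝ≥0} (hf : ∀ i, LipschitzWith L (f i)) (x v w : Fin k → ℝ) : mdN f x (v + w) ≤ mdN f x v + mdN f x w := by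
  refine ciSup_le fun i => ?_
  rw [map_add]
  exact (abs_add_le _ _).trans (add_le_add (le_mdN hf x v i) (le_mdN hf x w i))

lemma mdN_smul {k : ℕ} {f : ℕ → (Fin k → ℝ) → ℝ} (x v : Fin k → ℝ) (c : ℝ) : mdN f x (c • v) = |c| * mdN f x v := by
  simp only [mdN, map_smul, smul_eq_mul, abs_mul]
  rw [Real.mul_iSup_of_nonneg (abs_nonneg c)]

lemma mdN_lip {k : ℕ} {f : ℕ → (Fin k → ℝ) → ℝ} {L : ℝ≥0} (hf : ∀ i, LipschitzWith L (f i)) (x v w : Fin k → ℝ) : mdN f x v ≤ mdN f x w + L * ‖v - w‖ := by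
  have := mdN_add hf x w (v - w)
  rw [add_sub_cancel] at this
  linarith [mdN_le hf x (v - w)]

lemma mdN_locInt {k : ℕ} {f : ℕ → (Fin k → ℝ) → ℝ} {L : ℝ≥0} (hf : ∀ i, LipschitzWith L (f i)) (v : Fin k → ℝ) : LocallyIntegrable (fun x => mdN f x v) volume := by
  have h : Measurable fun x => mdN f x v :=
    Measurable.iSup fun i => (measurable_fderiv_apply_const ℝ (f i) v).abs
  refine (locallyIntegrable_const (L * ‖v‖ : ℝ)).mono h.aestronglyMeasurable ?_
  refine Eventually.of_forall fun x => ?_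
  rw [Real.norm_eq_abs, Real.norm_eq_abs, abs_of_nonneg (mdN_nonneg hf x v)]
  exact (mdN_le hf x v).trans (le_abs_self _)

/-- uniform upper bound at `x` in direction `v` -/
def UB {k : ℕ} (f : ℕ → (Fin k → ℝ) → ℝ) (x v : Fin k → ℝ) : Prop :=
  ∀ (M ε : ℝ), 0 < M → 0 < ε → ∀ᶠ r in 𝓝[>] (0:ℝ), ∀ p ∈ closedBall x (M * r),
    ∀ s ∈ Set.Icc 0 (M * r), ∀ i, |f i (p + s • v) - f i p| ≤ s * mdN f x v + ε * r

lemma ae_UB_dir {k : ℕ} {f : ℕ → (Fin k → ℝ) → ℝ} {L : ℝ≥0} (hf : ∀ i, LipschitzWith L (f i)) (v : Fin k → ℝ) : ∀ᵐ x, UB f x v := by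
  have h : ∀ᵐ x : Fin k → ℝ, ∀ n : ℕ, ∀ {ι : Type} {l : Filter ι} (w : ι → (Fin k → ℝ)) (δ : ι → ℝ)
      (_ : Tendsto δ l (𝓝[>] 0)) (_ : ∀ᶠ j in l, x ∈ closedBall (w j) (n * δ j)),
      Tendsto (fun j => ⨍ y in closedBall (w j) (δ j), mdN f y v) l (𝓝 (mdN f x v)) := by
    rw [ae_all_iff]
    intro n
    exact IsUnifLocDoublingMeasure.ae_tendsto_average volume (mdN_locInt hf v) n
  filter_upwards [h] with x hx M ε hM hε
  set δ : ℝ := ε / (4 * (L + 1)) with hδ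
  have hδ0 : 0 < δ := by positivity
  obtain ⟨n, hn⟩ := exists_nat_ge ((M + M * ‖v‖) / δ)
  rw [div_le_iff₀ hδ0] at hn
  set T : Set ((Fin k → ℝ) × ℝ) := closedBall 0 M ×ˢ Set.Icc 0 M
  have h1 := hx n (ι := ℝ × ((Fin k → ℝ) × ℝ)) (l := 𝓝[>] 0 ×ˢ 𝓟 T)
    (fun j => x + j.1 • j.2.1 + (j.1 * j.2.2) • v) (fun j => j.1 * δ) ?_ ?_
  · have h2 : ∀ᶠ j in 𝓝[>] (0:ℝ) ×ˢ 𝓟 T, (⨍ y in closedBall (x + j.1 • j.2.1 + (j.1 * j.2.2) • v) (j.1 * δ), mdN f y v)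
        < mdN f x v + ε / (2 * M) := h1.eventually_lt_const (by simp; positivity)
    rw [eventually_prod_principal_iff] at h2
    filter_upwards [h2, self_mem_nhdsWithin] with r hr hr0 p hp s hs i
    have hr0 : 0 < r := hr0
    have h3 := aux_avg (f i) L (hf i) (fun y => mdN f y v) (mdN_locInt hf v) v p
      (fun y => le_mdN hf y v i) (r * δ) s (mdN f x v + ε / (2 * M)) (by positivity) hs.1 ?_
    · refine h3.trans ?_
      have e1 : s * (ε / (2 * M)) ≤ ε / 2 * r := by
        calc s * (ε / (2 * M)) ≤ (M * r) * (ε / (2 * M)) := by gcongr; exact hs.2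
          _ = ε / 2 * r := by field_simp
      have e2 : 2 * L * (r * δ) ≤ ε / 2 * r := by
        have : (L + 1) * δ = ε / 4 := by rw [hδ]; field_simp
        nlinarith [mul_pos hr0 hδ0]
      linarith
    · intro t ht
      have := hr (r⁻¹ • (p - x), r⁻¹ * t) ?_
      · refine le_trans (le_of_eq ?_) this.le
        simp [smul_smul, mul_inv_cancel₀ hr0.ne', mul_inv_cancel_left₀ hr0.ne']
      · refine ⟨?_, ?_, ?_⟩
        · simp only [mem_closedBall, dist_zero_right, norm_smul, norm_inv, Real.norm_eq_abs, abs_of_pos hr0]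
          rw [inv_mul_le_iff₀ hr0, mul_comm, ← dist_eq_norm]
          exact hp
        · have := ht.1
          positivity
        · show r⁻¹ * t ≤ M
          rw [inv_mul_le_iff₀ hr0, mul_comm]
          exact ht.2.trans hs.2
  · have : Tendsto (fun r : ℝ => r * δ) (𝓝[>] 0) (𝓝[>] 0) := by
      refine tendsto_nhdsWithin_iff.2 ⟨?_, ?_⟩
      · have : Tendsto (fun r : ℝ => r * δ) (𝓝 0) (𝓝 (0 * δ)) := by
          exact tendsto_id.mul_const δ
        rw [zero_mul] at this
        exact this.mono_left nhdsWithin_le_nhds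
      · filter_upwards [self_mem_nhdsWithin] with r hr
        exact mul_pos hr hδ0
    exact this.comp tendsto_fst
  · rw [eventually_prod_principal_iff]
    filter_upwards [self_mem_nhdsWithin] with r hr ⟨u, s⟩ ⟨hu, hs⟩
    have hr0 : 0 < r := hr
    simp only [mem_closedBall, dist_zero_right] at hu
    rw [mem_closedBall, dist_comm, dist_eq_norm, add_assoc, add_sub_cancel_left]
    calc ‖r • u + (r * s) • v‖ ≤ ‖r • u‖ + ‖(r * s) • v‖ := norm_add_le _ _
      _ = r * (‖u‖ + s * ‖v‖) := by
        rw [norm_smul, norm_smul, Real.norm_eq_abs, Real.norm_eq_abs, abs_of_pos hr0, abs_of_nonneg (mul_nonneg hr0.le hs.1)]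
        ring
      _ ≤ r * (M + M * ‖v‖) := by
        have := hs.2
        gcongr
      _ ≤ n * (r * δ) := by nlinarith

lemma ae_UB {k : ℕ} {f : ℕ → (Fin k → ℝ) → ℝ} {L : ℝ≥0} (hf : ∀ i, LipschitzWith L (f i)) : ∀ᵐ x, ∀ v, UB f x v := by
  obtain ⟨D, hDc, hD⟩ := TopologicalSpace.exists_countable_dense (Fin k → ℝ)
  have h : ∀ᵐ x : Fin k → ℝ, ∀ v ∈ D, UB f x v := (ae_ball_iff hDc).2 fun v _ => ae_UB_dir hf v
  filter_upwards [h] with x hx v M ε hM hε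
  obtain ⟨w, hw, hwD⟩ := hD.exists_dist_lt v (ε := ε / (4 * M * (L + 1))) (by positivity)
  filter_upwards [hx w hw M (ε / 2) hM (by positivity), self_mem_nhdsWithin] with r hr hr0 p hp s hs i
  have hr0 : 0 < r := hr0
  have h1 := hr p hp s hs i
  have h2 := mdN_lip hf x w v
  have h3 := (hf i).dist_le_mul (p + s • v) (p + s • w)
  rw [dist_add_left, dist_eq_norm (s • v), ← smul_sub, norm_smul, Real.norm_eq_abs, abs_of_nonneg hs.1, Real.dist_eq] at h3
  rw [norm_sub_rev] at h2
  rw [dist_eq_norm] at hwD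
  have h4 : s * (L * ‖v - w‖) ≤ ε / 4 * r := by
    calc s * (L * ‖v - w‖) ≤ (M * r) * ((L + 1) * (ε / (4 * M * (L + 1)))) := by
          gcongr
          · exact hs.2
          · linarith
      _ = ε / 4 * r := by field_simp
  have h5 := mul_le_mul_of_nonneg_left h2 hs.1
  have h6 : |f i (p + s • v) - f i p| ≤ |f i (p + s • v) - f i (p + s • w)| + |f i (p + s • w) - f i p| :=
    abs_sub_le _ _ _
  nlinarith


lemma deg_cover {X : Type*} [MetricSpace X] {k : ℕ} {f : ℕ → (Fin k → ℝ) → ℝ} {L : ℝ≥0}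
    (hf : ∀ i, LipschitzWith L (f i)) (K : Set (Fin k → ℝ)) (φ : (Fin k → ℝ) → X)
    (hsup : ∀ p ∈ K, ∀ q ∈ K, ∀ c, (∀ i, |f i p - f i q| ≤ c) → dist (φ p) (φ q) ≤ c)
    (x : Fin k → ℝ) (hx : ∀ v, UB f x v) (v : Fin k → ℝ) (hv : v ≠ 0) (hNv : mdN f x v = 0)
    (M : ℕ) (hM : 0 < M) :
    ∀ᶠ r in 𝓝[>] (0:ℝ), ∃ t : Fin (M ^ (k - 1)) → Set X,
      φ '' (K ∩ closedBall x r) ⊆ ⋃ c, t c ∧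
      ∀ c, ediam (t c) ≤ ENNReal.ofReal ((4 * L + 1) * r / M) := by
  have hne : Nonempty (Fin k) := by
    by_contra h
    rw [not_nonempty_iff] at h
    exact hv (Subsingleton.elim _ _)
  obtain ⟨j, hj⟩ := Finite.exists_max (fun i => |v i|)
  have hvj : v j ≠ 0 := by
    intro h
    apply hv
    ext i
    have := hj i
    simp only [h, abs_zero] at this
    simpa using this
  set w : Fin k → ℝ := (v j)⁻¹ • v with hw
  have hwj : w j = 1 := by simp [hw, hvj]
  have hwi : ∀ i, |w i| ≤ 1 := by
    intro i
    simp only [hw, Pi.smul_apply, smul_eq_mul, abs_mul, abs_inv]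
    rw [inv_mul_le_iff₀ (abs_pos.2 hvj), mul_one]
    exact hj i
  have hNw : mdN f x w = 0 := by rw [hw, mdN_smul, hNv, mul_zero]
  have hM0 : (0:ℝ) < M := by exact_mod_cast hM
  filter_upwards [hx w 2 (1 / M) (by norm_num) (by positivity), self_mem_nhdsWithin] with r hr hr0
  have hr0 : 0 < r := hr0
  rw [hNw] at hr
  -- one-sided estimate
  have key : ∀ p ∈ closedBall x r, ∀ q ∈ closedBall x r, p j ≤ q j →
      (∀ i, |(q i - p i) - (q j - p j) * w i| ≤ 4 * r / M) →
      ∀ i, |f i q - f i p| ≤ (4 * L + 1) * r / M := by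
    intro p hp q hq hpq h i
    have hpj : |p j - x j| ≤ r := (dist_le_pi_dist p x j).trans hp
    have hqj : |q j - x j| ≤ r := (dist_le_pi_dist q x j).trans hq
    rw [abs_le] at hpj hqj
    have h1 := hr p (closedBall_subset_closedBall (by linarith) hp) (q j - p j)
      ⟨by linarith, by linarith⟩ i
    have h2 := (hf i).dist_le_mul q (p + (q j - p j) • w)
    have h3 : dist q (p + (q j - p j) • w) ≤ 4 * r / M := by
      refine (dist_pi_le_iff (by positivity)).2 fun l => ?_
      rw [Real.dist_eq]
      convert h l using 2
      simp
      ring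
    rw [Real.dist_eq] at h2
    have h4 : (L:ℝ) * dist q (p + (q j - p j) • w) ≤ L * (4 * r / M) := by gcongr
    have h5 := abs_sub_le (f i q) (f i (p + (q j - p j) • w)) (f i p)
    have h6 : (4 * L + 1) * r / M = L * (4 * r / M) + 1 / M * r := by ring
    rw [h6]
    linarith
  have key2 : ∀ p ∈ closedBall x r, ∀ q ∈ closedBall x r,
      (∀ i, |(q i - p i) - (q j - p j) * w i| ≤ 4 * r / M) →
      ∀ i, |f i q - f i p| ≤ (4 * L + 1) * r / M := by
    intro p hp q hq h i
    rcases le_total (p j) (q j) with hpq | hpq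
    · exact key p hp q hq hpq h i
    · rw [abs_sub_comm]
      refine key q hq p hp hpq (fun l => ?_) i
      rw [abs_sub_comm]
      convert h l using 2
      ring
  have hcard : Fintype.card ({i : Fin k // i ≠ j} → Fin M) = M ^ (k - 1) := by
    simp [Fintype.card_subtype_compl]
  let e := Fintype.equivFinOfCardEq hcard
  let u : (Fin k → ℝ) → Fin k → ℝ := fun p i => (p i - x i) - (p j - x j) * w i
  let A : ({i : Fin k // i ≠ j} → Fin M) → Set (Fin k → ℝ) := fun c =>
    {p | p ∈ K ∩ closedBall x r ∧ ∀ i : {i : Fin k // i ≠ j},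
      -(2 * r) + (c i : ℝ) * (4 * r / M) ≤ u p i ∧ u p i ≤ -(2 * r) + ((c i : ℝ) + 1) * (4 * r / M)}
  refine ⟨fun c => φ '' A (e.symm c), ?_, ?_⟩
  · rintro _ ⟨p, hp, rfl⟩
    have hu : ∀ i, |u p i| ≤ 2 * r := by
      intro i
      have hpj : |p j - x j| ≤ r := (dist_le_pi_dist p x j).trans hp.2
      have hpi : |p i - x i| ≤ r := (dist_le_pi_dist p x i).trans hp.2
      calc |u p i| ≤ |p i - x i| + |(p j - x j) * w i| := abs_sub _ _
        _ ≤ r + r * 1 := by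
          rw [abs_mul]
          gcongr
          exact hwi i
        _ = 2 * r := by ring
    have hex : ∀ i : {i : Fin k // i ≠ j}, ∃ c : Fin M,
        -(2 * r) + (c : ℝ) * (4 * r / M) ≤ u p i ∧ u p i ≤ -(2 * r) + ((c : ℝ) + 1) * (4 * r / M) := by
      intro i
      obtain ⟨h1, h2⟩ := abs_le.1 (hu i)
      have hg : 0 < 4 * r / M := by positivity
      have hg2 : 4 * r / M * M = 4 * r := by field_simp
      set g := 4 * r / M
      by_cases hlt : u p i < 2 * r
      · have h0 : 0 ≤ (u p i + 2 * r) / g := div_nonneg (by linarith) hg.le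
        have hfl : ⌊(u p i + 2 * r) / g⌋₊ < M := by
          rw [Nat.floor_lt h0, div_lt_iff₀ hg]
          linarith
        refine ⟨⟨_, hfl⟩, ?_, ?_⟩
        · have := Nat.floor_le h0
          rw [le_div_iff₀ hg] at this
          simp only
          linarith
        · have := (Nat.lt_floor_add_one ((u p i + 2 * r) / g)).le
          rw [div_le_iff₀ hg] at this
          simp only
          linarith
      · refine ⟨⟨M - 1, by omega⟩, ?_, ?_⟩
        · simp only [Nat.cast_pred hM]
          nlinarith
        · simp only [Nat.cast_pred hM]
          nlinarith
    choose c hc using hex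
    refine Set.mem_iUnion.2 ⟨e c, p, ?_, rfl⟩
    rw [e.symm_apply_apply]
    exact ⟨hp, hc⟩
  · intro c
    refine ediam_le ?_
    rintro _ ⟨p, hp, rfl⟩ _ ⟨q, hq, rfl⟩
    rw [edist_dist]
    refine ENNReal.ofReal_le_ofReal ?_
    refine hsup p hp.1.1 q hq.1.1 _ ?_
    refine key2 q hq.1.2 p hp.1.2 fun i => ?_
    by_cases hij : i = j
    · subst hij
      rw [hwj]
      simp
      positivity
    · have h1 := hp.2 ⟨i, hij⟩
      have h2 := hq.2 ⟨i, hij⟩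
      have h3 : (p i - q i) - (p j - q j) * w i = u p i - u q i := by simp only [u]; ring
      rw [h3, abs_le]
      constructor <;> linarith [h1.1, h1.2, h2.1, h2.2]

lemma deg_null {X : Type*} [MetricSpace X] [MeasurableSpace X] [BorelSpace X]
    {k : ℕ} {f : ℕ → (Fin k → ℝ) → ℝ} {L : ℝ≥0} (hk : 1 ≤ k)
    (hf : ∀ i, LipschitzWith L (f i)) (K : Set (Fin k → ℝ)) (φ : (Fin k → ℝ) → X)
    (hsup : ∀ p ∈ K, ∀ q ∈ K, ∀ c, (∀ i, |f i p - f i q| ≤ c) → dist (φ p) (φ q) ≤ c)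
    (S : Set (Fin k → ℝ)) (hSK : S ⊆ K) (hSfin : volume S ≠ ⊤)
    (hS : ∀ x ∈ S, (∀ v, UB f x v) ∧ ∃ v, v ≠ 0 ∧ mdN f x v = 0) :
    μH[k] (φ '' S) = 0 := by
  have hcov : ∀ n : ℕ, ∃ (t : Set (Fin k → ℝ)) (r : (Fin k → ℝ) → ℝ)
      (c : t → Fin ((n + 1) ^ (k - 1)) → Set X), t.Countable ∧
      (∀ x ∈ t, 0 < r x ∧ r x < 1) ∧ (φ '' S ⊆ ⋃ i : t × Fin ((n + 1) ^ (k - 1)), c i.1 i.2) ∧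
      (∀ x : t, ∀ i, ediam (c x i) ≤ ENNReal.ofReal ((4 * L + 1) * r x / (n + 1 : ℕ))) ∧
      (∑' x : t, volume (closedBall (x : Fin k → ℝ) (r x))) ≤ volume S + 1 := by
    intro n
    have hgood : ∀ x ∈ S, ∀ δ > 0, ({r : ℝ | r < 1 ∧ 0 < r ∧ ∃ t : Fin ((n + 1) ^ (k - 1)) → Set X,
      φ '' (K ∩ closedBall x r) ⊆ ⋃ c, t c ∧
      ∀ c, ediam (t c) ≤ ENNReal.ofReal ((4 * L + 1) * r / (n + 1 : ℕ))} ∩ Set.Ioo 0 δ).Nonempty := by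
      intro x hx δ hδ
      obtain ⟨hU, v, hv, hNv⟩ := hS x hx
      have h1 := deg_cover hf K φ hsup x hU v hv hNv (n + 1) (by omega)
      have h2 : ∀ᶠ r in 𝓝[>] (0:ℝ), r ∈ Set.Ioo 0 (min δ 1) :=
        Ioo_mem_nhdsGT (lt_min hδ one_pos)
      obtain ⟨r, hr1, hr2⟩ := (h1.and h2).exists
      exact ⟨r, ⟨hr2.2.trans_le (min_le_right _ _), hr2.1, hr1⟩, hr2.1, hr2.2.trans_le (min_le_left _ _)⟩
    obtain ⟨t, r, htc, htS, hr, hcov, hsum⟩ := Besicovitch.exists_closedBall_covering_tsum_measure_le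
      volume (ε := 1) one_ne_zero _ S hgood
    choose! h1 h2 h3 using hr
    choose! c hc1 hc2 using h3
    refine ⟨t, r, fun x => c x, htc, fun x hx => ⟨h2 x hx, h1 x hx⟩, ?_, fun x i => hc2 x x.2 i, hsum⟩
    rintro _ ⟨p, hp, rfl⟩
    obtain ⟨x, hx, hpx⟩ := Set.mem_iUnion₂.1 (hcov hp)
    obtain ⟨i, hi⟩ := Set.mem_iUnion.1 (hc1 x hx ⟨p, ⟨hSK hp, hpx⟩, rfl⟩)
    exact Set.mem_iUnion.2 ⟨(⟨x, hx⟩, i), hi⟩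
  choose t r c htc hr hcov hdiam hsum using hcov
  have : ∀ n, Countable (t n × Fin ((n + 1) ^ (k - 1))) := fun n => by
    have := (htc n).to_subtype
    infer_instance
  have hlim0 : Tendsto (fun n : ℕ => (1:ℝ) / ((n + 1 : ℕ) : ℝ)) atTop (𝓝 0) := by
    simpa using tendsto_one_div_add_atTop_nhds_zero_nat (𝕜 := ℝ)
  have hlimC : ∀ C : ℝ, Tendsto (fun n : ℕ => ENNReal.ofReal (C / (n + 1 : ℕ))) atTop (𝓝 0) := by
    intro C
    have := ENNReal.tendsto_ofReal (hlim0.const_mul C)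
    simpa [div_eq_mul_inv] using this
  have hle := Measure.hausdorffMeasure_le_liminf_tsum (k : ℝ) (φ '' S)
    (l := atTop) (fun n : ℕ => ENNReal.ofReal ((4 * L + 1) / (n + 1 : ℕ))) (hlimC _)
    (fun n (i : t n × Fin ((n + 1) ^ (k - 1))) => c n i.1 i.2) ?_ (Eventually.of_forall hcov)
  · have hb : ∀ n, ∑' i : t n × Fin ((n + 1) ^ (k - 1)), ediam (c n i.1 i.2) ^ (k : ℝ) ≤
        ENNReal.ofReal ((4 * L + 1) ^ k / (n + 1 : ℕ)) * (volume S + 1) := by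
      intro n
      calc ∑' i : t n × Fin ((n + 1) ^ (k - 1)), ediam (c n i.1 i.2) ^ (k : ℝ)
          ≤ ∑' i : t n × Fin ((n + 1) ^ (k - 1)),
            (ENNReal.ofReal ((4 * L + 1) * r n i.1 / (n + 1 : ℕ))) ^ k := by
            refine ENNReal.tsum_le_tsum fun i => ?_
            rw [ENNReal.rpow_natCast]
            gcongr
            exact hdiam n i.1 i.2
        _ = ∑' x : t n, ((n + 1) ^ (k - 1) : ℕ) * (ENNReal.ofReal ((4 * L + 1) * r n x / (n + 1 : ℕ))) ^ k := by
            rw [ENNReal.tsum_prod (f := fun (x : t n) (_ : Fin ((n + 1) ^ (k - 1))) =>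
              (ENNReal.ofReal ((4 * L + 1) * r n x / (n + 1 : ℕ))) ^ k)]
            simp
        _ ≤ ∑' x : t n, ENNReal.ofReal ((4 * L + 1) ^ k / (n + 1 : ℕ)) * volume (closedBall (x : Fin k → ℝ) (r n x)) := by
            refine ENNReal.tsum_le_tsum fun x => ?_
            have hr0 := (hr n x x.2).1
            rw [Real.volume_pi_closedBall _ hr0.le, ← ENNReal.ofReal_natCast, ← ENNReal.ofReal_pow (by positivity),
              ← ENNReal.ofReal_mul (by positivity), ← ENNReal.ofReal_mul (by positivity)]
            refine ENNReal.ofReal_le_ofReal ?_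
            obtain ⟨l, rfl⟩ : ∃ l, k = l + 1 := ⟨k - 1, by omega⟩
            simp only [Fintype.card_fin, add_tsub_cancel_right]
            have : (((n + 1) ^ l : ℕ) : ℝ) * ((4 * L + 1) * r n x / (n + 1 : ℕ)) ^ (l + 1)
              = (4 * L + 1) ^ (l + 1) / (n + 1 : ℕ) * (r n x) ^ (l + 1) := by
              push_cast
              rw [div_pow, mul_pow]
              field_simp
              ring
            rw [this]
            gcongr
            linarith
        _ ≤ _ := by
            rw [ENNReal.tsum_mul_left]
            gcongr
            exact hsum n
    have hlim : Tendsto (fun n : ℕ => ENNReal.ofReal ((4 * L + 1) ^ k / (n + 1 : ℕ)) * (volume S + 1))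
        atTop (𝓝 0) := by
      have := ENNReal.Tendsto.mul_const (hlimC ((4 * L + 1) ^ k)) (b := volume S + 1)
        (Or.inr (by simp [hSfin]))
      simpa using this
    refine le_antisymm (hle.trans ?_) zero_le
    rw [← hlim.liminf_eq]
    exact liminf_le_liminf (Eventually.of_forall hb)
  · refine Eventually.of_forall fun n i => (hdiam n i.1 i.2).trans (ENNReal.ofReal_le_ofReal ?_)
    have := hr n i.1 i.1.2
    gcongr
    nlinarith [L.2]


/-- Theorem 2.1, Kirchheim / Korevaar–Schoen: if `φ : K → X` is a
Lipschitz map on a Borel set `K ⊂ ℝ^k` (`k ≥ 1`) with `H^k(φ(K)) > 0`, then there is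
a norm `N` on `ℝ^k` such that for every `ε > 0` and every finite set `Λ ⊂ ℝ^k` there
are `r > 0` and a map `ψ : Λ → X` which is `(1+ε)`-biLipschitz from `(Λ, r·N)`
to `X`. -/
theorem kirchheim_bilip_finite_set {X : Type u} [MetricSpace X]
    [MeasurableSpace X] [BorelSpace X]
    (k : ℕ) (hk : 1 ≤ k) (K : Set (Fin k → ℝ)) (hK : MeasurableSet K)
    (φ : (Fin k → ℝ) → X) (L : ℝ≥0) (hφ : LipschitzOnWith L φ K)
    (hpos : 0 < μH[k] (φ '' K)) :
    ∃ N : (Fin k → ℝ) → ℝ,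
      (∀ v, 0 ≤ N v) ∧ (∀ v, N v = 0 → v = 0) ∧
      (∀ (c : ℝ) (v), N (c • v) = |c| * N v) ∧
      (∀ v w, N (v + w) ≤ N v + N w) ∧
      ∀ ε > (0:ℝ), ∀ Λ : Finset (Fin k → ℝ),
        ∃ r > (0:ℝ), ∃ ψ : (Fin k → ℝ) → X, ∀ a ∈ Λ, ∀ b ∈ Λ,
          (1 + ε)⁻¹ * (r * N (a - b)) ≤ dist (ψ a) (ψ b) ∧
          dist (ψ a) (ψ b) ≤ (1 + ε) * (r * N (a - b)) := by

  have hKne : K.Nonempty := by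
    rw [Set.nonempty_iff_ne_empty]
    rintro rfl
    simp at hpos
  have : Nonempty K := hKne.to_subtype
  let d : ℕ → K := TopologicalSpace.denseSeq K
  have hd : DenseRange d := TopologicalSpace.denseRange_denseSeq K
  have hlipd : ∀ i, LipschitzOnWith L (fun p => dist (φ p) (φ (d i))) K := by
    intro i
    refine LipschitzOnWith.of_dist_le_mul fun p hp q hq => ?_
    rw [Real.dist_eq]
    exact (abs_dist_sub_le _ _ _).trans (hφ.dist_le_mul p hp q hq)
  choose f hf hfe using fun i => (hlipd i).extend_real
  have hlow : ∀ p ∈ K, ∀ q ∈ K, ∀ i, |f i p - f i q| ≤ dist (φ p) (φ q) := by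
    intro p hp q hq i
    rw [← hfe i hp, ← hfe i hq]
    exact abs_dist_sub_le _ _ _
  have hsup : ∀ p ∈ K, ∀ q ∈ K, ∀ c, (∀ i, |f i p - f i q| ≤ c) → dist (φ p) (φ q) ≤ c := by
    intro p hp q hq c hc
    refine le_of_forall_pos_le_add fun η hη => ?_
    obtain ⟨i, hi⟩ := hd.exists_dist_lt (⟨q, hq⟩ : K) (ε := η / (2 * (L + 1))) (by positivity)
    have h1 := hc i
    rw [← hfe i hp, ← hfe i hq] at h1
    have h2 := hφ.dist_le_mul q hq (d i) (d i).2
    have h3 : dist q (d i) < η / (2 * (L + 1)) := hi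
    have h4 : (L : ℝ) * dist q (d i) ≤ (L + 1) * (η / (2 * (L + 1))) := by
      gcongr
      linarith
    have h5 : ((L:ℝ) + 1) * (η / (2 * (L + 1))) = η / 2 := by field_simp
    have h6 := dist_triangle_right (φ p) (φ q) (φ (d i))
    have h7 := (abs_le.1 h1).2
    simp only at h7
    linarith
  have hae1 : ∀ᵐ x ∂(volume.restrict K), (∀ v, UB f x v) ∧ ∀ i, DifferentiableAt ℝ (f i) x := by
    refine ae_restrict_of_ae ?_
    filter_upwards [ae_UB hf, ae_all_iff.2 fun i => (hf i).ae_differentiableAt] with x h1 h2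
    exact ⟨h1, h2⟩
  have hae2 : ∀ᵐ x ∂(volume.restrict K), ∀ n : ℕ, ∀ {ι : Type} {l : Filter ι}
      (w : ι → (Fin k → ℝ)) (δ : ι → ℝ) (_ : Tendsto δ l (𝓝[>] 0))
      (_ : ∀ᶠ j in l, x ∈ closedBall (w j) (n * δ j)),
      Tendsto (fun j => volume (K ∩ closedBall (w j) (δ j)) / volume (closedBall (w j) (δ j))) l (𝓝 1) := by
    rw [ae_all_iff]
    intro n
    exact IsUnifLocDoublingMeasure.ae_tendsto_measure_inter_div volume K n
  have hae := (ae_restrict_iff' hK).1 (hae1.and hae2)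
  obtain ⟨x, hxK, ⟨⟨hU, hdiff⟩, hdens⟩, hnd⟩ : ∃ x ∈ K, (((∀ v, UB f x v) ∧ ∀ i, DifferentiableAt ℝ (f i) x) ∧
      ∀ n : ℕ, ∀ {ι : Type} {l : Filter ι}
      (w : ι → (Fin k → ℝ)) (δ : ι → ℝ) (_ : Tendsto δ l (𝓝[>] 0))
      (_ : ∀ᶠ j in l, x ∈ closedBall (w j) (n * δ j)),
      Tendsto (fun j => volume (K ∩ closedBall (w j) (δ j)) / volume (closedBall (w j) (δ j))) l (𝓝 1)) ∧
      ∀ v, mdN f x v = 0 → v = 0 := by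
    by_contra! hcon
    set Z := {x | ¬ (x ∈ K → (((∀ v, UB f x v) ∧ ∀ i, DifferentiableAt ℝ (f i) x) ∧
      ∀ n : ℕ, ∀ {ι : Type} {l : Filter ι}
      (w : ι → (Fin k → ℝ)) (δ : ι → ℝ) (_ : Tendsto δ l (𝓝[>] 0))
      (_ : ∀ᶠ j in l, x ∈ closedBall (w j) (n * δ j)),
      Tendsto (fun j => volume (K ∩ closedBall (w j) (δ j)) / volume (closedBall (w j) (δ j))) l (𝓝 1)))} with hZ
    have hZ0 : volume Z = 0 := hae
    have h1 : μH[k] (φ '' (K ∩ Z)) = 0 := by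
      have h2 := (hφ.mono (Set.inter_subset_left (t := Z))).hausdorffMeasure_image_le (d := k) (by positivity)
      have h3 : (μH[(k:ℝ)] : Measure (Fin k → ℝ)) = volume := by
        simpa using hausdorffMeasure_pi_real (ι := Fin k)
      rw [h3, measure_mono_null Set.inter_subset_right hZ0, mul_zero] at h2
      exact le_antisymm h2 zero_le
    have h2 : ∀ n : ℕ, μH[k] (φ '' ((K \ Z) ∩ ball 0 n)) = 0 := by
      intro n
      refine deg_null hk hf K φ hsup _ (fun y hy => hy.1.1) ?_ ?_
      · exact ((measure_mono Set.inter_subset_right).trans_lt measure_ball_lt_top).ne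
      · rintro y ⟨⟨hyK, hyZ⟩, -⟩
        have hy := not_not.1 hyZ hyK
        obtain ⟨v, hv1, hv2⟩ := hcon y hyK hy
        exact ⟨hy.1.1, v, hv2, hv1⟩
    have h3 : φ '' K ⊆ φ '' (K ∩ Z) ∪ ⋃ n : ℕ, φ '' ((K \ Z) ∩ ball 0 n) := by
      rintro _ ⟨p, hp, rfl⟩
      by_cases hpZ : p ∈ Z
      · exact Or.inl ⟨p, ⟨hp, hpZ⟩, rfl⟩
      · obtain ⟨n, hn⟩ := exists_nat_gt ‖p‖
        exact Or.inr (Set.mem_iUnion.2 ⟨n, p, ⟨⟨hp, hpZ⟩, by simpa using hn⟩, rfl⟩)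
    exact hpos.ne' (measure_mono_null h3 (measure_union_null h1 (measure_iUnion_null h2)))
  refine ⟨mdN f x, mdN_nonneg hf x, hnd, fun c v => mdN_smul x v c, mdN_add hf x, ?_⟩
  -- asymptotic approximation
  have happ : ∀ a b : Fin k → ℝ, ∀ η > (0:ℝ), ∀ᶠ r in 𝓝[>] (0:ℝ),
      (∀ i, |f i (x + r • a) - f i (x + r • b)| ≤ r * mdN f x (a - b) + η * r) ∧
      ∃ i, r * mdN f x (a - b) - η * r ≤ |f i (x + r • a) - f i (x + r • b)| := by
    intro a b η hη
    have hup := hU (a - b) (‖b‖ + 1) η (by positivity) hη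
    obtain ⟨i, hi⟩ := exists_lt_of_lt_ciSup (show mdN f x (a - b) - η / 2 < ⨆ i, |fderiv ℝ (f i) x (a - b)| by
      change mdN f x (a - b) - η / 2 < mdN f x (a - b)
      linarith)
    have hder : ∀ c : Fin k → ℝ, HasDerivAt (fun r : ℝ => f i (x + r • c)) (fderiv ℝ (f i) x c) 0 := by
      intro c
      have h2 : HasDerivAt (fun s : ℝ => x + s • c) c 0 := by
        simpa using ((hasDerivAt_id (0:ℝ)).smul_const c).const_add x
      have h3 : HasFDerivAt (f i) (fderiv ℝ (f i) x) (x + (0:ℝ) • c) := by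
        simpa using (hdiff i).hasFDerivAt
      exact h3.comp_hasDerivAt 0 h2
    have hder2 := (hder a).sub (hder b)
    rw [← map_sub] at hder2
    have hs := (hasDerivAt_iff_tendsto_slope.1 hder2).mono_left
      (nhdsWithin_mono (0:ℝ) (show Set.Ioi (0:ℝ) ⊆ {0}ᶜ from fun y hy => ne_of_gt hy))
    have hs2 := hs.abs.eventually_const_lt (show mdN f x (a - b) - η < |fderiv ℝ (f i) x (a - b)| by linarith)
    filter_upwards [hup, hs2, self_mem_nhdsWithin] with r h1 h2 hr0
    have hr0 : 0 < r := hr0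
    refine ⟨fun i => ?_, i, ?_⟩
    · have := h1 (x + r • b) ?_ r ⟨hr0.le, ?_⟩ i
      · rwa [add_assoc, ← smul_add, add_sub_cancel] at this
      · rw [mem_closedBall, dist_eq_norm, add_sub_cancel_left, norm_smul, Real.norm_eq_abs, abs_of_pos hr0]
        nlinarith
      · nlinarith [norm_nonneg b]
    · simp [slope, abs_mul, abs_of_pos hr0] at h2
      rw [← div_eq_inv_mul, lt_div_iff₀ hr0] at h2
      linarith
  have hnear : ∀ a : Fin k → ℝ, ∀ η > (0:ℝ), ∀ᶠ r in 𝓝[>] (0:ℝ), ∃ p ∈ K, dist p (x + r • a) ≤ η * r := by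
    intro a η hη
    obtain ⟨n, hn⟩ := exists_nat_ge (‖a‖ / η)
    rw [div_le_iff₀ hη] at hn
    have h1 := hdens n (l := 𝓝[>] (0:ℝ)) (fun r => x + r • a) (fun r => η * r) ?_ ?_
    · filter_upwards [h1.eventually_const_lt (show (0:ℝ≥0∞) < 1 by simp)] with r hr
      have : (K ∩ closedBall (x + r • a) (η * r)).Nonempty := by
        rw [Set.nonempty_iff_ne_empty]
        intro h
        simp [h] at hr
      obtain ⟨p, hp1, hp2⟩ := this
      exact ⟨p, hp1, hp2⟩
    · refine tendsto_nhdsWithin_iff.2 ⟨?_, ?_⟩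
      · have : Tendsto (fun r : ℝ => η * r) (𝓝 0) (𝓝 (η * 0)) := tendsto_id.const_mul η
        rw [mul_zero] at this
        exact this.mono_left nhdsWithin_le_nhds
      · filter_upwards [self_mem_nhdsWithin] with r hr
        exact mul_pos hη hr
    · filter_upwards [self_mem_nhdsWithin] with r hr
      have hr0 : 0 < r := hr
      rw [mem_closedBall, dist_comm, dist_eq_norm, add_sub_cancel_left, norm_smul, Real.norm_eq_abs, abs_of_pos hr0]
      nlinarith
  intro ε hε Λ
  -- choose the tolerance
  obtain ⟨η, hη, hηΛ⟩ : ∃ η > (0:ℝ), ∀ a ∈ Λ, ∀ b ∈ Λ, a ≠ b →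
      (2 * L + 1) * η ≤ (1 - (1 + ε)⁻¹) * mdN f x (a - b) ∧ (2 * L + 1) * η ≤ ε * mdN f x (a - b) := by
    have hpt : ∀ q : (Fin k → ℝ) × (Fin k → ℝ), ∀ᶠ η in 𝓝[>] (0:ℝ), q.1 ≠ q.2 →
        (2 * L + 1) * η ≤ (1 - (1 + ε)⁻¹) * mdN f x (q.1 - q.2) ∧ (2 * L + 1) * η ≤ ε * mdN f x (q.1 - q.2) := by
      intro q
      by_cases hq : q.1 = q.2
      · exact Eventually.of_forall fun η h => absurd hq h
      have hN : 0 < mdN f x (q.1 - q.2) := lt_of_le_of_ne (mdN_nonneg hf x _)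
        fun h => hq (sub_eq_zero.1 (hnd _ h.symm))
      have hlim : Tendsto (fun η : ℝ => (2 * L + 1) * η) (𝓝[>] 0) (𝓝 0) := by
        have : Tendsto (fun r : ℝ => (2 * L + 1) * r) (𝓝 0) (𝓝 ((2 * L + 1) * 0)) := tendsto_id.const_mul _
        rw [mul_zero] at this
        exact this.mono_left nhdsWithin_le_nhds
      have h1 : 0 < 1 - (1 + ε)⁻¹ := sub_pos.2 (inv_lt_one_of_one_lt₀ (by linarith))
      filter_upwards [hlim.eventually_lt_const (mul_pos h1 hN), hlim.eventually_lt_const (mul_pos hε hN)]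
        with η e1 e2 _
      exact ⟨e1.le, e2.le⟩
    have hall := (Filter.eventually_all_finset (Λ ×ˢ Λ)).2 fun q _ => hpt q
    obtain ⟨η, h1, h2⟩ := (hall.and self_mem_nhdsWithin).exists
    exact ⟨η, h2, fun a ha b hb hab => h1 (a, b) (Finset.mem_product.2 ⟨ha, hb⟩) hab⟩
  have hall1 := (Filter.eventually_all_finset (Λ ×ˢ Λ)).2 fun q _ => happ q.1 q.2 η hη
  have hall2 := (Filter.eventually_all_finset Λ).2 fun a _ => hnear a η hη
  obtain ⟨r, ⟨h1, h2⟩, hr0⟩ := ((hall1.and hall2).and self_mem_nhdsWithin).exists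
  have hr0 : 0 < r := hr0
  choose! P hPK hP using h2
  refine ⟨r, hr0, fun a => φ (P a), fun a ha b hb => ?_⟩
  by_cases hab : a = b
  · subst hab
    have h0 : mdN f x 0 = 0 := by simp [mdN]
    simp [h0]
  have hfP : ∀ i, ∀ a ∈ Λ, |f i (P a) - f i (x + r • a)| ≤ L * (η * r) := by
    intro i a ha
    have := (hf i).dist_le_mul (P a) (x + r • a)
    rw [Real.dist_eq] at this
    refine this.trans ?_
    gcongr
    exact hP a ha
  obtain ⟨hu, i, hl⟩ := h1 (a, b) (Finset.mem_product.2 ⟨ha, hb⟩)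
  obtain ⟨e1, e2⟩ := hηΛ a ha b hb hab
  simp only at hu hl
  have e1' := mul_le_mul_of_nonneg_left e1 hr0.le
  have e2' := mul_le_mul_of_nonneg_left e2 hr0.le
  constructor
  · refine le_trans ?_ (hlow _ (hPK a ha) _ (hPK b hb) i)
    have g1 := hfP i a ha
    have g2 := hfP i b hb
    have g3 : |f i (x + r • a) - f i (x + r • b)| ≤ |f i (P a) - f i (x + r • a)| +
        |f i (P a) - f i (P b)| + |f i (P b) - f i (x + r • b)| := by
      have t1 := abs_sub_le (f i (x + r • a)) (f i (P a)) (f i (x + r • b))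
      have t2 := abs_sub_le (f i (P a)) (f i (P b)) (f i (x + r • b))
      rw [abs_sub_comm (f i (x + r • a)) (f i (P a))] at t1
      linarith
    linarith
  · refine hsup _ (hPK a ha) _ (hPK b hb) _ fun i => ?_
    have g1 := hfP i a ha
    have g2 := hfP i b hb
    have g0 := hu i
    have g3 : |f i (P a) - f i (P b)| ≤ |f i (P a) - f i (x + r • a)| +
        |f i (x + r • a) - f i (x + r • b)| + |f i (P b) - f i (x + r • b)| := by
      have t1 := abs_sub_le (f i (P a)) (f i (x + r • a)) (f i (P b))
      have t2 := abs_sub_le (f i (x + r • a)) (f i (x + r • b)) (f i (P b))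
      rw [abs_sub_comm (f i (x + r • b)) (f i (P b))] at t2
      linarith
    linarith

end SharpIsop
end
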